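/- (Isomorphism property of the flat vector Laplacian on weighted spaces.) Let n ≥ 3, 1 < p < ∞ and δ ∈ (2−n, 0). Then there is a constant C > 0 such that: for every smooth vector field F : ℝⁿ → ℝⁿ with ‖F‖_{L^p_{δ−2}} < ∞ there exists a smooth vector field W : ℝⁿ → ℝⁿ with ‖W‖_{W^{2,p}_δ} < ∞ satisfying Δ_L W = F and ‖W‖_{W^{2,p}_δ} ≤ C ‖F‖_{L^p_{δ−2}}; moreover W is the unique smooth vector field with ‖W‖_{W^{2,p}_δ} < ∞ and Δ_L W = F. -/

import Mathlib

/-!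
# The flat vector Laplacian on weighted Sobolev spaces

Writing `μ = 1 - 2/n`, one has `Δ_L W = -(ΔW + μ ∇ div W)` (`vecLap_apply`), so everything reduces
to the scalar Laplacian on weighted spaces.

*Surjectivity and the estimate* (`exists_solution`). Solve `ΔΦ = F` componentwise, put
`ρ = div Φ`, and solve `ΔX = ∇ρ`. Then `div X - ρ` is harmonic and lies in a weighted space of
negative order, so `div X = ρ` by Liouville's theorem (`liouville`), and `W = -Φ + κ X` with
`κ (1 + μ) = μ` is a solution. *Injectivity* (`unique_solution`). If `ΔW + μ ∇ div W = 0`, the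
divergence of this identity gives `(1 + μ) Δ div W = 0`; Liouville's theorem kills first `div W`
and then `W`.

*The scalar equation* (`poisson`). The solution of `Δw = f` is the Newtonian potential
(`newton_solve`). It and its gradient are dominated by Riesz potentials of `|f|` of orders `2` and
`1`, which are bounded between the relevant weighted `L^p` spaces by Schur's test with a power of
`⟨x⟩` as test weight (`pot_weighted`); this needs exactly the range `2 - n < δ < 0`. Second derivatives are
estimated by applying the unweighted inequality `‖∂ᵢ∂ⱼu‖_p ≤ C ‖Δu‖_p` for test functions `u`
(`calderon_zygmund`) to `⟨x⟩^b χ(x/R) w`, uniformly in `R` (`second_deriv`). Smoothness of limits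
of potentials and Liouville's theorem both rest on a mean value property with a smooth kernel
(`mean_value`).

*The Calderón–Zygmund inequality.* Let `P` be the transition operator of a symmetric random walk
on `ℝⁿ` with finitely many steps `yᵢ`, and let `Dᵢ f (x) = f (x + yᵢ) - P f (x)`. An explicit
Bellman function `bell` with Hessian at least `|du| |dv|` makes
`∑ₖ ∑ᵢ ∫ |Dᵢ Pᵏ f| |Dᵢ Pᵏ g| ≤ C ‖f‖_p ‖g‖_q` a telescoping sum (`bilin_le`). For `f = u - P² u`
the signed series `∑ₖ ∫ Dᵢ Pᵏ f · Dᵢ Pᵏ g` telescopes as well, to `∫ Dᵢ u · Dᵢ g`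
(`discrete_riesz`). Shrinking the steps turns `u - P² u` into a multiple of `∑ᵢ ∂_{yᵢ}² u` and
`Dᵢ* Dᵢ u` into a multiple of `∂_{yᵢ}² u` (`continuous_riesz`). The steps `± e_a ± e_b` give the
Laplacian and, by polarisation, all second derivatives.
-/

noncomputable section

open MeasureTheory Filter
open scoped ENNReal Topology

/-- `n`-dimensional Euclidean space. -/
abbrev Euc (n : ℕ) := EuclideanSpace ℝ (Fin n)

/-- The Japanese bracket `⟨x⟩ = (1 + ‖x‖²)^(1/2)`. -/
def jap {n : ℕ} (x : Euc n) : ℝ := Real.sqrt (1 + ‖x‖ ^ 2)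

/-- Partial derivative `∂ᵢ f` of a real-valued function. -/
def pd {n : ℕ} (i : Fin n) (f : Euc n → ℝ) (x : Euc n) : ℝ :=
  fderiv ℝ f x (EuclideanSpace.single i 1)

/-- The Euclidean Laplacian `Δf = Σᵢ ∂ᵢ²f`. -/
def lap {n : ℕ} (f : Euc n → ℝ) (x : Euc n) : ℝ :=
  ∑ i, pd i (pd i f) x

/-- Divergence of a vector field. -/
def divg {n : ℕ} (W : Euc n → Euc n) (x : Euc n) : ℝ :=
  ∑ i, pd i (fun y => W y i) x

/-- The conformal Killing operator `(𝒟W)ᵢⱼ = ∂ᵢWⱼ + ∂ⱼWᵢ − (2/n)(div W)δᵢⱼ`. -/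
def confKill {n : ℕ} (W : Euc n → Euc n) (x : Euc n) : Matrix (Fin n) (Fin n) ℝ :=
  Matrix.of fun i j =>
    pd i (fun y => W y j) x + pd j (fun y => W y i) x
      - (2 / (n : ℝ)) * divg W x * (if i = j then 1 else 0)

/-- The Frobenius norm of a matrix. -/
def frob {n : ℕ} (M : Matrix (Fin n) (Fin n) ℝ) : ℝ :=
  Real.sqrt (∑ i, ∑ j, (M i j) ^ 2)

/-- The vector Laplacian `(Δ_L W)ⱼ = −Σᵢ ∂ᵢ (𝒟W)ᵢⱼ`. -/
def vecLap {n : ℕ} (W : Euc n → Euc n) (x : Euc n) : Euc n :=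
  (EuclideanSpace.equiv (Fin n) ℝ).symm
    (fun j => -∑ i, pd i (fun y => confKill W y i j) x)

/-- Weighted `L^p_δ` norm (as an extended nonnegative real). -/
def LpW {n : ℕ} {F : Type*} [NormedAddCommGroup F] (p δ : ℝ) (f : Euc n → F) : ℝ≥0∞ :=
  (∫⁻ x, ENNReal.ofReal ((jap x ^ (-δ - (n : ℝ) / p) * ‖f x‖) ^ p)) ^ (1 / p)

/-- Weighted Sobolev `W^{k,p}_δ` norm. -/
def SobW {n : ℕ} {F : Type*} [NormedAddCommGroup F] [NormedSpace ℝ F]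
    (k : ℕ) (p δ : ℝ) (f : Euc n → F) : ℝ≥0∞ :=
  ∑ j ∈ Finset.range (k + 1),
    (∫⁻ x, ENNReal.ofReal
      ((jap x ^ (-δ - (n : ℝ) / p + (j : ℝ)) * ‖iteratedFDeriv ℝ j f x‖) ^ p)) ^ (1 / p)

/-- Weighted `L^∞_δ` norm. -/
def LinfW {n : ℕ} {F : Type*} [NormedAddCommGroup F] (δ : ℝ) (f : Euc n → F) : ℝ≥0∞ :=
  ⨆ x, ENNReal.ofReal (jap x ^ (-δ) * ‖f x‖)

/-- Weighted `L^∞_δ` norm of a matrix field, pointwise Frobenius norm. -/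
def LinfWM {n : ℕ} (δ : ℝ) (σ : Euc n → Matrix (Fin n) (Fin n) ℝ) : ℝ≥0∞ :=
  ⨆ x, ENNReal.ofReal (jap x ^ (-δ) * frob (σ x))

/-- `N = 2n/(n−2)`. -/
def Nc (n : ℕ) : ℝ := 2 * n / ((n : ℝ) - 2)
/-- `c_n = (n−2)/(4(n−1))`. -/
def cc (n : ℕ) : ℝ := ((n : ℝ) - 2) / (4 * ((n : ℝ) - 1))
/-- `b_n = (n−2)/(4n)`. -/
def bc (n : ℕ) : ℝ := ((n : ℝ) - 2) / (4 * (n : ℝ))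

/-- Componentwise smoothness of a matrix field. -/
def SmoothMat {n : ℕ} (σ : Euc n → Matrix (Fin n) (Fin n) ℝ) : Prop :=
  ∀ i j, ContDiff ℝ (⊤ : ℕ∞) fun x => σ x i j

/-- A matrix field is symmetric, trace-free and divergence-free. -/
def SymTT {n : ℕ} (σ : Euc n → Matrix (Fin n) (Fin n) ℝ) : Prop :=
  (∀ x i j, σ x i j = σ x j i) ∧ (∀ x, ∑ i, σ x i i = 0) ∧
    (∀ x j, ∑ i, pd i (fun y => σ y i j) x = 0)

/-- The left-hand side of the Lichnerowicz (Hamiltonian) equation (i). -/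
def HamExpr {n : ℕ} (τ : Euc n → ℝ) (σ : Euc n → Matrix (Fin n) (Fin n) ℝ)
    (ρ : Euc n → ℝ) (u : Euc n → ℝ) (W : Euc n → Euc n) (x : Euc n) : ℝ :=
  lap u x + cc n * frob (σ x + confKill W x) ^ 2 * u x ^ (-(Nc n) - 1)
    - bc n * τ x ^ 2 * u x ^ (Nc n - 1) + cc n * ρ x * u x ^ (-(Nc n) / 2)

/-- Equation (i): the Lichnerowicz equation. -/
def HamEq {n : ℕ} (τ : Euc n → ℝ) (σ : Euc n → Matrix (Fin n) (Fin n) ℝ)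
    (ρ : Euc n → ℝ) (u : Euc n → ℝ) (W : Euc n → Euc n) : Prop :=
  ∀ x, HamExpr τ σ ρ u W x = 0

/-- Equation (ii): the momentum constraint `Δ_L W + ((n−1)/n) u^N ∇τ + J = 0`. -/
def MomEq {n : ℕ} (τ : Euc n → ℝ) (J : Euc n → Euc n)
    (u : Euc n → ℝ) (W : Euc n → Euc n) : Prop :=
  ∀ x, vecLap W x + ((((n : ℝ) - 1) / n) * u x ^ Nc n) • gradient τ x + J x = 0

/-- Global supersolution property for `φ₊`. -/
def GlobalSuperSol {n : ℕ} (p δ : ℝ) (τ : Euc n → ℝ)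
    (σ : Euc n → Matrix (Fin n) (Fin n) ℝ) (ρ : Euc n → ℝ) (J : Euc n → Euc n)
    (φp : Euc n → ℝ) : Prop :=
  ∀ φ : Euc n → ℝ, Continuous φ → (∀ x, 0 < φ x ∧ φ x ≤ φp x) →
    ∀ W : Euc n → Euc n, ContDiff ℝ (⊤ : ℕ∞) W → SobW 2 p δ W < ⊤ → MomEq τ J φ W →
    ∀ x, HamExpr τ σ ρ φp W x ≤ 0

/-- Global subsolution property for `φ₋`. -/
def GlobalSubSol {n : ℕ} (p δ : ℝ) (τ : Euc n → ℝ)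
    (σ : Euc n → Matrix (Fin n) (Fin n) ℝ) (ρ : Euc n → ℝ) (J : Euc n → Euc n)
    (φm : Euc n → ℝ) : Prop :=
  ∀ φ : Euc n → ℝ, Continuous φ → (∀ x, φm x ≤ φ x) →
    ∀ W : Euc n → Euc n, ContDiff ℝ (⊤ : ℕ∞) W → SobW 2 p δ W < ⊤ → MomEq τ J φ W →
    ∀ x, 0 ≤ HamExpr τ σ ρ φm W x

/-! ### A Bellman function -/

/-- A Bellman function for the exponents `r + 1` and `1 + 1/r`, where `1 ≤ r`: it is nonnegative,
bounded by a multiple of `u^(r+1) + v^(1+1/r)`, and its Hessian at `(u, v)` applied to `(x, y)` is at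
least `2 |x| |y|`. -/
def bell (r u v : ℝ) : ℝ :=
  u ^ 2 * (v + u ^ r) ^ (1 - 1 / r) + 6 * r ^ 2 / (r + 1) * v ^ (1 + 1 / r)

/-- The algebra behind the Hessian bound. Here `θ = 1 - 1/r`, `Z = (v + u^r)^θ`, and `k`, `m` stand
for fractions in `[0, 1]`; the right side is the contribution of the first term of `bell`. -/
lemma bell_hess_alg {θ r Z k m x y : ℝ} (hr : 1 ≤ r) (hθ0 : 0 ≤ θ) (hθ1 : θ ≤ 1) (hZ : 0 < Z)
    (hk0 : 0 ≤ k) (hk1 : k ≤ 1) (hm0 : 0 ≤ m) (hm1 : m ≤ 1) :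
    Z * x ^ 2 - 5 * (y ^ 2 / Z) ≤ 2 * Z * x ^ 2
      + (4 * θ * r * m - θ * r * m ^ 2 + θ * r * (r - 1) * m) * (Z * x ^ 2)
      + (4 * θ * k - 2 * θ * k * m) * (x * y) - θ / r * k ^ 2 * (y ^ 2 / Z) := by
  have h1 : 0 ≤ (4 * θ * r * m - θ * r * m ^ 2 + θ * r * (r - 1) * m) * (Z * x ^ 2) := by
    apply mul_nonneg _ (by positivity)
    have : 0 ≤ θ * r * m := by positivity
    have h2 : θ * r * m ^ 2 ≤ θ * r * m := by nlinarith
    have h3 : 0 ≤ θ * r * (r - 1) * m := by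
      have : 0 ≤ r - 1 := by linarith
      positivity
    nlinarith
  have h2 : θ / r * k ^ 2 * (y ^ 2 / Z) ≤ y ^ 2 / Z := by
    have : θ / r ≤ 1 := by rw [div_le_one (by linarith)]; linarith
    have h0 : 0 ≤ θ / r := by positivity
    have : θ / r * k ^ 2 ≤ 1 := by
      have : k ^ 2 ≤ 1 := by nlinarith
      nlinarith
    have hp : 0 ≤ y ^ 2 / Z := by positivity
    nlinarith
  set c := 4 * θ * k - 2 * θ * k * m with hc
  have hc0 : 0 ≤ c := by
    have : 0 ≤ θ * k := by positivity
    rw [hc]; nlinarith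
  have hc1 : c ≤ 4 := by
    have : 0 ≤ θ * k := by positivity
    have h3: θ * k ≤ 1 := by nlinarith
    have : 0 ≤ θ * k * m := by positivity
    rw [hc]; nlinarith
  have h3 : -(Z * x ^ 2 + 4 * (y ^ 2 / Z)) ≤ c * (x * y) := by
    have e : Z * x ^ 2 + 4 * (y ^ 2 / Z) + c * (x * y)
        = (Z * x + c / 2 * y) ^ 2 / Z + (4 - c ^ 2 / 4) * (y ^ 2 / Z) := by
      field_simp; ring
    have : 0 ≤ (4 - c ^ 2 / 4) * (y ^ 2 / Z) := mul_nonneg (by nlinarith) (by positivity)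
    have : 0 ≤ (Z * x + c / 2 * y) ^ 2 / Z := by positivity
    linarith
  linarith

lemma bell_line_deriv {r u0 v0 x y s : ℝ} (hr : 1 ≤ r) (hu : 0 < u0 + s * x)
    (hv : 0 < v0 + s * y) :
    HasDerivAt (fun s => bell r (u0 + s * x) (v0 + s * y))
      (2 * (u0 + s * x) * x * ((v0 + s * y) + (u0 + s * x) ^ r) ^ (1 - 1 / r)
        + (u0 + s * x) ^ 2 * ((1 - 1 / r) * ((v0 + s * y) + (u0 + s * x) ^ r) ^ (-(1 / r))
          * (y + r * (u0 + s * x) ^ (r - 1) * x))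
        + 6 * r * ((v0 + s * y) ^ (1 / r) * y)) s := by
  have du : HasDerivAt (fun s => u0 + s * x) x s := by
    simpa using ((hasDerivAt_id s).mul_const x).const_add u0
  have dv : HasDerivAt (fun s => v0 + s * y) y s := by
    simpa using ((hasDerivAt_id s).mul_const y).const_add v0
  have hur : 0 < (u0 + s * x) ^ r := Real.rpow_pos_of_pos hu r
  have dur := du.rpow_const (p := r) (Or.inl hu.ne')
  have dz := (dv.add dur).rpow_const (p := 1 - 1 / r) (Or.inl (by simp; positivity))
  have dvq := (dv.rpow_const (p := 1 + 1 / r) (Or.inl hv.ne')).const_mul (6 * r ^ 2 / (r + 1))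
  have := ((du.pow 2).mul dz).add dvq
  unfold bell
  refine this.congr_deriv ?_
  have e1 : (1 - 1 / r - 1) = -(1 / r) := by ring
  have e2 : (1 + 1 / r - 1) = (1 / r) := by ring
  simp only [Pi.add_apply, Pi.pow_apply]
  rw [e1, e2]
  have : r + 1 ≠ 0 := by positivity
  field_simp
  ring_nf

/-- Second derivative of `bell` along a line: the Hessian bound `2 |x| |y|`. -/
lemma bell_line_deriv2 {r u0 v0 x y s : ℝ} (hr : 1 ≤ r) (hu : 0 < u0 + s * x)
    (hv : 0 < v0 + s * y) :
    ∃ d, HasDerivAt (fun s => (2 * (u0 + s * x) * x * ((v0 + s * y) + (u0 + s * x) ^ r) ^ (1 - 1 / r)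
        + (u0 + s * x) ^ 2 * ((1 - 1 / r) * ((v0 + s * y) + (u0 + s * x) ^ r) ^ (-(1 / r))
          * (y + r * (u0 + s * x) ^ (r - 1) * x))
        + 6 * r * ((v0 + s * y) ^ (1 / r) * y))) d s ∧ 2 * |x| * |y| ≤ d := by
  have du : HasDerivAt (fun s => u0 + s * x) x s := by
    simpa using ((hasDerivAt_id s).mul_const x).const_add u0
  have dv : HasDerivAt (fun s => v0 + s * y) y s := by
    simpa using ((hasDerivAt_id s).mul_const y).const_add v0
  have hur : 0 < (u0 + s * x) ^ r := Real.rpow_pos_of_pos hu r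
  have dur := du.rpow_const (p := r) (Or.inl hu.ne')
  have dur1 := du.rpow_const (p := r - 1) (Or.inl hu.ne')
  have dz := (dv.add dur).rpow_const (p := 1 - 1 / r) (Or.inl (by simp; positivity))
  have dz1 := (dv.add dur).rpow_const (p := -(1 / r)) (Or.inl (by simp; positivity))
  have dvq := ((dv.rpow_const (p := 1 / r) (Or.inl hv.ne')).mul_const y).const_mul (6 * r)
  have D := ((((du.const_mul 2).mul_const x).mul dz).add ((du.pow 2).mul
    ((dz1.const_mul (1 - 1 / r)).mul (((dur1.const_mul r).mul_const x).const_add y)))).add dvq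
  refine ⟨_, D, ?_⟩
  clear D dvq dz1 dz dur1 dur dv du
  simp only [Pi.add_apply, Pi.pow_apply, Pi.mul_apply]
  set u := u0 + s * x with hudef
  set v := v0 + s * y with hvdef
  set z := v + u ^ r with hz
  have hr0 : 0 < r := by linarith
  have hz0 : 0 < z := by positivity
  set θ := 1 - 1 / r with hθ
  have hθ0 : 0 ≤ θ := by
    have : 1 / r ≤ 1 := by rw [div_le_one hr0]; exact hr
    linarith
  have hθ1 : θ ≤ 1 := by
    have : 0 ≤ 1 / r := by positivity
    linarith
  set Z := z ^ θ with hZ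
  have hZ0 : 0 < Z := Real.rpow_pos_of_pos hz0 _
  have e1 : z ^ (-(1 / r)) = Z / z := by
    rw [hZ, show -(1 / r) = θ - 1 by rw [hθ]; ring, Real.rpow_sub_one hz0.ne']
  have e2 : z ^ (-(1 / r) - 1) = Z / z ^ 2 := by
    rw [Real.rpow_sub_one hz0.ne', e1]; field_simp
  have e2' : z ^ (θ - 1) = Z / z := by rw [Real.rpow_sub_one hz0.ne']
  set m := u ^ r / z with hm
  have e3 : u ^ r = m * z := by rw [hm]; field_simp
  have e4 : u ^ (r - 1) = m * z / u := by rw [Real.rpow_sub_one hu.ne', e3]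
  have e5 : u ^ (r - 1 - 1) = m * z / u ^ 2 := by
    rw [Real.rpow_sub_one hu.ne', e4]; field_simp
  have hm0 : 0 ≤ m := by positivity
  have hm1 : m ≤ 1 := by rw [hm, div_le_one hz0, hz]; linarith
  set k := u * Z / z with hk
  have hk0 : 0 ≤ k := by positivity
  have hk1 : k ≤ 1 := by
    have h1 : u ≤ z ^ (1 / r) := by
      have : u = (u ^ r) ^ (1 / r) := by
        rw [← Real.rpow_mul hu.le, mul_one_div_cancel hr0.ne', Real.rpow_one]
      rw [this]
      exact Real.rpow_le_rpow (by positivity) (by rw [hz]; linarith) (by positivity)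
    rw [hk, mul_div_assoc, ← e1]
    calc u * z ^ (-(1 / r)) ≤ z ^ (1 / r) * z ^ (-(1 / r)) := by gcongr
      _ = 1 := by rw [← Real.rpow_add hz0]; simp
  have hvq : y ^ 2 / Z ≤ v ^ (1 / r - 1) * y ^ 2 := by
    have : v ^ (1 / r - 1) = (v ^ θ)⁻¹ := by
      rw [← Real.rpow_neg hv.le]; congr 1; rw [hθ]; ring
    rw [this, div_eq_inv_mul]
    have : v ^ θ ≤ Z := Real.rpow_le_rpow hv.le (by rw [hz]; linarith) hθ0
    have h0 : 0 < v ^ θ := Real.rpow_pos_of_pos hv _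
    gcongr
  have key := bell_hess_alg (x := x) (y := y) hr hθ0 hθ1 hZ0 hk0 hk1 hm0 hm1
  have hxy : 2 * |x| * |y| ≤ Z * x ^ 2 + y ^ 2 / Z := by
    have e : Z * x ^ 2 + y ^ 2 / Z - 2 * |x| * |y| = (Z * |x| - |y|) ^ 2 / Z := by
      rw [← sq_abs x, ← sq_abs y]; field_simp; ring
    have : 0 ≤ (Z * |x| - |y|) ^ 2 / Z := by positivity
    linarith
  rw [e1, e2, e2', e4, e5]
  have ez : m * z = z - v := by rw [← e3, hz]; ring
  have e6 : 6 * r * (y * (1 / r) * v ^ (1 / r - 1) * y) = 6 * (v ^ (1 / r - 1) * y ^ 2) := by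
    field_simp
  rw [e6]
  have hθr : r = 1 / (1 - θ) := by rw [hθ]; field_simp; ring
  have hθ2 : θ = (r - 1) / r := by rw [hθ]; field_simp
  have hzz : v + m * z = z := by rw [ez]; ring
  have e7 : 2 * x * x * Z + 2 * u * x * ((y + x * r * (m * z / u)) * θ * (Z / z)) +
      (2 * u ^ (2 - 1) * x * (θ * (Z / z) * (y + r * (m * z / u) * x)) +
        u ^ 2 * (θ * ((y + x * r * (m * z / u)) * -(1 / r) * (Z / z ^ 2)) * (y + r * (m * z / u) * x) +
            θ * (Z / z) * (r * (x * (r - 1) * (m * z / u ^ 2)) * x)))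
      = 2 * Z * x ^ 2
      + (4 * θ * r * m - θ * r * m ^ 2 + θ * r * (r - 1) * m) * (Z * x ^ 2)
      + (4 * θ * k - 2 * θ * k * m) * (x * y) - θ / r * k ^ 2 * (y ^ 2 / Z) := by
    rw [hk]
    clear_value θ k m Z z
    field_simp
    ring
  clear e6
  generalize v ^ (1 / r - 1) = V at hvq ⊢
  norm_num at e7 ⊢
  linarith

/-- `bell` lies above its tangent planes with a gain of `|du| |dv|`, by Taylor's formula along the
segment joining the two points. -/
lemma bell_tangent {r u0 v0 : ℝ} (hr : 1 ≤ r) (hu : 0 < u0) (hv : 0 < v0) :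
    ∃ a b : ℝ, ∀ u1 v1, 0 < u1 → 0 < v1 →
      bell r u0 v0 + a * (u1 - u0) + b * (v1 - v0) + |u1 - u0| * |v1 - v0| ≤ bell r u1 v1 := by
  refine ⟨2 * u0 * (v0 + u0 ^ r) ^ (1 - 1 / r)
        + u0 ^ 2 * ((1 - 1 / r) * (v0 + u0 ^ r) ^ (-(1 / r)) * (r * u0 ^ (r - 1))),
        u0 ^ 2 * ((1 - 1 / r) * (v0 + u0 ^ r) ^ (-(1 / r))) + 6 * r * (v0 ^ (1 / r)),
        fun u1 v1 hu1 hv1 => ?_⟩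
  set x := u1 - u0 with hx
  set y := v1 - v0 with hy
  have pu : ∀ s ∈ Set.Icc (0:ℝ) 1, 0 < u0 + s * x := by
    rintro s ⟨h0, h1⟩
    rcases h0.eq_or_lt with rfl | h0
    · simpa using hu
    · have : u0 + s * x = (1 - s) * u0 + s * u1 := by rw [hx]; ring
      rw [this]; have : 0 < s * u1 := by positivity
      have : 0 ≤ (1 - s) * u0 := mul_nonneg (by linarith) hu.le
      linarith
  have pv : ∀ s ∈ Set.Icc (0:ℝ) 1, 0 < v0 + s * y := by
    rintro s ⟨h0, h1⟩
    rcases h0.eq_or_lt with rfl | h0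
    · simpa using hv
    · have : v0 + s * y = (1 - s) * v0 + s * v1 := by rw [hy]; ring
      rw [this]; have : 0 < s * v1 := by positivity
      have : 0 ≤ (1 - s) * v0 := mul_nonneg (by linarith) hv.le
      linarith
  set G : ℝ → ℝ := fun s => bell r (u0 + s * x) (v0 + s * y) - |x| * |y| * s ^ 2 with hG
  set G1 : ℝ → ℝ := fun s => (2 * (u0 + s * x) * x * ((v0 + s * y) + (u0 + s * x) ^ r) ^ (1 - 1 / r)
        + (u0 + s * x) ^ 2 * ((1 - 1 / r) * ((v0 + s * y) + (u0 + s * x) ^ r) ^ (-(1 / r))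
          * (y + r * (u0 + s * x) ^ (r - 1) * x))
        + 6 * r * ((v0 + s * y) ^ (1 / r) * y)) - |x| * |y| * (2 * s) with hG1
  have d1 : ∀ s ∈ Set.Icc (0:ℝ) 1, HasDerivAt G (G1 s) s := by
    intro s hs
    have h2 : HasDerivAt (fun s : ℝ => |x| * |y| * s ^ 2) (|x| * |y| * (2 * s)) s := by
      simpa using ((hasDerivAt_id s).pow 2).const_mul (|x| * |y|)
    exact (bell_line_deriv hr (pu s hs) (pv s hs)).sub h2
  have mono : MonotoneOn G1 (Set.Icc 0 1) := by
    have d2 : ∀ s ∈ Set.Icc (0:ℝ) 1, ∃ d, HasDerivAt G1 d s ∧ 0 ≤ d := by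
      intro s hs
      obtain ⟨d, hd, hd0⟩ := bell_line_deriv2 hr (pu s hs) (pv s hs)
      have h2 : HasDerivAt (fun s : ℝ => |x| * |y| * (2 * s)) (|x| * |y| * 2) s := by
        simpa using ((hasDerivAt_id s).const_mul 2).const_mul (|x| * |y|)
      exact ⟨_, hd.sub h2, by linarith⟩
    refine monotoneOn_of_deriv_nonneg (convex_Icc 0 1) ?_ ?_ ?_
    · intro s hs
      obtain ⟨d, hd, _⟩ := d2 s hs
      exact hd.continuousAt.continuousWithinAt
    · intro s hs
      obtain ⟨d, hd, _⟩ := d2 s (interior_subset hs)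
      exact hd.differentiableAt.differentiableWithinAt
    · intro s hs
      obtain ⟨d, hd, h⟩ := d2 s (interior_subset hs)
      rwa [hd.deriv]
  obtain ⟨c, hc, hc'⟩ := exists_hasDerivAt_eq_slope G G1 zero_lt_one
    (fun s hs => (d1 s hs).continuousAt.continuousWithinAt)
    (fun s hs => d1 s ⟨hs.1.le, hs.2.le⟩)
  have hm := mono (by simp) (show c ∈ Set.Icc (0:ℝ) 1 from ⟨hc.1.le, hc.2.le⟩) hc.1.le
  rw [hc'] at hm
  simp only [hG, hG1] at hm
  have a1 : u0 + x = u1 := by rw [hx]; ring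
  have a2 : v0 + y = v1 := by rw [hy]; ring
  norm_num [a1, a2] at hm ⊢
  linarith

lemma bell_nonneg {r u v : ℝ} (hr : 1 ≤ r) (hu : 0 ≤ u) (hv : 0 ≤ v) : 0 ≤ bell r u v := by
  unfold bell; positivity

lemma bell_le {r u v : ℝ} (hr : 1 ≤ r) (hu : 0 ≤ u) (hv : 0 ≤ v) :
    bell r u v ≤ (2 + 6 * r ^ 2) * (u ^ (r + 1) + v ^ (1 + 1 / r)) := by
  have hr0 : 0 < r := by linarith
  have hθ0 : 0 ≤ 1 - 1 / r := by
    have : 1 / r ≤ 1 := by rw [div_le_one hr0]; exact hr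
    linarith
  have hθ1 : 1 - 1 / r ≤ 1 := by
    have : 0 ≤ 1 / r := by positivity
    linarith
  have h2 : (2:ℝ) ^ (1 - 1 / r) ≤ 2 := by
    simpa using Real.rpow_le_rpow_of_exponent_le (one_le_two : (1:ℝ) ≤ 2) hθ1
  have hU : 0 ≤ u ^ (r + 1) := by positivity
  have hV : 0 ≤ v ^ (1 + 1 / r) := by positivity
  have h1 : u ^ 2 * (v + u ^ r) ^ (1 - 1 / r) ≤ 2 * (u ^ (r + 1) + v ^ (1 + 1 / r)) := by
    rcases le_total v (u ^ r) with h | h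
    · have : u ^ 2 * (v + u ^ r) ^ (1 - 1 / r) ≤ u ^ 2 * (2 * u ^ r) ^ (1 - 1 / r) := by
        gcongr; linarith
      have e : u ^ 2 * (2 * u ^ r) ^ (1 - 1 / r) = 2 ^ (1 - 1 / r) * u ^ (r + 1) := by
        rw [Real.mul_rpow (by norm_num) (by positivity), ← Real.rpow_mul hu,
          show r * (1 - 1 / r) = r - 1 by field_simp]
        rcases hu.eq_or_lt with rfl | hu
        · rw [Real.zero_rpow (show r + 1 ≠ 0 by positivity)]; simp
        · rw [show r + 1 = 2 + (r - 1) by ring, Real.rpow_add hu]; norm_num; ring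
      rw [e] at this
      nlinarith
    · have hu1 : u ≤ v ^ (1 / r) := by
        have : u = (u ^ r) ^ (1 / r) := by
          rw [← Real.rpow_mul hu, mul_one_div_cancel hr0.ne', Real.rpow_one]
        rw [this]
        exact Real.rpow_le_rpow (by positivity) h (by positivity)
      have : u ^ 2 * (v + u ^ r) ^ (1 - 1 / r) ≤ (v ^ (1 / r)) ^ 2 * (2 * v) ^ (1 - 1 / r) := by
        gcongr; linarith
      have e : (v ^ (1 / r)) ^ 2 * (2 * v) ^ (1 - 1 / r) = 2 ^ (1 - 1 / r) * v ^ (1 + 1 / r) := by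
        rw [Real.mul_rpow (by norm_num) (by positivity)]
        rcases hv.eq_or_lt with rfl | hv
        · rw [Real.zero_rpow (show 1 / r ≠ 0 by positivity),
            Real.zero_rpow (show 1 + 1 / r ≠ 0 by positivity)]; simp
        · rw [show 1 + 1 / r = 1 / r + 1 / r + (1 - 1 / r) by ring, Real.rpow_add hv,
            Real.rpow_add hv]; ring
      rw [e] at this
      nlinarith
  have h3 : 6 * r ^ 2 / (r + 1) * v ^ (1 + 1 / r) ≤ 6 * r ^ 2 * (u ^ (r + 1) + v ^ (1 + 1 / r)) := by
    have : 6 * r ^ 2 / (r + 1) ≤ 6 * r ^ 2 := div_le_self (by positivity) (by linarith)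
    have h6 : 0 ≤ 6 * r ^ 2 := by positivity
    nlinarith
  unfold bell
  linarith

lemma continuous_bell {r : ℝ} (hr : 1 ≤ r) : Continuous fun z : ℝ × ℝ => bell r z.1 z.2 := by
  have hr0 : 0 < r := by linarith
  have hθ0 : 0 ≤ 1 - 1 / r := by
    have : 1 / r ≤ 1 := by rw [div_le_one hr0]; exact hr
    linarith
  unfold bell
  refine ((continuous_fst.pow 2).mul ?_).add (continuous_const.mul ?_)
  · exact (continuous_snd.add (continuous_fst.rpow_const fun _ => Or.inr hr0.le)).rpow_const
      fun _ => Or.inr hθ0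
  · exact continuous_snd.rpow_const fun _ => Or.inr (by positivity)

/-- Quantitative Jensen inequality for `bell` and the uniform measure on a finite set. -/
lemma bell_jensen {ι : Type*} [Fintype ι] [Nonempty ι] {r : ℝ} (hr : 1 ≤ r) (X Y : ι → ℝ)
    (hX : ∀ i, 0 ≤ X i) (hY : ∀ i, 0 ≤ Y i) :
    bell r ((∑ i, X i) / Fintype.card ι) ((∑ i, Y i) / Fintype.card ι)
      + (∑ i, |X i - (∑ i, X i) / Fintype.card ι| * |Y i - (∑ i, Y i) / Fintype.card ι|)
        / Fintype.card ι ≤ (∑ i, bell r (X i) (Y i)) / Fintype.card ι := by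
  have hc : (0:ℝ) < Fintype.card ι := by exact_mod_cast Fintype.card_pos
  set N : ℝ := (Fintype.card ι : ℝ)
  -- `bell` is differentiable only off the axes; the boundary case follows by translating by `ε`
  have pos : ∀ X Y : ι → ℝ, (∀ i, 0 < X i) → (∀ i, 0 < Y i) →
      bell r ((∑ i, X i) / N) ((∑ i, Y i) / N)
      + (∑ i, |X i - (∑ i, X i) / N| * |Y i - (∑ i, Y i) / N|)
        / N ≤ (∑ i, bell r (X i) (Y i)) / N := by
    intro X Y hX hY
    have h1 : 0 < (∑ i, X i) / N :=
      div_pos (Finset.sum_pos (fun i _ => hX i) Finset.univ_nonempty) hc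
    have h2 : 0 < (∑ i, Y i) / N :=
      div_pos (Finset.sum_pos (fun i _ => hY i) Finset.univ_nonempty) hc
    obtain ⟨a, b, hab⟩ := bell_tangent hr h1 h2
    have := Finset.sum_le_sum fun i (_ : i ∈ Finset.univ) => hab (X i) (Y i) (hX i) (hY i)
    rw [le_div_iff₀ hc]
    refine le_trans (le_of_eq ?_) this
    simp only [Finset.sum_add_distrib, ← Finset.mul_sum, Finset.sum_sub_distrib, Finset.sum_const,
      Finset.card_univ, nsmul_eq_mul]
    field_simp
    have : (Fintype.card ι : ℝ) = N := rfl
    rw [this]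
    ring
  have lim : ∀ᶠ ε in 𝓝[>] (0:ℝ), bell r ((∑ i, (X i + ε)) / N) ((∑ i, (Y i + ε)) / N)
      + (∑ i, |(X i + ε) - (∑ i, (X i + ε)) / N| * |(Y i + ε) - (∑ i, (Y i + ε)) / N|)
        / N ≤ (∑ i, bell r (X i + ε) (Y i + ε)) / N := by
    filter_upwards [self_mem_nhdsWithin] with ε hε
    exact pos _ _ (fun i => add_pos_of_nonneg_of_pos (hX i) hε)
      (fun i => add_pos_of_nonneg_of_pos (hY i) hε)
  have hcb := continuous_bell hr
  have c2 : Continuous fun ε : ℝ => (∑ i, bell r (X i + ε) (Y i + ε)) / N := by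
    refine Continuous.div_const (continuous_finsetSum _ fun i _ => ?_) _
    exact hcb.comp (f := fun ε : ℝ => (X i + ε, Y i + ε)) (by fun_prop)
  have c1 : Continuous fun ε : ℝ => bell r ((∑ i, (X i + ε)) / N) ((∑ i, (Y i + ε)) / N)
      + (∑ i, |(X i + ε) - (∑ i, (X i + ε)) / N| * |(Y i + ε) - (∑ i, (Y i + ε)) / N|)
        / N := by
    refine Continuous.add ?_ (by fun_prop)
    exact hcb.comp (f := fun ε : ℝ => ((∑ i, (X i + ε)) / N, (∑ i, (Y i + ε)) / N)) (by fun_prop)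
  have t1 := (c1.tendsto 0).mono_left (nhdsWithin_le_nhds (s := Set.Ioi 0))
  have t2 := (c2.tendsto 0).mono_left (nhdsWithin_le_nhds (s := Set.Ioi 0))
  have := le_of_tendsto_of_tendsto t1 t2 lim
  simpa using this

/-! ### A bilinear estimate for random walks -/

/-- Continuous with compact support. -/
def CC {n : ℕ} (f : Euc n → ℝ) : Prop := Continuous f ∧ HasCompactSupport f

/-- Translation `f ↦ f (· + a)`, as an operator on all functions. -/
def shift {n : ℕ} (a : Euc n) : Module.End ℝ (Euc n → ℝ) where
  toFun f := fun x => f (x + a)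
  map_add' _ _ := rfl
  map_smul' _ _ := rfl

/-- Transition operator of the random walk with steps `y i` chosen uniformly. -/
def walk {n : ℕ} {ι : Type*} [Fintype ι] (y : ι → Euc n) : Module.End ℝ (Euc n → ℝ) :=
  ((Fintype.card ι : ℝ)⁻¹) • ∑ i, shift (y i)

/-- The increment `f (x + a) - P f (x)`, where `P = walk y`. -/
def incr {n : ℕ} {ι : Type*} [Fintype ι] (y : ι → Euc n) (a : Euc n) :
    Module.End ℝ (Euc n → ℝ) := shift a - walk y

section
variable {n : ℕ} {ι : Type*} [Fintype ι] (y : ι → Euc n)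

lemma shift_apply (a : Euc n) (f : Euc n → ℝ) (x : Euc n) : shift a f x = f (x + a) := rfl

lemma walk_apply (f : Euc n → ℝ) (x : Euc n) :
    walk y f x = (∑ i, f (x + y i)) / Fintype.card ι := by
  simp [walk, shift_apply, div_eq_inv_mul]

lemma incr_apply (a : Euc n) (f : Euc n → ℝ) (x : Euc n) :
    incr y a f x = f (x + a) - walk y f x := rfl

lemma shift_comm (a b : Euc n) : Commute (shift a) (shift b) := by
  ext f x
  simp [shift_apply, add_right_comm]

lemma shift_walk_comm (a : Euc n) : Commute (shift a) (walk y) := by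
  unfold walk
  exact Commute.smul_right (Commute.sum_right _ _ _ fun i _ => shift_comm a (y i)) _

lemma incr_walk_comm (a : Euc n) : Commute (incr y a) (walk y) :=
  (shift_walk_comm y a).sub_left (Commute.refl _)

lemma CC.integrable {f : Euc n → ℝ} (hf : CC f) : Integrable f :=
  hf.1.integrable_of_hasCompactSupport hf.2

lemma CC.mul {f g : Euc n → ℝ} (hf : CC f) (hg : Continuous g) : CC (fun x => f x * g x) :=
  ⟨hf.1.mul hg, hf.2.mul_right⟩

lemma CC.abs {f : Euc n → ℝ} (hf : CC f) : CC (fun x => |f x|) :=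
  ⟨hf.1.abs, hf.2.comp_left (g := fun t => |t|) abs_zero⟩

lemma CC.add {f g : Euc n → ℝ} (hf : CC f) (hg : CC g) : CC (f + g) :=
  ⟨hf.1.add hg.1, hf.2.add hg.2⟩

lemma CC.smul {f : Euc n → ℝ} (hf : CC f) (c : ℝ) : CC (c • f) :=
  ⟨hf.1.const_smul c, hf.2.comp_left (g := fun t => c • t) (by simp)⟩

lemma CC.sub {f g : Euc n → ℝ} (hf : CC f) (hg : CC g) : CC (f - g) := by
  have := hf.add (hg.smul (-1))
  simpa [sub_eq_add_neg] using this

lemma CC.sum {κ : Type*} (s : Finset κ) {f : κ → Euc n → ℝ} (hf : ∀ i, CC (f i)) :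
    CC (∑ i ∈ s, f i) := by
  classical
  induction s using Finset.induction_on with
  | empty =>
    simp only [Finset.sum_empty]
    exact ⟨continuous_zero, HasCompactSupport.zero⟩
  | insert a s ha ih => rw [Finset.sum_insert ha]; exact (hf a).add ih

lemma CC.shift {f : Euc n → ℝ} (hf : CC f) (a : Euc n) : CC (shift a f) :=
  ⟨hf.1.comp (continuous_id.add continuous_const),
    hf.2.comp_homeomorph (Homeomorph.addRight a)⟩

lemma CC.walk {f : Euc n → ℝ} (hf : CC f) : CC (walk y f) := by
  unfold _root_.walk
  simp only [LinearMap.smul_apply, LinearMap.sum_apply]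
  exact (CC.sum _ fun i => hf.shift (y i)).smul _

lemma CC.incr {f : Euc n → ℝ} (hf : CC f) (a : Euc n) : CC (incr y a f) :=
  (hf.shift a).sub (hf.walk y)

lemma CC.walk_pow {f : Euc n → ℝ} (hf : CC f) (k : ℕ) : CC ((_root_.walk y ^ k) f) := by
  induction k with
  | zero => simpa using hf
  | succ k ih => rw [pow_succ', Module.End.mul_apply]; exact ih.walk y

lemma walk_nonneg {f : Euc n → ℝ} (hf : ∀ x, 0 ≤ f x) (x : Euc n) : 0 ≤ walk y f x := by
  rw [walk_apply]; exact div_nonneg (Finset.sum_nonneg fun i _ => hf _) (by positivity)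

lemma walk_pow_nonneg {f : Euc n → ℝ} (hf : ∀ x, 0 ≤ f x) (k : ℕ) (x : Euc n) :
    0 ≤ (walk y ^ k) f x := by
  induction k generalizing x with
  | zero => simpa using hf x
  | succ k ih => rw [pow_succ', Module.End.mul_apply]; exact walk_nonneg y ih x

lemma CC.bell {r : ℝ} (hr : 1 ≤ r) {f g : Euc n → ℝ} (hf : CC f) (hg : CC g) :
    CC (fun x => bell r (f x) (g x)) := by
  refine ⟨(continuous_bell hr).comp (hf.1.prodMk hg.1), ?_⟩
  have : HasCompactSupport (fun x => (f x, g x)) := by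
    refine HasCompactSupport.intro (hf.2.isCompact.union hg.2.isCompact) fun x hx => ?_
    rw [Set.mem_union, not_or] at hx
    rw [image_eq_zero_of_notMem_tsupport hx.1, image_eq_zero_of_notMem_tsupport hx.2]; rfl
  refine this.comp_left (g := fun z : ℝ × ℝ => _root_.bell r z.1 z.2) ?_
  simp only [Prod.fst_zero, Prod.snd_zero, _root_.bell]
  rw [Real.zero_rpow (show 1 + 1 / r ≠ 0 by positivity)]
  simp

lemma integral_shift (a : Euc n) (f : Euc n → ℝ) : ∫ x, f (x + a) = ∫ x, f x :=
  integral_add_right_eq_self f a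

lemma integral_walk [Nonempty ι] {f : Euc n → ℝ} (hf : CC f) : ∫ x, walk y f x = ∫ x, f x := by
  simp only [walk_apply]
  rw [integral_div, integral_finsetSum (f := fun i x => f (x + y i)) _
    fun i _ => (hf.shift (y i)).integrable]
  simp only [integral_shift, Finset.sum_const, Finset.card_univ, nsmul_eq_mul]
  have : (Fintype.card ι : ℝ) ≠ 0 := by positivity
  field_simp

/-- One step of the walk decreases the integral of `bell` by at least the mean of the products of
increments. -/
lemma bell_step [Nonempty ι] {r : ℝ} (hr : 1 ≤ r) {f g : Euc n → ℝ} (hf : CC f) (hg : CC g)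
    (hf0 : ∀ x, 0 ≤ f x) (hg0 : ∀ x, 0 ≤ g x) :
    (∫ x, bell r (walk y f x) (walk y g x))
      + (∑ i, ∫ x, |incr y (y i) f x| * |incr y (y i) g x|) / Fintype.card ι
      ≤ ∫ x, bell r (f x) (g x) := by
  have hi : ∀ i, Integrable fun x => |incr y (y i) f x| * |incr y (y i) g x| := fun i =>
    ((hf.incr y (y i)).abs.mul (hg.incr y (y i)).abs.1).integrable
  rw [← integral_finsetSum _ fun i _ => hi i, ← integral_div, ← integral_add
    ((hf.walk y).bell hr (hg.walk y)).integrable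
    ((integrable_finsetSum _ fun i _ => hi i).div_const _), ← integral_walk y (hf.bell hr hg)]
  refine integral_mono (((hf.walk y).bell hr (hg.walk y)).integrable.add
    ((integrable_finsetSum _ fun i _ => hi i).div_const _))
    ((hf.bell hr hg).walk y).integrable fun x => ?_
  have := bell_jensen hr (fun i => f (x + y i)) (fun i => g (x + y i)) (fun i => hf0 _)
    (fun i => hg0 _)
  simpa only [incr_apply, walk_apply] using this

/-- The bilinear quantity `∑_{k < K} ∑ᵢ ∫ |Dᵢ Pᵏ f| |Dᵢ Pᵏ g|`, with `P` the walk and `Dᵢ` its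
increments. -/
def bilin (y : ι → Euc n) (K : ℕ) (f g : Euc n → ℝ) : ℝ :=
  ∑ k ∈ Finset.range K, ∑ i, ∫ x, |incr y (y i) ((walk y ^ k) f) x|
    * |incr y (y i) ((walk y ^ k) g) x|

/-- The estimate for nonnegative normalised functions, by summing `bell_step` over the steps. -/
lemma bilin_le_pos [Nonempty ι] {r : ℝ} (hr : 1 ≤ r) {f g : Euc n → ℝ} (hf : CC f) (hg : CC g)
    (hf0 : ∀ x, 0 ≤ f x) (hg0 : ∀ x, 0 ≤ g x) (hf1 : ∫ x, f x ^ (r + 1) ≤ 1)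
    (hg1 : ∫ x, g x ^ (1 + 1 / r) ≤ 1) (K : ℕ) :
    bilin y K f g ≤ Fintype.card ι * (2 * (2 + 6 * r ^ 2)) := by
  have hN : (0:ℝ) < Fintype.card ι := by positivity
  have tel : bilin y K f g / Fintype.card ι
      + ∫ x, bell r ((walk y ^ K) f x) ((walk y ^ K) g x) ≤ ∫ x, bell r (f x) (g x) := by
    induction K with
    | zero => simp [bilin]
    | succ K ih =>
      have := bell_step y hr (hf.walk_pow y K) (hg.walk_pow y K) (walk_pow_nonneg y hf0 K)
        (walk_pow_nonneg y hg0 K)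
      unfold bilin at ih ⊢
      rw [Finset.sum_range_succ, add_div, pow_succ', Module.End.mul_apply, Module.End.mul_apply]
      linarith
  have h1 : 0 ≤ ∫ x, bell r ((walk y ^ K) f x) ((walk y ^ K) g x) :=
    integral_nonneg fun x => bell_nonneg hr (walk_pow_nonneg y hf0 K x)
      (walk_pow_nonneg y hg0 K x)
  have c1 : CC fun x => f x ^ (r + 1) := ⟨hf.1.rpow_const fun _ => Or.inr (by linarith),
    hf.2.comp_left (g := fun t : ℝ => t ^ (r + 1)) (Real.zero_rpow (by linarith))⟩
  have c2 : CC fun x => g x ^ (1 + 1 / r) := ⟨hg.1.rpow_const fun _ => Or.inr (by positivity),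
    hg.2.comp_left (g := fun t : ℝ => t ^ (1 + 1 / r)) (Real.zero_rpow (by positivity))⟩
  have h2 : ∫ x, bell r (f x) (g x) ≤ 2 * (2 + 6 * r ^ 2) := by
    calc ∫ x, bell r (f x) (g x)
        ≤ ∫ x, (2 + 6 * r ^ 2) * (f x ^ (r + 1) + g x ^ (1 + 1 / r)) :=
          integral_mono (hf.bell hr hg).integrable
            ((c1.integrable.add c2.integrable).const_mul _) fun x => bell_le hr (hf0 x) (hg0 x)
      _ = (2 + 6 * r ^ 2) * (∫ x, f x ^ (r + 1)) + (2 + 6 * r ^ 2) * ∫ x, g x ^ (1 + 1 / r) := by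
          rw [integral_const_mul, integral_add c1.integrable c2.integrable]; ring
      _ ≤ _ := by
          have : 0 ≤ 2 + 6 * r ^ 2 := by positivity
          nlinarith
  have h3 : bilin y K f g / Fintype.card ι ≤ 2 * (2 + 6 * r ^ 2) := by linarith
  rwa [div_le_iff₀ hN, mul_comm] at h3

lemma bilin_smul (K : ℕ) (a b : ℝ) (f g : Euc n → ℝ) :
    bilin y K (a • f) (b • g) = |a| * |b| * bilin y K f g := by
  unfold bilin
  simp only [map_smul, Pi.smul_apply, smul_eq_mul, abs_mul, Finset.mul_sum]
  refine Finset.sum_congr rfl fun k _ => Finset.sum_congr rfl fun i _ => ?_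
  rw [← integral_const_mul]
  congr 1; ext x; ring

lemma bilin_comm (K : ℕ) (f g : Euc n → ℝ) : bilin y K f g = bilin y K g f := by
  unfold bilin; simp only [mul_comm]

lemma bilin_sub_le (K : ℕ) {f₁ f₂ g : Euc n → ℝ} (h1 : CC f₁) (h2 : CC f₂) (hg : CC g) :
    bilin y K (f₁ - f₂) g ≤ bilin y K f₁ g + bilin y K f₂ g := by
  unfold bilin
  rw [← Finset.sum_add_distrib]
  refine Finset.sum_le_sum fun k _ => ?_
  rw [← Finset.sum_add_distrib]
  refine Finset.sum_le_sum fun i _ => ?_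
  have c : ∀ {f : Euc n → ℝ}, CC f → CC fun x => |incr y (y i) ((walk y ^ k) f) x| *
      |incr y (y i) ((walk y ^ k) g) x| := fun hf =>
    ((hf.walk_pow y k).incr y (y i)).abs.mul ((hg.walk_pow y k).incr y (y i)).abs.1
  rw [← integral_add (c h1).integrable (c h2).integrable]
  refine integral_mono (c (h1.sub h2)).integrable ((c h1).integrable.add (c h2).integrable)
    fun x => ?_
  simp only [map_sub, Pi.sub_apply]
  rw [← add_mul]
  exact mul_le_mul_of_nonneg_right (abs_sub _ _) (abs_nonneg _)

lemma CC.posPart {f : Euc n → ℝ} (hf : CC f) : CC (fun x => max (f x) 0) :=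
  ⟨hf.1.max continuous_const, hf.2.comp_left (g := fun t => max t 0) (by simp)⟩

lemma CC.negPart {f : Euc n → ℝ} (hf : CC f) : CC (fun x => max (-f x) 0) :=
  ⟨hf.1.neg.max continuous_const, hf.2.comp_left (g := fun t => max (-t) 0) (by simp)⟩

lemma CC.rpow_abs {f : Euc n → ℝ} (hf : CC f) {s : ℝ} (hs : 0 < s) :
    CC (fun x => |f x| ^ s) :=
  ⟨hf.1.abs.rpow_const fun _ => Or.inr hs.le,
    hf.2.comp_left (g := fun t : ℝ => |t| ^ s) (by simp [Real.zero_rpow hs.ne'])⟩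

lemma scaled_le {f h : Euc n → ℝ} (hf : CC f) (hh : CC h) {A s : ℝ} (hA : 0 < A) (hs : 0 < s)
    (h0 : ∀ x, 0 ≤ h x) (hle : ∀ x, h x ≤ |f x|) (hfA : ∫ x, |f x| ^ s ≤ A ^ s) :
    ∫ x, ((A⁻¹ • h) x) ^ s ≤ 1 := by
  have hA' : 0 < A ^ s := Real.rpow_pos_of_pos hA s
  have : ∫ x, ((A⁻¹ • h) x) ^ s ≤ ∫ x, (A ^ s)⁻¹ * |f x| ^ s := by
    have e : ∀ x, (A⁻¹ • h) x = |(A⁻¹ • h) x| := fun x =>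
      (abs_of_nonneg (mul_nonneg (by positivity) (h0 x))).symm
    refine integral_mono ?_ ((hf.rpow_abs hs).integrable.const_mul _) fun x => ?_
    · have := ((hh.smul A⁻¹).rpow_abs hs).integrable
      simpa only [← e] using this
    · simp only [Pi.smul_apply, smul_eq_mul]
      rw [Real.mul_rpow (by positivity) (h0 x), Real.inv_rpow hA.le]
      exact mul_le_mul_of_nonneg_left (Real.rpow_le_rpow (h0 x) (hle x) hs.le) (by positivity)
  rw [integral_const_mul] at this
  refine this.trans ?_
  rw [inv_mul_le_iff₀ hA']; simpa using hfA

lemma bilin_le_aux [Nonempty ι] {r : ℝ} (hr : 1 ≤ r) {f g : Euc n → ℝ} (hf : CC f) (hg : CC g)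
    {A B : ℝ} (hA : 0 < A) (hB : 0 < B) (hfA : ∫ x, |f x| ^ (r + 1) ≤ A ^ (r + 1))
    (hgB : ∫ x, |g x| ^ (1 + 1 / r) ≤ B ^ (1 + 1 / r)) (K : ℕ) :
    bilin y K f g ≤ Fintype.card ι * (8 * (2 + 6 * r ^ 2)) * A * B := by
  have main : ∀ f' g' : Euc n → ℝ, CC f' → CC g' → (∀ x, 0 ≤ f' x) → (∀ x, 0 ≤ g' x) →
      (∀ x, f' x ≤ |f x|) → (∀ x, g' x ≤ |g x|) →
      bilin y K f' g' ≤ A * B * (Fintype.card ι * (2 * (2 + 6 * r ^ 2))) := by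
    intro f' g' cf cg f0 g0 hf' hg'
    have e : bilin y K f' g' = A * B * bilin y K (A⁻¹ • f') (B⁻¹ • g') := by
      rw [bilin_smul, abs_of_pos (inv_pos.2 hA), abs_of_pos (inv_pos.2 hB)]
      field_simp
    rw [e]
    refine mul_le_mul_of_nonneg_left ?_ (by positivity)
    exact bilin_le_pos y hr (cf.smul _) (cg.smul _)
      (fun x => mul_nonneg (by positivity) (f0 x)) (fun x => mul_nonneg (by positivity) (g0 x))
      (scaled_le hf cf hA (by linarith) f0 hf' hfA)
      (scaled_le hg cg hB (by positivity) g0 hg' hgB) K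
  have sp : ∀ f : Euc n → ℝ, f = (fun x => max (f x) 0) - (fun x => max (-f x) 0) := by
    intro f; ext x; simp only [Pi.sub_apply]
    rcases le_total (f x) 0 with h | h
    · rw [max_eq_right h, max_eq_left (by linarith)]; ring
    · rw [max_eq_left h, max_eq_right (by linarith)]; ring
  have l1 : ∀ t : ℝ, max t 0 ≤ |t| := fun t => max_le (le_abs_self t) (abs_nonneg t)
  have l2 : ∀ t : ℝ, max (-t) 0 ≤ |t| := fun t => max_le (neg_le_abs t) (abs_nonneg t)
  have half : ∀ f' : Euc n → ℝ, CC f' → (∀ x, 0 ≤ f' x) → (∀ x, f' x ≤ |f x|) →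
      bilin y K f' g ≤ 2 * (A * B * (Fintype.card ι * (2 * (2 + 6 * r ^ 2)))) := by
    intro f' cf f0 hf'
    rw [bilin_comm]
    conv_lhs => rw [sp g]
    refine (bilin_sub_le y K hg.posPart hg.negPart cf).trans ?_
    rw [bilin_comm y K _ f', bilin_comm y K _ f']
    have := main f' _ cf hg.posPart f0 (fun x => le_max_right _ _) hf' (fun x => l1 _)
    have := main f' _ cf hg.negPart f0 (fun x => le_max_right _ _) hf' (fun x => l2 _)
    linarith
  conv_lhs => rw [sp f]
  refine (bilin_sub_le y K hf.posPart hf.negPart hg).trans ?_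
  have := half _ hf.posPart (fun x => le_max_right _ _) (fun x => l1 _)
  have := half _ hf.negPart (fun x => le_max_right _ _) (fun x => l2 _)
  nlinarith

/-- The bilinear estimate, with a constant depending only on the exponents and the number of steps;
the Bellman function is used with the larger of the two exponents equal to `r + 1`. -/
lemma bilin_le [Nonempty ι] {p q : ℝ} (hpq : p.HolderConjugate q) :
    ∃ C > 0, ∀ (y : ι → Euc n) {f g : Euc n → ℝ}, CC f → CC g → ∀ {A B : ℝ}, 0 < A → 0 < B →
      ∫ x, |f x| ^ p ≤ A ^ p → ∫ x, |g x| ^ q ≤ B ^ q → ∀ K, bilin y K f g ≤ C * A * B := by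
  rcases le_total 2 p with h | h
  · have e : q = 1 + 1 / (p - 1) := by
      have : p - 1 ≠ 0 := by linarith
      rw [hpq.conjugate_eq]; field_simp; ring
    refine ⟨Fintype.card ι * (8 * (2 + 6 * (p - 1) ^ 2)), by positivity, ?_⟩
    intro y f g hf hg A B hA hB hfA hgB K
    have := bilin_le_aux y (r := p - 1) (by linarith) hf hg hA hB
      (by simpa using hfA) (by rwa [← e]) K
    simpa using this
  · have hq : 2 ≤ q := by
      have hp1 := hpq.lt
      rw [hpq.conjugate_eq, le_div_iff₀ (by linarith)]; linarith
    have e : p = 1 + 1 / (q - 1) := by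
      have : q - 1 ≠ 0 := by linarith
      rw [hpq.symm.conjugate_eq]; field_simp; ring
    refine ⟨Fintype.card ι * (8 * (2 + 6 * (q - 1) ^ 2)), by positivity, ?_⟩
    intro y f g hf hg A B hA hB hfA hgB K
    have := bilin_le_aux y (r := q - 1) (by linarith) hg hf hB hA
      (by simpa using hgB) (by rwa [← e]) K
    rw [bilin_comm]
    linarith

lemma integral_shift_mul (a : Euc n) (f g : Euc n → ℝ) :
    ∫ x, shift a f x * g x = ∫ x, f x * shift (-a) g x := by
  rw [← integral_shift a (fun x => f x * shift (-a) g x)]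
  simp [shift_apply]

lemma integral_walk_mul (σ : ι ≃ ι) (hσ : ∀ i, y (σ i) = -y i) {f g : Euc n → ℝ}
    (hf : CC f) (hg : CC g) :
    ∫ x, walk y f x * g x = ∫ x, f x * walk y g x := by
  simp only [walk_apply, div_mul_eq_mul_div, mul_div_assoc', Finset.sum_mul, Finset.mul_sum]
  rw [integral_div, integral_div]
  congr 1
  rw [integral_finsetSum (f := fun i x => f (x + y i) * g x) _
    fun i _ => ((hf.shift (y i)).mul hg.1).integrable,
    integral_finsetSum (f := fun i x => f x * g (x + y i)) _
    fun i _ => (hf.mul (hg.shift (y i)).1).integrable,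
    ← Equiv.sum_comp σ]
  refine Finset.sum_congr rfl fun i _ => ?_
  rw [hσ]
  have := integral_shift_mul (-y i) f g
  simpa [shift_apply] using this

lemma integral_incr_mul (σ : ι ≃ ι) (hσ : ∀ i, y (σ i) = -y i) (a : Euc n) {f g : Euc n → ℝ}
    (hf : CC f) (hg : CC g) :
    ∫ x, incr y a f x * g x = ∫ x, f x * incr y (-a) g x := by
  have h1 := integral_shift_mul a f g
  have h2 := integral_walk_mul y σ hσ hf hg
  have : ∫ x, incr y a f x * g x = (∫ x, shift a f x * g x) - ∫ x, walk y f x * g x := by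
    rw [← integral_sub ((hf.shift a).mul hg.1).integrable ((hf.walk y).mul hg.1).integrable]
    congr 1; ext x; simp only [incr_apply, shift_apply]; ring
  rw [this, h1, h2, ← integral_sub (hf.mul (hg.shift (-a)).1).integrable
    (hf.mul (hg.walk y).1).integrable]
  congr 1; ext x; simp only [incr_apply, shift_apply]; ring

/-- Discrete form of `‖∂²u‖_p ≤ C ‖Δu‖_p`, in dual form: `u - P² u` plays the role of the Laplacian and
`Dᵢ* Dᵢ u` that of a second derivative. -/
lemma discrete_riesz [Nonempty ι] {p q : ℝ} (hpq : p.HolderConjugate q) :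
    ∃ C > 0, ∀ (y : ι → Euc n) (σ : ι ≃ ι), (∀ i, y (σ i) = -y i) → ∀ {u g : Euc n → ℝ},
      CC u → CC g → ∀ {A B : ℝ}, 0 < A → 0 < B →
      ∫ x, |(u - walk y (walk y u)) x| ^ p ≤ A ^ p → ∫ x, |g x| ^ q ≤ B ^ q → ∀ i,
      |∫ x, incr y (-y i) (incr y (y i) u) x * g x| ≤ C * A * B := by
  obtain ⟨C, hC, H⟩ := bilin_le (n := n) (ι := ι) hpq
  refine ⟨C, hC, ?_⟩
  intro y σ hσ u g hu hg A B hA hB hfA hgB i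
  set P := walk y with hP
  set a : ℕ → ℝ := fun k => ∫ x, incr y (y i) ((P ^ k) u) x * incr y (y i) ((P ^ k) g) x with ha
  have cc : ∀ {f : Euc n → ℝ}, CC f → ∀ k, CC (incr y (y i) ((P ^ k) f)) := fun hf k =>
    (hf.walk_pow y k).incr y _
  have cprod : ∀ {f g : Euc n → ℝ}, CC f → CC g → ∀ k, ∀ j, CC (fun x =>
      |incr y (y j) ((P ^ k) f) x| * |incr y (y j) ((P ^ k) g) x|) := fun hf hg k j =>
    ((hf.walk_pow y k).incr y _).abs.mul ((hg.walk_pow y k).incr y _).abs.1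
  have term : ∀ {f g : Euc n → ℝ}, CC f → CC g → ∀ k,
      |∫ x, incr y (y i) ((P ^ k) f) x * incr y (y i) ((P ^ k) g) x| ≤
        ∑ j, ∫ x, |incr y (y j) ((P ^ k) f) x| * |incr y (y j) ((P ^ k) g) x| := by
    intro f g hf hg k
    refine (abs_integral_le_integral_abs).trans ?_
    simp only [abs_mul]
    exact Finset.single_le_sum (f := fun j => ∫ x, |incr y (y j) ((P ^ k) f) x| *
      |incr y (y j) ((P ^ k) g) x|) (fun j _ => integral_nonneg fun x => by positivity)
      (Finset.mem_univ i)
  -- these are bounded by the terms of the convergent series `bilin` for the pair `(u, g)`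
  have tail : Tendsto a atTop (𝓝 0) := by
    have pos : ∀ {f : Euc n → ℝ}, CC f → ∀ {s : ℝ}, 0 < s → ∃ A : ℝ, 0 < A ∧
        ∫ x, |f x| ^ s ≤ A ^ s := by
      intro f hf s hs
      set I := ∫ x, |f x| ^ s
      have hI : 0 ≤ I := integral_nonneg fun x => by positivity
      refine ⟨(I + 1) ^ (1 / s), by positivity, ?_⟩
      rw [← Real.rpow_mul (by positivity), one_div_mul_cancel hs.ne', Real.rpow_one]
      linarith
    obtain ⟨A', hA', hfA'⟩ := pos hu hpq.pos
    have hb := H y hu hg hA' hB hfA' hgB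
    have hs : Summable fun k => ∑ j, ∫ x, |incr y (y j) ((P ^ k) u) x| *
        |incr y (y j) ((P ^ k) g) x| := by
      refine summable_of_sum_range_le (c := C * A' * B)
        (fun k => Finset.sum_nonneg fun j _ => integral_nonneg fun x => by positivity) hb
    exact squeeze_zero_norm (fun k => by simpa using term hu hg k) hs.tendsto_atTop_zero
  have step : ∀ k, ∫ x, incr y (y i) ((P ^ k) (u - P (P u))) x * incr y (y i) ((P ^ k) g) x
      = a k - a (k + 1) := by
    intro k
    have e1 : incr y (y i) ((P ^ k) (u - P (P u)))
        = incr y (y i) ((P ^ k) u) - P (incr y (y i) ((P ^ (k + 1)) u)) := by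
      rw [map_sub, map_sub]
      congr 1
      have hc : incr y (y i) * P = P * incr y (y i) := incr_walk_comm y (y i)
      have e : incr y (y i) * (P ^ k * (P * P)) = P * (incr y (y i) * P ^ (k + 1)) := by
        rw [← mul_assoc P, ← hc, mul_assoc, ← pow_succ']
        rw [← pow_two, ← pow_add]
      exact congrArg (fun T : Module.End ℝ (Euc n → ℝ) => T u) e
    have e2 : P (incr y (y i) ((P ^ k) g)) = incr y (y i) ((P ^ (k + 1)) g) := by
      have hc : incr y (y i) * P = P * incr y (y i) := incr_walk_comm y (y i)
      have e : P * (incr y (y i) * P ^ k) = incr y (y i) * P ^ (k + 1) := by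
        rw [← mul_assoc, ← hc, mul_assoc, ← pow_succ']
      exact congrArg (fun T : Module.End ℝ (Euc n → ℝ) => T g) e
    rw [e1]
    simp only [Pi.sub_apply, sub_mul]
    rw [integral_sub ((cc hu k).mul (cc hg k).1).integrable
      (((cc hu (k + 1)).walk y).mul (cc hg k).1).integrable,
      integral_walk_mul y σ hσ (cc hu (k + 1)) (cc hg k), ← hP, e2]
  have hf : CC (u - P (P u)) := hu.sub ((hu.walk y).walk y)
  have bound : ∀ K, |a 0 - a K| ≤ C * A * B := by
    intro K
    have e : a 0 - a K = ∑ k ∈ Finset.range K, (a k - a (k + 1)) := by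
      rw [Finset.sum_range_sub']
    rw [e]
    refine (Finset.abs_sum_le_sum_abs _ _).trans (le_trans ?_ (H y hf hg hA hB hfA hgB K))
    refine Finset.sum_le_sum fun k _ => ?_
    rw [← step]
    exact term hf hg k
  have lim : Tendsto (fun K => |a 0 - a K|) atTop (𝓝 |a 0|) := by
    simpa using (tail.const_sub (a 0)).abs
  have h0 := le_of_tendsto lim (Eventually.of_forall bound)
  have e0 : ∫ x, incr y (-y i) (incr y (y i) u) x * g x = a 0 := by
    rw [integral_incr_mul y σ hσ _ (hu.incr y _) hg]
    simp [ha]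
  rwa [e0]
end

/-! ### Second differences and their limits -/

/-- Directional derivative of `u` in the direction `z`. -/
def dd {n : ℕ} (z : Euc n) (u : Euc n → ℝ) (x : Euc n) : ℝ := fderiv ℝ u x z

/-- Symmetric second difference of `u` with step `z`. -/
def sdiff2 {n : ℕ} (z : Euc n) (u : Euc n → ℝ) (x : Euc n) : ℝ :=
  u (x + z) + u (x - z) - 2 * u x

section
variable {n : ℕ}

lemma smooth_dd {u : Euc n → ℝ} (hu : ContDiff ℝ (⊤ : ℕ∞) u) (z : Euc n) :
    ContDiff ℝ (⊤ : ℕ∞) (dd z u) := by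
  have : ContDiff ℝ (⊤ : ℕ∞) (fderiv ℝ u) := hu.fderiv_right (m := (⊤ : ℕ∞)) (by simp)
  exact this.clm_apply contDiff_const

lemma smooth_pd {u : Euc n → ℝ} (hu : ContDiff ℝ (⊤ : ℕ∞) u) (i : Fin n) :
    ContDiff ℝ (⊤ : ℕ∞) (pd i u) := smooth_dd hu _

lemma smooth_diff {F : Type*} [NormedAddCommGroup F] [NormedSpace ℝ F] {u : Euc n → F}
    (hu : ContDiff ℝ (⊤ : ℕ∞) u) : Differentiable ℝ u :=
  hu.differentiable (by simp)

lemma supp_dd {u : Euc n → ℝ} (hu : HasCompactSupport u) (z : Euc n) :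
    HasCompactSupport (dd z u) := hu.fderiv_apply (𝕜 := ℝ) z

lemma dd_add_dir (z w : Euc n) (u : Euc n → ℝ) : dd (z + w) u = dd z u + dd w u := by
  ext x; simp [dd]

lemma dd_smul_dir (c : ℝ) (z : Euc n) (u : Euc n → ℝ) : dd (c • z) u = c • dd z u := by
  ext x; simp [dd]

lemma dd_add {u v : Euc n → ℝ} (hu : Differentiable ℝ u) (hv : Differentiable ℝ v) (z : Euc n) :
    dd z (u + v) = dd z u + dd z v := by
  ext x; simp [dd, fderiv_add (hu x) (hv x)]

lemma dd_smul {u : Euc n → ℝ} (c : ℝ) (z : Euc n) :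
    dd z (c • u) = c • dd z u := by
  ext x; simp [dd, fderiv_const_smul_field]

lemma dd_comm {u : Euc n → ℝ} (hu : ContDiff ℝ (⊤ : ℕ∞) u) (z w : Euc n) :
    dd z (dd w u) = dd w (dd z u) := by
  ext x
  have hd : DifferentiableAt ℝ (fderiv ℝ u) x :=
    (hu.fderiv_right (m := (⊤ : ℕ∞)) (by simp)).differentiable (by simp) x
  have key : ∀ a b : Euc n, dd a (dd b u) x = fderiv ℝ (fderiv ℝ u) x a b := by
    intro a b
    unfold dd
    rw [fderiv_clm_apply hd (differentiableAt_const b)]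
    simp
  rw [key, key]
  have := (hu.contDiffAt (x := x)).isSymmSndFDerivAt
    (by simpa using (WithTop.coe_le_coe.2 le_top : ((2 : ℕ∞) : WithTop ℕ∞) ≤ ((⊤ : ℕ∞) : WithTop ℕ∞)))
  exact this z w

lemma dd2_add {u : Euc n → ℝ} (hu : ContDiff ℝ (⊤ : ℕ∞) u) (z w : Euc n) :
    dd (z + w) (dd (z + w) u) = dd z (dd z u) + dd w (dd w u) + (2 : ℝ) • dd z (dd w u) := by
  have h1 := smooth_diff (smooth_dd hu z)
  have h2 := smooth_diff (smooth_dd hu w)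
  rw [dd_add_dir z w u, dd_add_dir, dd_add h1 h2, dd_add h1 h2, dd_comm hu w z, two_smul]
  abel

lemma hasDerivAt_line {u : Euc n → ℝ} (hu : Differentiable ℝ u) (x z : Euc n) (t : ℝ) :
    HasDerivAt (fun t : ℝ => u (x + t • z)) (dd z u (x + t • z)) t := by
  have h1 : HasDerivAt (fun t : ℝ => x + t • z) z t := by
    simpa using ((hasDerivAt_id t).smul_const z).const_add x
  exact (hu (x + t • z)).hasFDerivAt.comp_hasDerivAt t h1

/-- Mean value form of the symmetric second difference. -/
lemma sdiff2_mean {u : Euc n → ℝ} (hu : ContDiff ℝ (⊤ : ℕ∞) u) (x z : Euc n) :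
    ∃ ξ ∈ Set.Ioo (0:ℝ) 1, sdiff2 z u x =
      (dd z (dd z u) (x + ξ • z) + dd z (dd z u) (x - ξ • z)) / 2 := by
  have h0 := smooth_diff hu
  have h1 := smooth_diff (smooth_dd hu z)
  set ψ : ℝ → ℝ := fun t => u (x + t • z) + u (x + (-t) • z) with hψ
  set ψ' : ℝ → ℝ := fun t => dd z u (x + t • z) - dd z u (x + (-t) • z) with hψ'
  have d0 : ∀ t, HasDerivAt ψ (ψ' t) t := by
    intro t
    have a := hasDerivAt_line h0 x z t
    have b := (hasDerivAt_line h0 x z (-t)).scomp t (hasDerivAt_neg t)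
    have c := a.add b
    refine c.congr_deriv ?_
    simp only [hψ', smul_eq_mul]; ring
  have d1 : ∀ t, HasDerivAt ψ' (dd z (dd z u) (x + t • z) + dd z (dd z u) (x + (-t) • z)) t := by
    intro t
    have a := hasDerivAt_line h1 x z t
    have b := (hasDerivAt_line h1 x z (-t)).scomp t (hasDerivAt_neg t)
    refine (a.sub b).congr_deriv ?_
    simp only [smul_eq_mul]; ring
  have dsq : ∀ t : ℝ, HasDerivAt (fun t : ℝ => t ^ 2) (2 * t) t := fun t => by
    simpa using hasDerivAt_pow 2 t
  obtain ⟨c, hc, e1⟩ := exists_ratio_hasDerivAt_eq_ratio_slope ψ ψ' zero_lt_one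
    (fun t _ => (d0 t).continuousAt.continuousWithinAt) (fun t _ => d0 t)
    (fun t : ℝ => t ^ 2) (fun t => 2 * t) (fun t _ => (dsq t).continuousAt.continuousWithinAt)
    (fun t _ => dsq t)
  obtain ⟨ξ, hξ, e2⟩ := exists_hasDerivAt_eq_slope ψ' _ hc.1
    (fun t _ => (d1 t).continuousAt.continuousWithinAt) (fun t _ => d1 t)
  refine ⟨ξ, ⟨hξ.1, hξ.2.trans hc.2⟩, ?_⟩
  have hc0 : c ≠ 0 := hc.1.ne'
  have z0 : ψ' 0 = 0 := by simp [hψ']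
  rw [z0] at e2
  simp only [neg_smul, ← sub_eq_add_neg, sub_zero] at e2
  rw [e2]
  have e3 : sdiff2 z u x = ψ 1 - ψ 0 := by
    simp only [sdiff2, hψ, one_smul, neg_smul, zero_smul, neg_zero, add_zero, sub_eq_add_neg]; ring
  rw [e3]
  field_simp
  linarith

/-- A sequence of continuous functions, uniformly bounded and supported in a fixed ball,
converging pointwise. -/
def GoodLim (φ : ℕ → Euc n → ℝ) (φ0 : Euc n → ℝ) : Prop :=
  (∀ m, Continuous (φ m)) ∧ (∃ M R : ℝ, ∀ m x, |φ m x| ≤ M ∧ (R < ‖x‖ → φ m x = 0)) ∧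
    ∀ x, Tendsto (fun m => φ m x) atTop (𝓝 (φ0 x))

lemma GoodLim.add {φ ψ : ℕ → Euc n → ℝ} {φ0 ψ0 : Euc n → ℝ} (h1 : GoodLim φ φ0)
    (h2 : GoodLim ψ ψ0) : GoodLim (fun m => φ m + ψ m) (φ0 + ψ0) := by
  obtain ⟨c1, ⟨M1, R1, b1⟩, t1⟩ := h1
  obtain ⟨c2, ⟨M2, R2, b2⟩, t2⟩ := h2
  refine ⟨fun m => (c1 m).add (c2 m), ⟨M1 + M2, max R1 R2, fun m x => ⟨?_, fun h => ?_⟩⟩,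
    fun x => (t1 x).add (t2 x)⟩
  · exact (abs_add_le _ _).trans (add_le_add (b1 m x).1 (b2 m x).1)
  · simp [(b1 m x).2 ((le_max_left _ _).trans_lt h), (b2 m x).2 ((le_max_right _ _).trans_lt h)]

lemma GoodLim.smul {φ : ℕ → Euc n → ℝ} {φ0 : Euc n → ℝ} (h1 : GoodLim φ φ0) (c : ℝ) :
    GoodLim (fun m => c • φ m) (c • φ0) := by
  obtain ⟨c1, ⟨M1, R1, b1⟩, t1⟩ := h1
  refine ⟨fun m => (c1 m).const_smul c, ⟨|c| * M1, R1, fun m x => ⟨?_, fun h => ?_⟩⟩,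
    fun x => (t1 x).const_mul c⟩
  · simp only [Pi.smul_apply, smul_eq_mul, abs_mul]
    exact mul_le_mul_of_nonneg_left (b1 m x).1 (abs_nonneg c)
  · simp [(b1 m x).2 h]

lemma GoodLim.sum {κ : Type*} (s : Finset κ) {φ : κ → ℕ → Euc n → ℝ} {φ0 : κ → Euc n → ℝ}
    (h : ∀ k, GoodLim (φ k) (φ0 k)) :
    GoodLim (fun m => ∑ k ∈ s, φ k m) (∑ k ∈ s, φ0 k) := by
  classical
  induction s using Finset.induction_on with
  | empty =>
    simp only [Finset.sum_empty]
    exact ⟨fun _ => continuous_zero, ⟨0, 0, by simp⟩, fun x => tendsto_const_nhds⟩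
  | insert a s ha ih => simp only [Finset.sum_insert ha]; exact (h a).add ih

lemma GoodLim.tendsto_integral {φ : ℕ → Euc n → ℝ} {φ0 : Euc n → ℝ} (h : GoodLim φ φ0)
    {G : Euc n → ℝ → ℝ} (hG : Continuous fun z : Euc n × ℝ => G z.1 z.2) (hG0 : ∀ x, G x 0 = 0) :
    Tendsto (fun m => ∫ x, G x (φ m x)) atTop (𝓝 (∫ x, G x (φ0 x))) := by
  obtain ⟨c1, ⟨M, R, b⟩, t⟩ := h
  obtain ⟨B, hB⟩ := ((isCompact_closedBall (0 : Euc n) R).prod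
    (isCompact_Icc (a := -M) (b := M))).exists_bound_of_continuousOn hG.continuousOn
  refine tendsto_integral_of_dominated_convergence
    ((Metric.closedBall (0 : Euc n) R).indicator fun _ => B) ?_ ?_ ?_ ?_
  · intro m
    exact (hG.comp (continuous_id.prodMk (c1 m))).aestronglyMeasurable
  · exact (integrable_indicator_iff Metric.isClosed_closedBall.measurableSet).2
      (integrableOn_const (hs := (isCompact_closedBall (0 : Euc n) R).measure_ne_top))
  · refine fun m => Eventually.of_forall fun x => ?_
    by_cases hx : x ∈ Metric.closedBall (0 : Euc n) R
    · rw [Set.indicator_of_mem hx]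
      exact hB (x, φ m x) ⟨hx, abs_le.1 (b m x).1⟩
    · rw [Set.indicator_of_notMem hx, (b m x).2 (by simpa using hx), hG0]; simp
  · refine Eventually.of_forall fun x => ?_
    exact ((hG.comp (Continuous.prodMk_right x)).tendsto (φ0 x)).comp (t x)

/-- The mesh sizes used in the passage from the discrete to the continuous estimate. -/
def mesh (m : ℕ) : ℝ := 1 / ((m : ℝ) + 1)

lemma mesh_pos (m : ℕ) : 0 < mesh m := by unfold mesh; positivity

lemma mesh_le (m : ℕ) : mesh m ≤ 1 := by
  unfold mesh; rw [div_le_one (by positivity)]; linarith [Nat.cast_nonneg (α := ℝ) m]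

lemma mesh_tendsto : Tendsto mesh atTop (𝓝 0) := tendsto_one_div_add_atTop_nhds_zero_nat

lemma goodLim_sdiff2 {u : Euc n → ℝ} (hu : ContDiff ℝ (⊤ : ℕ∞) u) (hc : HasCompactSupport u)
    (z : Euc n) :
    GoodLim (fun m => (mesh m ^ 2)⁻¹ • sdiff2 (mesh m • z) u) (dd z (dd z u)) := by
  have hs := smooth_dd (smooth_dd hu z) z
  have rep : ∀ m x, ∃ ξ ∈ Set.Ioo (0:ℝ) 1, ((mesh m ^ 2)⁻¹ • sdiff2 (mesh m • z) u) x =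
      (dd z (dd z u) (x + (ξ * mesh m) • z) + dd z (dd z u) (x - (ξ * mesh m) • z)) / 2 := by
    intro m x
    obtain ⟨ξ, hξ, e⟩ := sdiff2_mean hu x (mesh m • z)
    refine ⟨ξ, hξ, ?_⟩
    have := (mesh_pos m).ne'
    simp only [Pi.smul_apply, e, dd_smul_dir, dd_smul, smul_eq_mul, smul_smul]
    field_simp
  obtain ⟨M, hM⟩ := hs.continuous.bounded_above_of_compact_support
    (supp_dd (supp_dd hc z) z)
  obtain ⟨R, hR⟩ := hc.isCompact.isBounded.subset_closedBall (0 : Euc n)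
  have hz : ∀ x, R < ‖x‖ → u x = 0 := by
    intro x hx
    refine image_eq_zero_of_notMem_tsupport fun h => ?_
    have := hR h
    simp at this; linarith
  refine ⟨fun m => ?_, ⟨M, R + ‖z‖, fun m x => ⟨?_, fun h => ?_⟩⟩, fun x => ?_⟩
  · refine Continuous.const_smul ?_ _
    have := hu.continuous
    unfold sdiff2; fun_prop
  · obtain ⟨ξ, hξ, e⟩ := rep m x
    beta_reduce
    rw [e, abs_div, abs_two]
    have a := hM (x + (ξ * mesh m) • z)
    have b := hM (x - (ξ * mesh m) • z)
    rw [Real.norm_eq_abs] at a b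
    have := abs_add_le (dd z (dd z u) (x + (ξ * mesh m) • z))
      (dd z (dd z u) (x - (ξ * mesh m) • z))
    linarith
  · have hm : ‖mesh m • z‖ ≤ ‖z‖ := by
      rw [norm_smul, Real.norm_eq_abs, abs_of_pos (mesh_pos m)]
      exact mul_le_of_le_one_left (norm_nonneg z) (mesh_le m)
    have h1 : R < ‖x + mesh m • z‖ := by
      have := norm_sub_le (x + mesh m • z) (mesh m • z); simp at this; linarith
    have h2 : R < ‖x - mesh m • z‖ := by
      have := norm_add_le (x - mesh m • z) (mesh m • z); simp at this; linarith
    have h3 : R < ‖x‖ := by linarith [norm_nonneg z]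
    simp [sdiff2, hz _ h1, hz _ h2, hz _ h3]
  · choose ξ hξ e using fun m => rep m x
    simp only [e]
    have t0 : Tendsto (fun m => (ξ m * mesh m) • z) atTop (𝓝 0) := by
      have : Tendsto (fun m => ξ m * mesh m) atTop (𝓝 0) := by
        refine squeeze_zero (fun m => mul_nonneg (hξ m).1.le (mesh_pos m).le) (fun m => ?_)
          mesh_tendsto
        exact mul_le_of_le_one_left (mesh_pos m).le (hξ m).2.le
      simpa using this.smul_const z
    have t1 := (hs.continuous.tendsto x).comp (by simpa using t0.const_add x :
      Tendsto (fun m => x + (ξ m * mesh m) • z) atTop (𝓝 x))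
    have t2 := (hs.continuous.tendsto x).comp (by simpa using t0.const_sub x :
      Tendsto (fun m => x - (ξ m * mesh m) • z) atTop (𝓝 x))
    simpa using (t1.add t2).div_const 2
end

/-! ### The Calderón–Zygmund inequality -/

section
variable {n : ℕ} {ι : Type*} [Fintype ι]

/-- The discrete Laplacian `u - P² u` as a combination of symmetric second differences. -/
lemma sub_walk_walk [Nonempty ι] (y : ι → Euc n) (σ : ι ≃ ι) (hσ : ∀ i, y (σ i) = -y i)
    (u : Euc n → ℝ) :
    u - walk y (walk y u) = (-(1 / (2 * (Fintype.card ι : ℝ) ^ 2))) •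
      ∑ i, ∑ j, sdiff2 (y i + y j) u := by
  have hN : (Fintype.card ι : ℝ) ≠ 0 := by positivity
  ext x
  have e1 : ∑ i, ∑ j, u (x - (y i + y j)) = ∑ i, ∑ j, u (x + (y i + y j)) := by
    rw [← Equiv.sum_comp σ]
    refine Finset.sum_congr rfl fun i _ => ?_
    rw [← Equiv.sum_comp σ]
    refine Finset.sum_congr rfl fun j _ => ?_
    rw [hσ, hσ]; congr 1; abel
  simp only [Pi.sub_apply, Pi.smul_apply, Finset.sum_apply, smul_eq_mul, walk_apply, sdiff2,
    Finset.sum_sub_distrib, Finset.sum_add_distrib, e1, Finset.sum_const, Finset.card_univ,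
    nsmul_eq_mul, ← Finset.sum_div, add_assoc]
  field_simp
  ring

/-- The discrete second derivative `D_k* D_k u` as a combination of symmetric second differences. -/
lemma incr_incr [Nonempty ι] (y : ι → Euc n) (σ : ι ≃ ι) (hσ : ∀ i, y (σ i) = -y i)
    (u : Euc n → ℝ) (k : ι) :
    incr y (-y k) (incr y (y k) u) = (-(1 / (Fintype.card ι : ℝ))) • (∑ j, sdiff2 (y k + y j) u)
      + (1 / (2 * (Fintype.card ι : ℝ) ^ 2)) • ∑ i, ∑ j, sdiff2 (y i + y j) u := by
  have hN : (Fintype.card ι : ℝ) ≠ 0 := by positivity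
  have h1 := sub_walk_walk y σ hσ u
  have h2 : (1 / (2 * (Fintype.card ι : ℝ) ^ 2)) • ∑ i, ∑ j, sdiff2 (y i + y j) u
      = walk y (walk y u) - u := by
    rw [← neg_sub, h1, neg_smul, neg_neg]
  rw [h2]
  ext x
  have e1 : ∑ j, u (x - (y k + y j)) = ∑ j, u (x + (-y k + y j)) := by
    rw [← Equiv.sum_comp σ]
    refine Finset.sum_congr rfl fun j _ => ?_
    rw [hσ]; congr 1; abel
  have e2 : walk y (incr y (y k) u) x = (∑ j, u (x + (y k + y j))) / Fintype.card ι
      - walk y (walk y u) x := by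
    simp only [walk_apply, incr_apply, Finset.sum_sub_distrib, sub_div]
    congr 2
    refine Finset.sum_congr rfl fun j _ => ?_
    congr 1; abel
  rw [incr_apply, e2, incr_apply]
  simp only [Pi.sub_apply, Pi.add_apply, Pi.smul_apply, Finset.sum_apply, smul_eq_mul, sdiff2,
    Finset.sum_sub_distrib, Finset.sum_add_distrib, e1, Finset.sum_const, Finset.card_univ,
    nsmul_eq_mul]
  rw [walk_apply y u (x + -y k)]
  simp only [add_assoc, neg_add_cancel, add_zero]
  field_simp
  ring

lemma sum_cross {u : Euc n → ℝ} (y : ι → Euc n) (hy : ∑ i, y i = 0) (z : Euc n) (hu : ContDiff ℝ (⊤ : ℕ∞) u) :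
    ∑ j, dd z (dd (y j) u) = 0 := by
  have : ∀ j, dd z (dd (y j) u) = dd (y j) (dd z u) := fun j => dd_comm hu _ _
  simp only [this]
  ext x
  simp only [Finset.sum_apply, dd, ← map_sum, hy, map_zero, Pi.zero_apply]

lemma sum_steps {y : ι → Euc n} {σ : ι ≃ ι} (hσ : ∀ i, y (σ i) = -y i) : ∑ i, y i = 0 := by
  have h := Equiv.sum_comp σ y
  simp only [hσ, Finset.sum_neg_distrib] at h
  have h2 : (2:ℝ) • ∑ i, y i = 0 := by
    rw [two_smul]; nth_rewrite 1 [← h]; exact neg_add_cancel _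
  simpa using h2

lemma sum_dd2 {u : Euc n → ℝ} (y : ι → Euc n) (hy : ∑ i, y i = 0) (z : Euc n)
    (hu : ContDiff ℝ (⊤ : ℕ∞) u) :
    ∑ j, dd (z + y j) (dd (z + y j) u)
      = (Fintype.card ι : ℝ) • dd z (dd z u) + ∑ j, dd (y j) (dd (y j) u) := by
  simp only [dd2_add hu, Finset.sum_add_distrib, ← Finset.smul_sum, sum_cross y hy z hu,
    smul_zero, add_zero, Finset.sum_const, Finset.card_univ, Nat.cast_smul_eq_nsmul]

/-- The limit of `discrete_riesz` when the steps are `mesh m • y i` with `m → ∞`. -/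
lemma continuous_riesz [Nonempty ι] {p q : ℝ} (hpq : p.HolderConjugate q) :
    ∃ C > 0, ∀ (y : ι → Euc n) (σ : ι ≃ ι), (∀ i, y (σ i) = -y i) → ∀ {u g : Euc n → ℝ},
      ContDiff ℝ (⊤ : ℕ∞) u → HasCompactSupport u → CC g → ∀ {A B : ℝ}, 0 < A → 0 < B →
      ∫ x, |((1 / (Fintype.card ι : ℝ)) • ∑ i, dd (y i) (dd (y i) u)) x| ^ p < A ^ p →
      ∫ x, |g x| ^ q ≤ B ^ q → ∀ i,
      |∫ x, dd (y i) (dd (y i) u) x * g x| ≤ C * A * B := by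
  obtain ⟨C, hC, H⟩ := discrete_riesz (n := n) (ι := ι) hpq
  refine ⟨C, hC, ?_⟩
  intro y σ hσ u g hu hc hg A B hA hB hA1 hB1 k
  have hN : (Fintype.card ι : ℝ) ≠ 0 := by positivity
  have hy := sum_steps hσ
  set N : ℝ := (Fintype.card ι : ℝ) with hNdef
  set S : Euc n → ℝ := ∑ i, dd (y i) (dd (y i) u) with hS
  let ym : ℕ → ι → Euc n := fun m i => mesh m • y i
  have hσm : ∀ m i, ym m (σ i) = -ym m i := fun m i => by simp [ym, hσ]
  have D : ∑ i, ∑ j, dd (y i + y j) (dd (y i + y j) u) = (2 * N) • S := by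
    simp only [sum_dd2 y hy _ hu, Finset.sum_add_distrib, ← Finset.smul_sum, Finset.sum_const,
      Finset.card_univ, ← Nat.cast_smul_eq_nsmul ℝ, ← hNdef, ← hS]
    rw [← add_smul]; congr 1; ring
  have G0 : GoodLim (fun m => ∑ i, ∑ j, (mesh m ^ 2)⁻¹ • sdiff2 (mesh m • (y i + y j)) u)
      ((2 * N) • S) := by
    rw [← D]
    exact GoodLim.sum _ fun i => GoodLim.sum _ fun j => goodLim_sdiff2 hu hc _
  have G1 : GoodLim (fun m => (mesh m ^ 2)⁻¹ • (u - walk (ym m) (walk (ym m) u)))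
      ((-(1 / N)) • S) := by
    have := G0.smul (-(1 / (2 * N ^ 2)))
    have e : (-(1 / (2 * N ^ 2))) • ((2 * N) • S) = (-(1 / N)) • S := by
      rw [smul_smul]; congr 1; field_simp
    rw [e] at this
    convert this using 2 with m
    rw [sub_walk_walk (ym m) σ (hσm m), smul_comm]
    congr 1
    simp only [Finset.smul_sum, ym, smul_add]
  have G2 : GoodLim (fun m => (mesh m ^ 2)⁻¹ • incr (ym m) (-ym m k) (incr (ym m) (ym m k) u))
      (-dd (y k) (dd (y k) u)) := by
    have a : GoodLim (fun m => ∑ j, (mesh m ^ 2)⁻¹ • sdiff2 (mesh m • (y k + y j)) u)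
        (N • dd (y k) (dd (y k) u) + S) := by
      rw [← sum_dd2 y hy _ hu]
      exact GoodLim.sum _ fun j => goodLim_sdiff2 hu hc _
    have := (a.smul (-(1 / N))).add (G0.smul (1 / (2 * N ^ 2)))
    have e : (-(1 / N)) • (N • dd (y k) (dd (y k) u) + S) + (1 / (2 * N ^ 2)) • ((2 * N) • S)
        = -dd (y k) (dd (y k) u) := by
      ext x
      simp only [Pi.add_apply, Pi.smul_apply, smul_eq_mul, Pi.neg_apply]
      field_simp; ring
    rw [e] at this
    convert this using 2 with m
    rw [incr_incr (ym m) σ (hσm m), smul_add, smul_comm, smul_comm _ (1 / (2 * N ^ 2))]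
    congr 2 <;> simp only [Finset.smul_sum, ym, smul_add]
  have T1 := G1.tendsto_integral (G := fun _ t => |t| ^ p)
    (by have := hpq.pos; exact (continuous_snd.abs).rpow_const fun _ => Or.inr this.le)
    (by have := hpq.pos; intro x; simp [Real.zero_rpow this.ne'])
  have T2 := G2.tendsto_integral (G := fun x t => t * g x)
    (continuous_snd.mul (hg.1.comp continuous_fst)) (by simp)
  have hlt : ∫ x, |((-(1 / N)) • S) x| ^ p < A ^ p := by
    simpa only [neg_smul, Pi.neg_apply, abs_neg] using hA1
  have hCC : CC u := ⟨hu.continuous, hc⟩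
  have ev : ∀ᶠ m in atTop, |∫ x, ((mesh m ^ 2)⁻¹ •
      incr (ym m) (-ym m k) (incr (ym m) (ym m k) u)) x * g x| ≤ C * A * B := by
    filter_upwards [T1.eventually (eventually_lt_nhds hlt)] with m hm
    have hp2 : 0 < mesh m ^ 2 := by have := mesh_pos m; positivity
    have h1 : ∫ x, |(u - walk (ym m) (walk (ym m) u)) x| ^ p ≤ (mesh m ^ 2 * A) ^ p := by
      rw [Real.mul_rpow hp2.le hA.le, ← div_le_iff₀' (by positivity), ← integral_div]
      refine le_trans (le_of_eq ?_) hm.le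
      congr 1; ext x
      simp only [Pi.smul_apply, smul_eq_mul, abs_mul]
      rw [Real.mul_rpow (abs_nonneg _) (abs_nonneg _), abs_of_pos (inv_pos.2 hp2),
        Real.inv_rpow hp2.le, div_eq_inv_mul]
    have h2 := H (ym m) σ (hσm m) hCC hg (mul_pos hp2 hA) hB h1 hB1 k
    have e : ∫ x, ((mesh m ^ 2)⁻¹ • incr (ym m) (-ym m k) (incr (ym m) (ym m k) u)) x * g x
        = (mesh m ^ 2)⁻¹ * ∫ x, incr (ym m) (-ym m k) (incr (ym m) (ym m k) u) x * g x := by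
      rw [← integral_const_mul]
      congr 1; ext x; simp [mul_assoc]
    rw [e, abs_mul, abs_of_pos (inv_pos.2 hp2), inv_mul_le_iff₀ hp2]
    linarith
  have := le_of_tendsto T2.abs ev
  simpa [integral_neg] using this

/-- Steps `± e_a ± e_b`. -/
def steps (n : ℕ) (i : (Fin n × Fin n) × Bool × Bool) : Euc n :=
  (if i.2.1 then (1:ℝ) else -1) • EuclideanSpace.single i.1.1 1
    + (if i.2.2 then (1:ℝ) else -1) • EuclideanSpace.single i.1.2 1

/-- Sign flip on the index set of `steps`. -/
def stepsFlip (n : ℕ) : (Fin n × Fin n) × Bool × Bool ≃ (Fin n × Fin n) × Bool × Bool :=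
  (Equiv.refl _).prodCongr (Equiv.boolNot.prodCongr Equiv.boolNot)

lemma steps_flip (i : (Fin n × Fin n) × Bool × Bool) :
    steps n (stepsFlip n i) = -steps n i := by
  obtain ⟨⟨a, b⟩, s, t⟩ := i
  cases s <;> cases t <;> simp [steps, stepsFlip, Equiv.prodCongr] <;> abel

lemma pd_eq_dd (a : Fin n) (f : Euc n → ℝ) : pd a f = dd (EuclideanSpace.single a 1) f := rfl

lemma sum_steps_dd2 {u : Euc n → ℝ} (hu : ContDiff ℝ (⊤ : ℕ∞) u) :
    ∑ i, dd (steps n i) (dd (steps n i) u) = (8 * n : ℝ) • lap u := by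
  have key : ∀ a b : Fin n, ∑ s : Bool × Bool, dd (steps n ((a, b), s)) (dd (steps n ((a, b), s)) u)
      = (4:ℝ) • (pd a (pd a u) + pd b (pd b u)) := by
    intro a b
    simp only [steps, Fintype.sum_prod_type, Fintype.sum_bool, dd2_add hu, if_true, if_false,
      Bool.false_eq_true, dd_smul_dir, dd_smul]
    ext x
    simp only [Pi.add_apply, Pi.smul_apply, smul_eq_mul, pd_eq_dd]
    ring
  rw [Fintype.sum_prod_type, Fintype.sum_prod_type]
  simp only [key]
  ext x
  simp only [Finset.sum_apply, Pi.smul_apply, Pi.add_apply, smul_eq_mul, lap, ← Finset.mul_sum,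
    Finset.sum_add_distrib, Finset.sum_const, Finset.card_univ, Fintype.card_fin, nsmul_eq_mul]
  ring

/-- Polarisation: mixed partial derivatives from second derivatives along `steps`. -/
lemma pd_pd_eq {u : Euc n → ℝ} (hu : ContDiff ℝ (⊤ : ℕ∞) u) (a b : Fin n) (x : Euc n) :
    pd a (pd b u) x = (1 / 4) * (dd (steps n ((a, b), true, true)) (dd (steps n ((a, b), true, true)) u) x
      - dd (steps n ((a, b), true, false)) (dd (steps n ((a, b), true, false)) u) x) := by
  simp only [steps, dd2_add hu, if_true, if_false,
      Bool.false_eq_true, dd_smul_dir, dd_smul]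
  simp only [Pi.add_apply, Pi.smul_apply, smul_eq_mul]
  change dd _ (dd _ u) x = _
  ring

/-- The Calderón–Zygmund inequality for test functions; it follows from `continuous_riesz` by
duality. -/
theorem calderon_zygmund (hn : 0 < n) {p : ℝ} (hp : 1 < p) :
    ∃ C > 0, ∀ u : Euc n → ℝ, ContDiff ℝ (⊤ : ℕ∞) u → HasCompactSupport u → ∀ a b,
      ∫ x, |pd a (pd b u) x| ^ p ≤ C * ∫ x, |lap u x| ^ p := by
  have hpq : p.HolderConjugate (p.conjExponent) := Real.HolderConjugate.conjExponent hp
  set q := p.conjExponent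
  have : Nonempty (Fin n) := ⟨⟨0, hn⟩⟩
  obtain ⟨C, hC, H⟩ := continuous_riesz (n := n) (ι := (Fin n × Fin n) × Bool × Bool) hpq
  refine ⟨C ^ p, by positivity, ?_⟩
  intro u hu hc a b
  have hn' : (0:ℝ) < n := by exact_mod_cast hn
  have hn1 : (1:ℝ) ≤ n := by exact_mod_cast hn
  set L := ∫ x, |lap u x| ^ p with hL
  set v := pd a (pd b u) with hv
  set V := ∫ x, |v x| ^ p with hV
  have hV0 : 0 ≤ V := integral_nonneg fun x => by positivity
  have hL0 : 0 ≤ L := integral_nonneg fun x => by positivity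
  rcases hV0.eq_or_lt with h | hVpos
  · rw [← h]; positivity
  have hvc : CC v := ⟨(smooth_pd (smooth_pd hu b) a).continuous, supp_dd (supp_dd hc _) _⟩
  -- the extremal test function `|v|^(p-2) v`
  set φ : ℝ → ℝ := fun t => (max t 0) ^ (p - 1) - (max (-t) 0) ^ (p - 1) with hφ
  have hp1 : 0 < p - 1 := by linarith
  have φpos : ∀ t, 0 ≤ t → φ t = t ^ (p - 1) := by
    intro t ht
    simp only [hφ]
    rw [max_eq_left ht, max_eq_right (by linarith), Real.zero_rpow hp1.ne', sub_zero]
  have φneg : ∀ t, φ (-t) = -φ t := by intro t; simp only [hφ, neg_neg]; ring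
  have φmul : ∀ t, t * φ t = |t| ^ p := by
    have pos : ∀ t, 0 ≤ t → t * φ t = |t| ^ p := by
      intro t ht
      rw [φpos t ht, abs_of_nonneg ht, mul_comm, ← Real.rpow_add_one' ht (by linarith)]
      congr 1; ring
    intro t
    rcases le_total 0 t with h | h
    · exact pos t h
    · have := pos (-t) (by linarith)
      rw [φneg, abs_neg] at this; linarith
  have φabs : ∀ t, |φ t| ^ q = |t| ^ p := by
    have pos : ∀ t, 0 ≤ t → |φ t| ^ q = |t| ^ p := by
      intro t ht
      rw [φpos t ht, abs_of_nonneg ht, abs_of_nonneg (by positivity), ← Real.rpow_mul ht,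
        hpq.sub_one_mul_conj]
    intro t
    rcases le_total 0 t with h | h
    · exact pos t h
    · have := pos (-t) (by linarith)
      rwa [φneg, abs_neg, abs_neg] at this
  have φcont : Continuous φ :=
    ((continuous_id.max continuous_const).rpow_const fun _ => Or.inr hp1.le).sub
      ((continuous_neg.max continuous_const).rpow_const fun _ => Or.inr hp1.le)
  have gc : CC fun x => φ (v x) := ⟨φcont.comp hvc.1, hvc.2.comp_left (g := φ) (by
    rw [φpos 0 le_rfl, Real.zero_rpow hp1.ne'])⟩
  set B := V ^ (1 / q) with hB
  have hq := hpq.symm.pos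
  have hBpos : 0 < B := by positivity
  have hgB : ∫ x, |φ (v x)| ^ q ≤ B ^ q := by
    simp only [φabs]
    rw [hB, ← Real.rpow_mul hV0, one_div_mul_cancel hq.ne', Real.rpow_one]
  have main : ∀ A, 0 < A → L < A ^ p → V ≤ C ^ p * A ^ p := by
    intro A hA hLA
    have hS : ∫ x, |((1 / (Fintype.card ((Fin n × Fin n) × Bool × Bool) : ℝ)) •
        ∑ i, dd (steps n i) (dd (steps n i) u)) x| ^ p < (2 / n * A) ^ p := by
      rw [sum_steps_dd2 hu, smul_smul]
      have e : (1 / (Fintype.card ((Fin n × Fin n) × Bool × Bool) : ℝ)) * (8 * n : ℝ) = 2 / n := by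
        simp only [Fintype.card_prod, Fintype.card_fin, Fintype.card_bool]
        push_cast; field_simp; norm_num
      rw [e, Real.mul_rpow (by positivity) hA.le]
      have : ∀ x, |((2 / (n:ℝ)) • lap u) x| ^ p = (2 / (n:ℝ)) ^ p * |lap u x| ^ p := by
        intro x
        rw [Pi.smul_apply, smul_eq_mul, abs_mul, Real.mul_rpow (abs_nonneg _) (abs_nonneg _),
          abs_of_pos (by positivity)]
      simp only [this]
      rw [integral_const_mul]
      exact mul_lt_mul_of_pos_left hLA (by positivity)
    have h := fun i => H (steps n) (stepsFlip n) steps_flip hu hc gc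
      (show 0 < 2 / n * A by positivity) hBpos hS hgB i
    have ci : ∀ z, Integrable fun x => dd z (dd z u) x * φ (v x) := fun z =>
      (CC.mul ⟨(smooth_dd (smooth_dd hu z) z).continuous, supp_dd (supp_dd hc z) z⟩
        gc.1).integrable
    have e : V = (1 / 4) * ((∫ x, dd (steps n ((a, b), true, true))
        (dd (steps n ((a, b), true, true)) u) x * φ (v x))
        - ∫ x, dd (steps n ((a, b), true, false)) (dd (steps n ((a, b), true, false)) u) x
          * φ (v x)) := by
      rw [← integral_sub (ci _) (ci _), ← integral_const_mul, hV]
      congr 1; ext x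
      rw [← φmul]
      nth_rewrite 1 [hv]
      rw [pd_pd_eq hu]; ring
    have h1 := (le_abs_self _).trans (h ((a, b), true, true))
    have h2 := (neg_le_abs _).trans (h ((a, b), true, false))
    have h3 : V ≤ C * A * B := by
      have : C * (2 / n * A) * B ≤ C * (2 * A) * B := by
        have : (2:ℝ) / n ≤ 2 := by rw [div_le_iff₀ hn']; linarith
        gcongr
      have : 0 ≤ C * A * B := by positivity
      linarith
    have e2 : V = V ^ (1 / p) * B := by
      rw [hB, ← Real.rpow_add hVpos, one_div, one_div, hpq.inv_add_inv_eq_one, Real.rpow_one]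
    have h4 : V ^ (1 / p) ≤ C * A := by
      nth_rewrite 1 [e2] at h3
      exact le_of_mul_le_mul_right h3 hBpos
    have h5 := Real.rpow_le_rpow (by positivity) h4 hpq.nonneg
    rwa [← Real.rpow_mul hV0, one_div_mul_cancel hpq.ne_zero, Real.rpow_one,
      Real.mul_rpow hC.le hA.le] at h5
  refine le_of_forall_pos_lt_add fun ε hε => ?_
  have hCp : 0 < C ^ p := by positivity
  have := main ((L + ε / (2 * C ^ p)) ^ (1 / p)) (by positivity) (by
    rw [← Real.rpow_mul (by positivity), one_div_mul_cancel hpq.ne_zero, Real.rpow_one]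
    have : 0 < ε / (2 * C ^ p) := by positivity
    linarith)
  rw [← Real.rpow_mul (by positivity), one_div_mul_cancel hpq.ne_zero, Real.rpow_one] at this
  have e : C ^ p * (L + ε / (2 * C ^ p)) = C ^ p * L + ε / 2 := by field_simp
  linarith
end

/-! ### Weighted bounds for Riesz potentials -/

section
variable {n : ℕ}

lemma one_le_jap (x : Euc n) : 1 ≤ jap x := by
  unfold jap; rw [Real.one_le_sqrt]; nlinarith [sq_nonneg ‖x‖]

lemma jap_pos (x : Euc n) : 0 < jap x := lt_of_lt_of_le one_pos (one_le_jap x)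

lemma norm_le_jap (x : Euc n) : ‖x‖ ≤ jap x := by
  unfold jap; exact Real.le_sqrt_of_sq_le (by linarith)

lemma jap_sq (x : Euc n) : jap x ^ 2 = 1 + ‖x‖ ^ 2 := Real.sq_sqrt (by positivity)

lemma jap_le_add (x y : Euc n) : jap x ≤ jap y + ‖x - y‖ := by
  unfold jap
  refine Real.sqrt_le_iff.2 ⟨by positivity, ?_⟩
  have h1 := jap_sq y
  have h2 := norm_le_jap y
  have h3 : ‖x‖ ≤ ‖y‖ + ‖x - y‖ := by
    have := norm_add_le y (x - y); simpa using this
  have h4 : ‖x‖ ^ 2 ≤ (‖y‖ + ‖x - y‖) ^ 2 := by gcongr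
  have h5 : ‖y‖ * ‖x - y‖ ≤ jap y * ‖x - y‖ := by gcongr
  change _ ≤ (jap y + ‖x - y‖) ^ 2
  nlinarith

lemma continuous_jap : Continuous (jap : Euc n → ℝ) := by
  unfold jap; fun_prop

lemma continuous_jap_rpow (s : ℝ) : Continuous fun x : Euc n => jap x ^ s :=
  continuous_jap.rpow_const fun x => Or.inl (jap_pos x).ne'

lemma lintegral_scale {lam : ℝ} (hl : 0 < lam) {f : Euc n → ℝ≥0∞} (hf : Measurable f) :
    ∫⁻ x, f (lam⁻¹ • x) = ENNReal.ofReal (lam ^ n) * ∫⁻ x, f x := by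
  have h := Measure.map_addHaar_smul (volume : Measure (Euc n)) (inv_ne_zero hl.ne')
  have h2 : ∫⁻ x, f (lam⁻¹ • x) = ∫⁻ x, f x ∂(Measure.map (lam⁻¹ • ·) volume) :=
    (lintegral_map hf (measurable_const_smul _)).symm
  rw [h2, h, lintegral_smul_measure]
  congr 2
  simp [abs_of_pos hl]

/-- Part of the Riesz kernel near its singularity. -/
lemma integrable_near (hn : 0 < n) {a : ℝ} (ha : 0 < a) :
    Integrable fun z : Euc n => (Set.Iio (1:ℝ)).indicator (fun t => t ^ (a - n)) ‖z‖ := by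
  have : Nonempty (Fin n) := ⟨⟨0, hn⟩⟩
  rw [integrable_fun_norm_addHaar (volume : Measure (Euc n))
    (f := (Set.Iio (1:ℝ)).indicator (fun t => t ^ (a - n)))]
  have h1 : IntegrableOn (fun t : ℝ => t ^ (a - 1)) (Set.Ioo 0 1) :=
    (intervalIntegral.integrableOn_Ioo_rpow_iff one_pos).2 (by linarith)
  have h2 : Integrable ((Set.Ioo (0:ℝ) 1).indicator fun t : ℝ => t ^ (a - 1)) :=
    (integrable_indicator_iff measurableSet_Ioo).2 h1
  refine (h2.integrableOn (s := Set.Ioi 0)).congr_fun (fun t ht => ?_) measurableSet_Ioi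
  have ht : 0 < t := ht
  by_cases h : t < 1
  · rw [Set.indicator_of_mem (show t ∈ Set.Ioo (0:ℝ) 1 from ⟨ht, h⟩),
      Set.indicator_of_mem (show t ∈ Set.Iio (1:ℝ) from h), smul_eq_mul, ← Real.rpow_natCast,
      ← Real.rpow_add ht]
    congr 1
    rw [finrank_euclideanSpace_fin, Nat.cast_sub (by omega)]; push_cast; ring
  · rw [Set.indicator_of_notMem (fun h' => h h'.2),
      Set.indicator_of_notMem (show t ∉ Set.Iio (1:ℝ) from h)]
    simp

/-- Part of the Riesz potential away from the singularity, after rescaling. -/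
lemma integrable_far (hn : 0 < n) {a s : ℝ} (has : a < s) (hsn : s < n) :
    Integrable fun z : Euc n => (1 + ‖z‖) ^ (a - n) * ‖z‖ ^ (-s) := by
  have : Nonempty (Fin n) := ⟨⟨0, hn⟩⟩
  rw [integrable_fun_norm_addHaar (volume : Measure (Euc n))
    (f := fun t => (1 + t) ^ (a - n) * t ^ (-s))]
  have key : ∀ t : ℝ, 0 < t → t ^ (Module.finrank ℝ (Euc n) - 1) • ((1 + t) ^ (a - n) * t ^ (-s))
      = (1 + t) ^ (a - n) * t ^ (n - 1 - s) := by
    intro t ht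
    rw [smul_eq_mul, mul_left_comm, ← Real.rpow_natCast, ← Real.rpow_add ht]
    congr 2
    rw [finrank_euclideanSpace_fin, Nat.cast_sub (by omega)]; push_cast; ring
  have meas : ∀ S : Set ℝ, AEStronglyMeasurable (fun t : ℝ => (1 + t) ^ (a - n) * t ^ (n - 1 - s))
      (volume.restrict S) := fun S => by
    apply Measurable.aestronglyMeasurable; fun_prop
  refine IntegrableOn.congr_fun (f := fun t : ℝ => (1 + t) ^ (a - n) * t ^ (n - 1 - s)) ?_
    (fun t ht => (key t ht).symm) measurableSet_Ioi
  have hsplit : Set.Ioi (0:ℝ) = Set.Ioc 0 1 ∪ Set.Ioi 1 := by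
    rw [Set.Ioc_union_Ioi_eq_Ioi zero_le_one]
  rw [hsplit]
  refine IntegrableOn.union ?_ ?_
  · have h1 : IntegrableOn (fun t : ℝ => t ^ ((n:ℝ) - 1 - s)) (Set.Ioc 0 1) := by
      rw [integrableOn_Ioc_iff_integrableOn_Ioo]
      exact (intervalIntegral.integrableOn_Ioo_rpow_iff one_pos).2 (by linarith)
    refine h1.mono' (meas _) ?_
    refine (ae_restrict_iff' measurableSet_Ioc).2 (Eventually.of_forall fun t ht => ?_)
    have h0 := ht.1
    rw [Real.norm_of_nonneg (by positivity)]
    refine mul_le_of_le_one_left (by positivity) ?_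
    exact Real.rpow_le_one_of_one_le_of_nonpos (by linarith) (by linarith)
  · have h1 : IntegrableOn (fun t : ℝ => t ^ (a - s - 1)) (Set.Ioi 1) :=
      integrableOn_Ioi_rpow_of_lt (by linarith) one_pos
    refine h1.mono' (meas _) ?_
    refine (ae_restrict_iff' measurableSet_Ioi).2 (Eventually.of_forall fun t ht => ?_)
    have h1 : 1 < t := ht
    have h0 : 0 < t := by linarith
    rw [Real.norm_of_nonneg (by positivity)]
    have e : t ^ (a - s - 1) = t ^ (a - n) * t ^ (n - 1 - s) := by
      rw [← Real.rpow_add h0]; congr 1; ring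
    rw [e]
    refine mul_le_mul_of_nonneg_right ?_ (by positivity)
    exact Real.rpow_le_rpow_of_nonpos h0 (by linarith) (by linarith)

/-- The Riesz kernel `‖z‖^(a-n)` with values in `[0,∞]`. -/
def rker (a : ℝ) (z : Euc n) : ℝ≥0∞ := ENNReal.ofReal (‖z‖ ^ (a - n))

/-- The weight `⟨x⟩^s` with values in `[0,∞]`. -/
def wt (s : ℝ) (x : Euc n) : ℝ≥0∞ := ENNReal.ofReal (jap x ^ s)

lemma measurable_rker (a : ℝ) : Measurable (rker a : Euc n → ℝ≥0∞) := by
  unfold rker; fun_prop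

lemma measurable_wt (s : ℝ) : Measurable (wt s : Euc n → ℝ≥0∞) :=
  (continuous_jap_rpow s).measurable.ennreal_ofReal

lemma wt_ne_zero (s : ℝ) (x : Euc n) : wt s x ≠ 0 := by
  simp [wt, Real.rpow_pos_of_pos (jap_pos x)]

lemma wt_ne_top (s : ℝ) (x : Euc n) : wt s x ≠ ⊤ := ENNReal.ofReal_ne_top

lemma wt_mul (s t : ℝ) (x : Euc n) : wt s x * wt t x = wt (s + t) x := by
  unfold wt
  rw [← ENNReal.ofReal_mul (Real.rpow_nonneg (jap_pos x).le _), ← Real.rpow_add (jap_pos x)]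

lemma wt_zero (x : Euc n) : wt 0 x = 1 := by simp [wt]

lemma wt_rpow (s t : ℝ) (x : Euc n) : wt s x ^ t = wt (s * t) x := by
  unfold wt
  rw [ENNReal.ofReal_rpow_of_pos (Real.rpow_pos_of_pos (jap_pos x) _),
    ← Real.rpow_mul (jap_pos x).le]

lemma rker_symm (a : ℝ) (x y : Euc n) : rker a (x - y) = rker a (y - x) := by
  unfold rker; rw [norm_sub_rev]

/-- Riesz potentials of powers of `⟨y⟩`. On `‖x - y‖ ≤ ⟨x⟩ / 2` the weight is at most a constant
multiple of its value at `x`; elsewhere the kernel is at most a multiple of `(⟨x⟩ + ‖y‖)^(a-n)`. -/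
lemma riesz_weight (hn : 0 < n) {a s : ℝ} (ha : 0 < a) (has : a < s) (hsn : s < n) :
    ∃ C : ℝ, 0 < C ∧ ∀ x : Euc n, ∫⁻ y, rker a (x - y) * wt (-s) y ≤ ENNReal.ofReal C * wt (a - s) x := by
  have : Nonempty (Fin n) := ⟨⟨0, hn⟩⟩
  set G1 : Euc n → ℝ := fun z => (Set.Iio (1:ℝ)).indicator (fun t => t ^ (a - n)) ‖z‖ with hG1
  set G2 : Euc n → ℝ := fun z => (1 + ‖z‖) ^ (a - n) * ‖z‖ ^ (-s) with hG2
  have i1 : Integrable G1 := integrable_near hn ha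
  have i2 : Integrable G2 := integrable_far hn has hsn
  have p1 : ∀ z, 0 ≤ G1 z := fun z => by
    by_cases h : ‖z‖ ∈ Set.Iio (1:ℝ)
    · simp only [hG1, Set.indicator_of_mem h]; positivity
    · simp only [hG1, Set.indicator_of_notMem h]; exact le_rfl
  have p2 : ∀ z, 0 ≤ G2 z := fun z => by simp only [hG2]; positivity
  have m1 : Measurable fun z => ENNReal.ofReal (G1 z) := by
    refine Measurable.ennreal_ofReal ?_
    exact (Measurable.indicator (by fun_prop) measurableSet_Iio).comp measurable_norm
  have m2 : Measurable fun z => ENNReal.ofReal (G2 z) := by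
    simp only [hG2]; fun_prop
  set c1 := ∫ z, G1 z with hc1
  set c2 := ∫ z, G2 z with hc2
  have c1n : 0 ≤ c1 := integral_nonneg p1
  have c2n : 0 ≤ c2 := integral_nonneg p2
  have e1 : ∫⁻ z, ENNReal.ofReal (G1 z) = ENNReal.ofReal c1 :=
    (ofReal_integral_eq_lintegral_ofReal i1 (Eventually.of_forall p1)).symm
  have e2 : ∫⁻ z, ENNReal.ofReal (G2 z) = ENNReal.ofReal c2 :=
    (ofReal_integral_eq_lintegral_ofReal i2 (Eventually.of_forall p2)).symm
  refine ⟨2 ^ s * c1 + 6 ^ (n - a) * c2 + 1, by positivity, fun x => ?_⟩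
  set lam := jap x with hlam
  have hl : 0 < lam := jap_pos x
  have key : ∀ y : Euc n, y ≠ 0 → ‖x - y‖ ^ (a - n) * jap y ^ (-s) ≤
      lam ^ (a - n - s) * (2 ^ s * G1 (lam⁻¹ • (x - y)) + 6 ^ (n - a) * G2 (lam⁻¹ • y)) := by
    intro y hy
    have hy0 : 0 < ‖y‖ := norm_pos_iff.2 hy
    rw [mul_add]
    have li := jap_le_add x y
    have li2 := jap_le_add y x
    rw [norm_sub_rev] at li2
    rcases le_or_gt ‖x - y‖ (lam / 2) with h | h
    · have hlt : ‖lam⁻¹ • (x - y)‖ ∈ Set.Iio (1:ℝ) := by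
        rw [Set.mem_Iio, norm_smul, Real.norm_of_nonneg (by positivity), inv_mul_lt_iff₀ hl]
        linarith
      have hg : G1 (lam⁻¹ • (x - y)) = lam ^ (n - a) * ‖x - y‖ ^ (a - n) := by
        simp only [hG1, Set.indicator_of_mem hlt]
        rw [norm_smul, Real.norm_of_nonneg (by positivity),
          Real.mul_rpow (by positivity) (norm_nonneg _), Real.inv_rpow hl.le,
          ← Real.rpow_neg hl.le]
        congr 2; ring
      have t2 : 0 ≤ lam ^ (a - n - s) * (6 ^ (n - a) * G2 (lam⁻¹ • y)) := by
        have := p2 (lam⁻¹ • y); positivity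
      refine le_trans ?_ (le_add_of_nonneg_right t2)
      rw [hg]
      have e : lam ^ (a - n - s) * (2 ^ s * (lam ^ (n - a) * ‖x - y‖ ^ (a - n)))
          = ‖x - y‖ ^ (a - n) * (lam / 2) ^ (-s) := by
        rw [Real.div_rpow hl.le (by norm_num), Real.rpow_neg (by norm_num : (0:ℝ) ≤ 2),
          show a - (n:ℝ) - s = -s - (n - a) by ring, Real.rpow_sub hl]
        have : 0 < lam ^ ((n:ℝ) - a) := by positivity
        field_simp
      rw [e]
      refine mul_le_mul_of_nonneg_left ?_ (by positivity)
      exact Real.rpow_le_rpow_of_nonpos (by positivity) (by linarith) (by linarith)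
    · have t1 : 0 ≤ lam ^ (a - n - s) * (2 ^ s * G1 (lam⁻¹ • (x - y))) := by
        have := p1 (lam⁻¹ • (x - y)); positivity
      refine le_trans ?_ (le_add_of_nonneg_left t1)
      have hg : G2 (lam⁻¹ • y) = lam ^ (n - a) * (lam + ‖y‖) ^ (a - n)
          * (lam ^ s * ‖y‖ ^ (-s)) := by
        simp only [hG2]
        rw [norm_smul, Real.norm_of_nonneg (by positivity),
          Real.mul_rpow (by positivity) (norm_nonneg _), Real.inv_rpow hl.le,
          Real.rpow_neg hl.le s, inv_inv]
        have : 1 + lam⁻¹ * ‖y‖ = lam⁻¹ * (lam + ‖y‖) := by field_simp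
        rw [this, Real.mul_rpow (by positivity) (by positivity), Real.inv_rpow hl.le,
          ← Real.rpow_neg hl.le (a - n)]
        congr 3; ring
      have e : lam ^ (a - n - s) * (6 ^ (n - a) * G2 (lam⁻¹ • y))
          = ((lam + ‖y‖) / 6) ^ (a - n) * ‖y‖ ^ (-s) := by
        rw [hg, Real.div_rpow (by positivity) (by norm_num),
          show a - (n:ℝ) - s = -(s + (n - a)) by ring, Real.rpow_neg hl.le, Real.rpow_add hl,
          show (n:ℝ) - a = -(a - n) by ring, Real.rpow_neg hl.le,
          Real.rpow_neg (by norm_num : (0:ℝ) ≤ 6)]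
        have : 0 < lam ^ (a - (n:ℝ)) := by positivity
        have : 0 < lam ^ s := by positivity
        field_simp
      rw [e]
      have hny := norm_le_jap y
      refine mul_le_mul ?_ ?_ (Real.rpow_nonneg (jap_pos y).le _) (by positivity)
      · exact Real.rpow_le_rpow_of_nonpos (by positivity) (by linarith) (by linarith)
      · exact Real.rpow_le_rpow_of_nonpos hy0 hny (by linarith)
  have ae : ∀ᵐ y : Euc n, rker a (x - y) * wt (-s) y ≤ ENNReal.ofReal (lam ^ (a - n - s)) *
      (ENNReal.ofReal (2 ^ s) * ENNReal.ofReal (G1 (lam⁻¹ • (x - y)))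
        + ENNReal.ofReal (6 ^ (n - a)) * ENNReal.ofReal (G2 (lam⁻¹ • y))) := by
    have : ∀ᵐ y : Euc n, y ≠ 0 := by
      simp [ae_iff, measure_singleton]
    filter_upwards [this] with y hy
    have h1 := p1 (lam⁻¹ • (x - y))
    have h2 := p2 (lam⁻¹ • y)
    unfold rker wt
    rw [← ENNReal.ofReal_mul (by positivity), ← ENNReal.ofReal_mul (by positivity),
      ← ENNReal.ofReal_mul (by positivity), ← ENNReal.ofReal_add (by positivity) (by positivity),
      ← ENNReal.ofReal_mul (by positivity)]
    exact ENNReal.ofReal_le_ofReal (key y hy)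
  refine (lintegral_mono_ae ae).trans ?_
  have mA : Measurable fun y => ENNReal.ofReal (G1 (lam⁻¹ • (x - y))) :=
    m1.comp ((measurable_const_sub x).const_smul lam⁻¹)
  have mB : Measurable fun y => ENNReal.ofReal (G2 (lam⁻¹ • y)) :=
    m2.comp (measurable_const_smul lam⁻¹)
  have mA2 : Measurable fun y => ENNReal.ofReal (2 ^ s) * ENNReal.ofReal (G1 (lam⁻¹ • (x - y))) :=
    mA.const_mul _
  have mAB : Measurable fun y => ENNReal.ofReal (2 ^ s) * ENNReal.ofReal (G1 (lam⁻¹ • (x - y)))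
      + ENNReal.ofReal (6 ^ (n - a)) * ENNReal.ofReal (G2 (lam⁻¹ • y)) :=
    mA2.add (mB.const_mul _)
  rw [lintegral_const_mul _ mAB, lintegral_add_left mA2, lintegral_const_mul _ mA, lintegral_const_mul _ mB,
    lintegral_sub_left_eq_self (fun y => ENNReal.ofReal (G1 (lam⁻¹ • y))) x,
    lintegral_scale hl m1, lintegral_scale hl m2, e1, e2]
  unfold wt
  rw [← hlam, ← ENNReal.ofReal_mul (by positivity), ← ENNReal.ofReal_mul (by positivity),
    ← ENNReal.ofReal_mul (by positivity), ← ENNReal.ofReal_mul (by positivity),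
    ← ENNReal.ofReal_add (by positivity) (by positivity), ← ENNReal.ofReal_mul (by positivity),
    ← ENNReal.ofReal_mul (by positivity)]
  refine ENNReal.ofReal_le_ofReal ?_
  have e : lam ^ (a - s) = lam ^ (a - n - s) * lam ^ n := by
    rw [← Real.rpow_natCast, ← Real.rpow_add hl]; congr 1; ring
  rw [e]
  have : 0 ≤ lam ^ (a - n - s) * lam ^ n := by positivity
  nlinarith

/-- Schur's test with the same test function `h` on both sides. -/
lemma schur_test {p q : ℝ} (hpq : p.HolderConjugate q) {K : Euc n → Euc n → ℝ≥0∞}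
    (hK : Measurable (Function.uncurry K)) {h : Euc n → ℝ≥0∞} (hh : Measurable h)
    (h0 : ∀ x, h x ≠ 0) (ht : ∀ x, h x ≠ ⊤) {C1 C2 : ℝ≥0∞}
    (H1 : ∀ x, ∫⁻ y, K x y * h y ^ q ≤ C1 * h x ^ q)
    (H2 : ∀ y, ∫⁻ x, K x y * h x ^ p ≤ C2 * h y ^ p) {g : Euc n → ℝ≥0∞} (hg : Measurable g) :
    ∫⁻ x, (∫⁻ y, K x y * g y) ^ p ≤ C1 ^ (p / q) * C2 * ∫⁻ y, g y ^ p := by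
  have hp := hpq.pos
  have hq := hpq.symm.pos
  have hKx : ∀ x, Measurable (K x) := fun x => hK.comp measurable_prodMk_left
  have step : ∀ x, (∫⁻ y, K x y * g y) ^ p ≤
      C1 ^ (p / q) * (h x ^ p * ∫⁻ y, K x y * ((h y)⁻¹ * g y) ^ p) := by
    intro x
    have hol := ENNReal.lintegral_mul_le_Lp_mul_Lq volume hpq.symm
      (f := fun y => K x y ^ (1 / q) * h y) (g := fun y => K x y ^ (1 / p) * ((h y)⁻¹ * g y))
      (((hKx x).pow_const _).mul hh).aemeasurable
      (((hKx x).pow_const _).mul (hh.inv.mul hg)).aemeasurable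
    have e1 : ∀ y, ((fun y => K x y ^ (1 / q) * h y) * fun y => K x y ^ (1 / p) *
        ((h y)⁻¹ * g y)) y = K x y * g y := by
      intro y
      have a : K x y ^ (1 / q) * K x y ^ (1 / p) = K x y := by
        rw [← ENNReal.rpow_add_of_nonneg _ _ (by positivity) (by positivity), one_div, one_div,
          hpq.symm.inv_add_inv_eq_one, ENNReal.rpow_one]
      have b : h y * (h y)⁻¹ = 1 := ENNReal.mul_inv_cancel (h0 y) (ht y)
      calc _ = (K x y ^ (1 / q) * K x y ^ (1 / p)) * (h y * (h y)⁻¹) * g y := by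
            simp only [Pi.mul_apply]; ring
        _ = _ := by rw [a, b, mul_one]
    have e2 : ∀ y, (K x y ^ (1 / q) * h y) ^ q = K x y * h y ^ q := by
      intro y
      rw [ENNReal.mul_rpow_of_nonneg _ _ hq.le, ← ENNReal.rpow_mul, one_div_mul_cancel hq.ne',
        ENNReal.rpow_one]
    have e3 : ∀ y, (K x y ^ (1 / p) * ((h y)⁻¹ * g y)) ^ p = K x y * ((h y)⁻¹ * g y) ^ p := by
      intro y
      rw [ENNReal.mul_rpow_of_nonneg _ _ hp.le, ← ENNReal.rpow_mul, one_div_mul_cancel hp.ne',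
        ENNReal.rpow_one]
    simp only [e1, e2, e3] at hol
    have h1 := ENNReal.rpow_le_rpow hol hp.le
    refine h1.trans ?_
    rw [ENNReal.mul_rpow_of_nonneg _ _ hp.le, ← ENNReal.rpow_mul, ← ENNReal.rpow_mul,
      one_div_mul_cancel hp.ne', ENNReal.rpow_one, ← mul_assoc]
    gcongr
    calc (∫⁻ y, K x y * h y ^ q) ^ (1 / q * p) ≤ (C1 * h x ^ q) ^ (1 / q * p) :=
          ENNReal.rpow_le_rpow (H1 x) (by positivity)
      _ = C1 ^ (p / q) * h x ^ p := by
          rw [ENNReal.mul_rpow_of_nonneg _ _ (by positivity), ← ENNReal.rpow_mul]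
          congr 2 <;> field_simp
  have mI : Measurable (Function.uncurry fun x y => h x ^ p * (K x y * ((h y)⁻¹ * g y) ^ p)) := by
    have a : Measurable fun z : Euc n × Euc n => h z.1 := hh.comp measurable_fst
    have b : Measurable fun z : Euc n × Euc n => h z.2 := hh.comp measurable_snd
    have c : Measurable fun z : Euc n × Euc n => g z.2 := hg.comp measurable_snd
    exact (a.pow_const p).mul (hK.mul ((b.inv.mul c).pow_const p))
  calc ∫⁻ x, (∫⁻ y, K x y * g y) ^ p
      ≤ ∫⁻ x, C1 ^ (p / q) * (h x ^ p * ∫⁻ y, K x y * ((h y)⁻¹ * g y) ^ p) := lintegral_mono step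
    _ = C1 ^ (p / q) * ∫⁻ x, ∫⁻ y, h x ^ p * (K x y * ((h y)⁻¹ * g y) ^ p) := by
        have : ∀ x, h x ^ p * ∫⁻ y, K x y * ((h y)⁻¹ * g y) ^ p
            = ∫⁻ y, h x ^ p * (K x y * ((h y)⁻¹ * g y) ^ p) := fun x =>
          (lintegral_const_mul _ ((hKx x).mul ((hh.inv.mul hg).pow_const p))).symm
        simp only [this]
        rw [lintegral_const_mul]
        exact mI.lintegral_prod_right'
    _ = C1 ^ (p / q) * ∫⁻ y, ∫⁻ x, h x ^ p * (K x y * ((h y)⁻¹ * g y) ^ p) := by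
        rw [lintegral_lintegral_swap mI.aemeasurable]
    _ ≤ C1 ^ (p / q) * ∫⁻ y, C2 * g y ^ p := by
        gcongr with y
        have e : ∀ x, h x ^ p * (K x y * ((h y)⁻¹ * g y) ^ p)
            = ((h y)⁻¹ * g y) ^ p * (K x y * h x ^ p) := fun x => by ring
        simp only [e]
        rw [lintegral_const_mul]
        · refine (mul_le_mul_right (H2 y) _).trans (le_of_eq ?_)
          rw [ENNReal.mul_rpow_of_nonneg _ _ hp.le]
          have b : (h y)⁻¹ ^ p * h y ^ p = 1 := by
            rw [← ENNReal.mul_rpow_of_nonneg _ _ hp.le, ENNReal.inv_mul_cancel (h0 y) (ht y),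
              ENNReal.one_rpow]
          calc _ = C2 * g y ^ p * ((h y)⁻¹ ^ p * h y ^ p) := by ring
            _ = _ := by rw [b, mul_one]
        · exact (hK.comp measurable_prodMk_right).mul (hh.pow_const p)
    _ = _ := by rw [lintegral_const_mul _ (hg.pow_const p), mul_assoc]

/-- Riesz potential of order `a` of a function with values in `[0,∞]`, without normalisation. -/
def pot (a : ℝ) (f : Euc n → ℝ≥0∞) (x : Euc n) : ℝ≥0∞ := ∫⁻ y, rker a (x - y) * f y

/-- Weighted `L^p` bounds for Riesz potentials, by Schur's test with a power of `⟨x⟩`. -/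
theorem pot_weighted (hn : 0 < n) {p a α β : ℝ} (hp : 1 < p) (ha : 0 < a)
    (hα : α < n / p) (hβ : β < n - n / p) (hab : α + β = a) :
    ∃ C : ℝ, 0 < C ∧ ∀ f : Euc n → ℝ≥0∞, Measurable f →
      ∫⁻ x, (wt (-α) x * pot a f x) ^ p ≤ ENNReal.ofReal C * ∫⁻ x, (wt β x * f x) ^ p := by
  have hpq : p.HolderConjugate (p.conjExponent) := Real.HolderConjugate.conjExponent hp
  set q := p.conjExponent
  have hp0 := hpq.pos
  have hq0 := hpq.symm.pos
  have hinv := hpq.inv_add_inv_eq_one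
  -- the exponent of the test function; these inequalities are what `riesz_weight` requires
  obtain ⟨γ, hγ1, hγ2⟩ : ∃ γ, max (α / q) (β / p) < γ ∧ γ < min ((n - β) / q) ((n - α) / p) := by
    apply exists_between
    have hqi : q⁻¹ = 1 - p⁻¹ := by linarith
    simp only [div_eq_mul_inv] at *
    rw [max_lt_iff, lt_min_iff, lt_min_iff]
    have hpi : 0 < p⁻¹ := by positivity
    have hqi0 : 0 < q⁻¹ := by positivity
    refine ⟨⟨?_, ?_⟩, ?_, ?_⟩
    · exact mul_lt_mul_of_pos_right (by linarith) hqi0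
    · rw [hqi]; nlinarith
    · rw [hqi]; nlinarith
    · exact mul_lt_mul_of_pos_right (by linarith) hpi
  rw [max_lt_iff] at hγ1
  rw [lt_min_iff] at hγ2
  rw [div_lt_iff₀ hq0, div_lt_iff₀ hp0] at hγ1
  rw [lt_div_iff₀ hq0, lt_div_iff₀ hp0] at hγ2
  obtain ⟨C1, hC1, B1⟩ := riesz_weight (n := n) hn (a := a) (s := β + γ * q) ha (by linarith)
    (by linarith)
  obtain ⟨C2, hC2, B2⟩ := riesz_weight (n := n) hn (a := a) (s := α + γ * p) ha (by linarith)
    (by linarith)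
  refine ⟨C1 ^ (p / q) * C2, by positivity, fun f hf => ?_⟩
  have mK : Measurable (Function.uncurry fun x y : Euc n => wt (-α) x * (rker a (x - y) * wt (-β) y)) :=
    ((measurable_wt _).comp measurable_fst).mul (((measurable_rker a).comp
      (measurable_fst.sub measurable_snd)).mul ((measurable_wt _).comp measurable_snd))
  have S := schur_test hpq mK (measurable_wt (-γ)) (wt_ne_zero _) (wt_ne_top _)
    (C1 := ENNReal.ofReal C1) (C2 := ENNReal.ofReal C2) (fun x => ?_) (fun y => ?_)
    (g := fun y => wt β y * f y) ((measurable_wt _).mul hf)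
  · rw [ENNReal.ofReal_mul (by positivity), ← ENNReal.ofReal_rpow_of_pos hC1]
    refine le_trans (le_of_eq ?_) S
    congr 1; ext x; congr 1
    unfold pot
    have mx : Measurable fun y => rker a (x - y) * f y :=
      ((measurable_rker a).comp (measurable_const_sub x)).mul hf
    rw [← lintegral_const_mul _ mx]
    congr 1; ext y
    have : wt (-β) y * wt β y = 1 := by rw [wt_mul, neg_add_cancel, wt_zero]
    calc _ = wt (-α) x * (rker a (x - y) * f y) * (wt (-β) y * wt β y) := by rw [this, mul_one]
      _ = _ := by ring
  · have e : ∀ y, wt (-α) x * (rker a (x - y) * wt (-β) y) * wt (-γ) y ^ q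
        = wt (-α) x * (rker a (x - y) * wt (-(β + γ * q)) y) := by
      intro y
      rw [wt_rpow, mul_assoc, mul_assoc, wt_mul]
      congr 3; ring
    simp only [e]
    have mx : Measurable fun y => rker a (x - y) * wt (-(β + γ * q)) y :=
      ((measurable_rker a).comp (measurable_const_sub x)).mul (measurable_wt _)
    rw [lintegral_const_mul _ mx]
    refine (mul_le_mul_right (B1 x) _).trans (le_of_eq ?_)
    rw [mul_left_comm, wt_mul, wt_rpow]
    congr 2; linarith
  · have e : ∀ x, wt (-α) x * (rker a (x - y) * wt (-β) y) * wt (-γ) x ^ p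
        = wt (-β) y * (rker a (y - x) * wt (-(α + γ * p)) x) := by
      intro x
      have : wt (-(α + γ * p)) x = wt (-α) x * wt (-γ) x ^ p := by
        rw [wt_rpow, wt_mul]; congr 1; ring
      rw [this, rker_symm a x y]; ring
    simp only [e]
    have my : Measurable fun x => rker a (y - x) * wt (-(α + γ * p)) x :=
      ((measurable_rker a).comp (measurable_const_sub y)).mul (measurable_wt _)
    rw [lintegral_const_mul _ my]
    refine (mul_le_mul_right (B2 y) _).trans (le_of_eq ?_)
    rw [mul_left_comm, wt_mul, wt_rpow]
    congr 2; linarith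
end

/-! ### The Newtonian kernel -/

section
variable {n : ℕ}

/-- The regularised power `(‖z‖² + e)^s`. -/
def preg (e s : ℝ) (z : Euc n) : ℝ := (‖z‖ ^ 2 + e) ^ s

lemma preg_pos {e : ℝ} (he : 0 < e) (s : ℝ) (z : Euc n) : 0 < preg e s z := by
  unfold preg; positivity

lemma preg_mul {e : ℝ} (he : 0 < e) (s t : ℝ) (z : Euc n) :
    preg e s z * preg e t z = preg e (s + t) z :=
  (Real.rpow_add (by positivity) s t).symm

lemma contDiff_preg {e : ℝ} (he : 0 < e) (s : ℝ) :
    ContDiff ℝ (⊤ : ℕ∞) (preg e s : Euc n → ℝ) := by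
  unfold preg
  exact ((contDiff_norm_sq ℝ).add contDiff_const).rpow_const_of_ne (fun z => by positivity)

lemma dd_preg {e : ℝ} (he : 0 < e) (s : ℝ) (v : Euc n) :
    dd v (preg e s) = fun z => 2 * s * inner ℝ z v * preg e (s - 1) z := by
  ext z
  have h1 : HasFDerivAt (fun z : Euc n => ‖z‖ ^ 2 + e) (2 • innerSL ℝ z) z :=
    (hasStrictFDerivAt_norm_sq z).hasFDerivAt.add_const e
  have h2 := h1.rpow_const (p := s) (Or.inl (by positivity))
  unfold dd preg
  rw [h2.fderiv]
  simp
  ring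

lemma hasFDerivAt_inner_left (v : Euc n) (z : Euc n) :
    HasFDerivAt (fun z : Euc n => inner ℝ z v) (innerSL ℝ v) z := by
  have := (innerSL ℝ v).hasFDerivAt (x := z)
  refine this.congr_of_eventuallyEq (Eventually.of_forall fun y => ?_)
  simp [real_inner_comm]

lemma dd_dd_preg {e : ℝ} (he : 0 < e) (s : ℝ) (v w z : Euc n) :
    dd w (dd v (preg e s)) z = 2 * s * (inner ℝ w v * preg e (s - 1) z
      + 2 * (s - 1) * inner ℝ z v * inner ℝ z w * preg e (s - 2) z) := by
  rw [dd_preg he]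
  have h2 : HasFDerivAt (preg e (s - 1)) (fderiv ℝ (preg e (s - 1)) z) z :=
    ((smooth_diff (contDiff_preg he (s - 1))) z).hasFDerivAt
  have h3 := ((hasFDerivAt_inner_left v z).const_mul (2 * s)).mul h2
  have h4 := congrFun (dd_preg he (s - 1) w) z
  unfold dd at h4 ⊢
  have h5 : (fun z => 2 * s * inner ℝ z v * preg e (s - 1) z) =
    (fun y : Euc n => 2 * s * inner ℝ y v) * preg e (s - 1) := rfl
  rw [h5, h3.fderiv]
  simp only [add_apply, smul_apply, smul_eq_mul, h4, innerSL_apply_apply]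
  rw [real_inner_comm v w, show s - 1 - 1 = s - 2 by ring]
  ring

/-- The regularised Newtonian kernel has as Laplacian minus an approximate identity. -/
lemma lap_preg {e : ℝ} (he : 0 < e) (z : Euc n) :
    lap (preg e ((2 - n) / 2)) z = - (e * (n * (n - 2)) * preg e (-(n + 2) / 2) z) := by
  unfold lap
  simp only [pd_eq_dd, dd_dd_preg he]
  rw [← Finset.mul_sum, Finset.sum_add_distrib]
  have h1 : ∀ i : Fin n, inner ℝ z (EuclideanSpace.single i (1:ℝ)) = z i := by
    intro i; simp [EuclideanSpace.inner_single_right]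
  have h2 : ∀ i : Fin n, inner ℝ (EuclideanSpace.single i (1:ℝ)) (EuclideanSpace.single i (1:ℝ)) = (1:ℝ) := by
    intro i; simp
  simp only [h1, h2]
  have h3 : ∑ i : Fin n, 2 * (((2:ℝ) - n) / 2 - 1) * z i * z i * preg e ((2 - n) / 2 - 2) z
      = - n * ‖z‖ ^ 2 * preg e ((2 - n) / 2 - 2) z := by
    rw [EuclideanSpace.norm_sq_eq, ← Finset.sum_mul, Finset.mul_sum]
    congr 1
    refine Finset.sum_congr rfl fun i _ => ?_
    rw [Real.norm_eq_abs, sq_abs]; ring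
  have h4 : preg e (((2:ℝ) - n) / 2 - 1) z = (‖z‖ ^ 2 + e) * preg e ((2 - n) / 2 - 2) z := by
    have := preg_mul he 1 ((2 - n) / 2 - 2) z
    rw [show preg e 1 z = ‖z‖ ^ 2 + e by simp [preg]] at this
    rw [this]; congr 1; ring
  rw [h3, Finset.sum_const, h4, show (-((n:ℝ) + 2) / 2) = (2 - n) / 2 - 2 by ring]
  simp
  ring

lemma locallyIntegrable_pow (hn : 0 < n) {a : ℝ} (ha : 0 < a) (han : a ≤ n) :
    LocallyIntegrable fun z : Euc n => ‖z‖ ^ (a - n) := by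
  have h1 := (integrable_near (n := n) hn ha).locallyIntegrable.add
    (locallyIntegrable_const (1:ℝ))
  refine h1.mono (measurable_norm.pow_const _).aestronglyMeasurable (Eventually.of_forall fun z => ?_)
  simp only [Pi.add_apply]
  have h0 : 0 ≤ (Set.Iio (1:ℝ)).indicator (fun t => t ^ (a - n)) ‖z‖ :=
    Set.indicator_apply_nonneg fun _ => Real.rpow_nonneg (norm_nonneg _) _
  rw [Real.norm_of_nonneg (by positivity), Real.norm_of_nonneg (by positivity)]
  by_cases h : ‖z‖ < 1
  · rw [Set.indicator_of_mem (show ‖z‖ ∈ Set.Iio (1:ℝ) from h)]; linarith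
  · have := Real.rpow_le_one_of_one_le_of_nonpos (not_lt.1 h) (show a - n ≤ 0 by linarith)
    linarith

/-- Convolution `K * f`, with the kernel `K` as first argument. -/
def cv (K f : Euc n → ℝ) (x : Euc n) : ℝ := ∫ z, K z * f (x - z)

lemma cv_eq (K f : Euc n → ℝ) :
    cv K f = MeasureTheory.convolution K f (ContinuousLinearMap.lsmul ℝ ℝ) volume := rfl

lemma smooth_cv {K f : Euc n → ℝ} (hK : LocallyIntegrable K) (hf : ContDiff ℝ (⊤ : ℕ∞) f)
    (hc : HasCompactSupport f) : ContDiff ℝ (⊤ : ℕ∞) (cv K f) := by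
  rw [cv_eq]
  exact hc.contDiff_convolution_right _ hK hf

lemma dd_cv {K f : Euc n → ℝ} (hK : LocallyIntegrable K) (hf : ContDiff ℝ (⊤ : ℕ∞) f)
    (hc : HasCompactSupport f) (v : Euc n) : dd v (cv K f) = cv K (dd v f) := by
  ext x
  have hf1 : ContDiff ℝ 1 f := hf.of_le (by exact_mod_cast le_top)
  have h := hc.hasFDerivAt_convolution_right (ContinuousLinearMap.lsmul ℝ ℝ) hK hf1 x
  rw [cv_eq]
  unfold dd
  rw [h.fderiv, convolution_precompR_apply _ hK (hc.fderiv ℝ) (hf1.continuous_fderiv one_ne_zero)]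
  rfl

lemma integrable_mul_cs {K g : Euc n → ℝ} (hK : LocallyIntegrable K) (hg : Continuous g)
    (hc : HasCompactSupport g) : Integrable fun z => K z * g z :=
  hK.integrable_smul_right_of_hasCompactSupport hg hc

lemma ibp {K g : Euc n → ℝ} (hK : ContDiff ℝ (⊤ : ℕ∞) K) (hg : ContDiff ℝ (⊤ : ℕ∞) g)
    (hc : HasCompactSupport g) (v : Euc n) :
    ∫ z, K z * dd v g z = - ∫ z, dd v K z * g z :=
  integral_mul_fderiv_eq_neg_fderiv_mul_of_integrable (μ := volume)
    (integrable_mul_cs (smooth_dd hK v).continuous.locallyIntegrable hg.continuous hc)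
    (integrable_mul_cs hK.continuous.locallyIntegrable (smooth_dd hg v).continuous (supp_dd hc v))
    (integrable_mul_cs hK.continuous.locallyIntegrable hg.continuous hc)
    (fun z _ => smooth_diff hK z) (fun z _ => smooth_diff hg z)

/-- The (unnormalised) Newtonian kernel `‖z‖^(2-n)`. -/
def newt (z : Euc n) : ℝ := ‖z‖ ^ ((2:ℝ) - n)

lemma newt_loc (hn : 3 ≤ n) : LocallyIntegrable (newt : Euc n → ℝ) :=
  locallyIntegrable_pow (by omega) two_pos (by norm_cast; omega)

lemma ae_ne_zero (hn : 0 < n) : ∀ᵐ z : Euc n, z ≠ 0 := by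
  have : Nonempty (Fin n) := ⟨⟨0, hn⟩⟩
  simp [ae_iff, measure_singleton]

/-- Replacing the Newtonian kernel by its regularisations is harmless in the limit. -/
lemma newt_limit (hn : 3 ≤ n) {g : Euc n → ℝ} (hg : Continuous g) (hc : HasCompactSupport g) :
    Tendsto (fun m => ∫ z, preg (mesh m ^ 2) ((2 - n) / 2) z * g z) atTop
      (𝓝 (∫ z, newt z * g z)) := by
  have hn' : (3:ℝ) ≤ n := by exact_mod_cast hn
  refine tendsto_integral_of_dominated_convergence (fun z => ‖newt z * g z‖) (fun m => ?_)
    (integrable_mul_cs (newt_loc hn) hg hc).norm (fun m => ?_) ?_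
  · exact ((contDiff_preg (pow_pos (mesh_pos m) 2) _).continuous.mul hg).aestronglyMeasurable
  · filter_upwards [ae_ne_zero (n := n) (by omega)] with z hz
    rw [norm_mul, norm_mul]
    refine mul_le_mul_of_nonneg_right ?_ (norm_nonneg _)
    have hz' : 0 < ‖z‖ := norm_pos_iff.2 hz
    rw [Real.norm_of_nonneg (preg_pos (pow_pos (mesh_pos m) 2) _ z).le,
      Real.norm_of_nonneg (show 0 ≤ newt z from Real.rpow_nonneg (norm_nonneg _) _)]
    have e : newt z = (‖z‖ ^ 2) ^ (((2:ℝ) - n) / 2) := by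
      rw [← Real.rpow_natCast, ← Real.rpow_mul hz'.le]; unfold newt; congr 1; push_cast; ring
    rw [e]
    exact Real.rpow_le_rpow_of_nonpos (by positivity) (by nlinarith [mesh_pos m]) (by linarith)
  · filter_upwards [ae_ne_zero (n := n) (by omega)] with z hz
    have hz' : 0 < ‖z‖ := norm_pos_iff.2 hz
    refine Tendsto.mul_const _ ?_
    have e : newt z = (‖z‖ ^ 2 + 0 ^ 2) ^ (((2:ℝ) - n) / 2) := by
      rw [zero_pow two_ne_zero, add_zero, ← Real.rpow_natCast, ← Real.rpow_mul hz'.le]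
      unfold newt; congr 1; push_cast; ring
    rw [e]
    exact ((mesh_tendsto.pow 2).const_add _).rpow_const (Or.inl (by positivity))

/-- Integrating by parts once against the Newtonian kernel. -/
lemma newt_dd_bound (hn : 3 ≤ n) {g : Euc n → ℝ} (hg : ContDiff ℝ (⊤ : ℕ∞) g)
    (hc : HasCompactSupport g) (v : Euc n) :
    |∫ z, newt z * dd v g z| ≤ ∫ z, (n - 2) * ‖v‖ * (‖z‖ ^ ((1:ℝ) - n) * |g z|) := by
  have hn' : (3:ℝ) ≤ n := by exact_mod_cast hn
  have L := newt_limit hn (smooth_dd hg v).continuous (supp_dd hc v)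
  refine le_of_tendsto L.abs (Eventually.of_forall fun m => ?_)
  have hm : 0 < mesh m ^ 2 := pow_pos (mesh_pos m) 2
  rw [ibp (contDiff_preg hm _) hg hc v, abs_neg]
  refine (abs_integral_le_integral_abs).trans (integral_mono_ae ?_ ?_ ?_)
  · exact (integrable_mul_cs (smooth_dd (contDiff_preg hm _) v).continuous.locallyIntegrable
      hg.continuous hc).abs
  · refine ((integrable_mul_cs (locallyIntegrable_pow (n := n) (by omega) one_pos (by linarith))
      hg.continuous.abs ?_).const_mul _)
    exact hc.comp_left (g := fun t : ℝ => |t|) abs_zero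
  · filter_upwards [ae_ne_zero (n := n) (by omega)] with z hz
    have hz' : 0 < ‖z‖ := norm_pos_iff.2 hz
    rw [dd_preg hm, abs_mul, ← mul_assoc]
    refine mul_le_mul_of_nonneg_right ?_ (abs_nonneg _)
    rw [abs_mul, abs_mul, abs_of_pos (preg_pos hm _ z), show (2:ℝ) * ((2 - n) / 2) = - (n - 2) by ring,
      abs_neg, abs_of_nonneg (by linarith : (0:ℝ) ≤ n - 2)]
    have h1 := abs_real_inner_le_norm z v
    have h2 : preg (mesh m ^ 2) ((2 - (n:ℝ)) / 2 - 1) z ≤ ‖z‖ ^ (-(n:ℝ)) := by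
      have e : ‖z‖ ^ (-(n:ℝ)) = (‖z‖ ^ 2) ^ ((2 - (n:ℝ)) / 2 - 1) := by
        rw [← Real.rpow_natCast, ← Real.rpow_mul hz'.le]; congr 1; push_cast; ring
      rw [e]
      exact Real.rpow_le_rpow_of_nonpos (by positivity) (by linarith) (by linarith)
    have e2 : ‖z‖ ^ ((1:ℝ) - n) = ‖z‖ * ‖z‖ ^ (-(n:ℝ)) := by
      rw [sub_eq_add_neg, Real.rpow_add hz', Real.rpow_one]
    rw [e2]
    calc ((n:ℝ) - 2) * |inner ℝ z v| * preg (mesh m ^ 2) ((2 - (n:ℝ)) / 2 - 1) z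
        ≤ (n - 2) * (‖z‖ * ‖v‖) * ‖z‖ ^ (-(n:ℝ)) := by
          refine mul_le_mul (mul_le_mul_of_nonneg_left h1 (by linarith)) h2
            (preg_pos hm _ z).le (mul_nonneg (by linarith) (by positivity))
      _ = _ := by ring

/-- The constant `c` in `Δ ‖z‖^(2-n) = -c δ₀`. -/
def newtC (n : ℕ) : ℝ := ∫ z : Euc n, n * (n - 2) * preg 1 (-(n + 2) / 2) z

lemma integrable_kappa : Integrable fun z : Euc n => n * ((n:ℝ) - 2) * preg 1 (-(n + 2) / 2) z := by
  have := integrable_rpow_neg_one_add_norm_sq (E := Euc n) (μ := volume) (r := n + 2) (by simp)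
  refine (this.congr (Eventually.of_forall fun z => ?_)).const_mul _
  unfold preg
  simp only [add_comm]

lemma newtC_pos (hn : 3 ≤ n) : 0 < newtC n := by
  have hn' : (3:ℝ) ≤ n := by exact_mod_cast hn
  have hp : ∀ z : Euc n, 0 < n * ((n:ℝ) - 2) * preg 1 (-(n + 2) / 2) z := fun z =>
    mul_pos (mul_pos (by linarith) (by linarith)) (preg_pos one_pos _ z)
  unfold newtC
  rw [integral_pos_iff_support_of_nonneg (fun z => (hp z).le) integrable_kappa]
  rw [show Function.support (fun z : Euc n => n * ((n:ℝ) - 2) * preg 1 (-(n + 2) / 2) z) = Set.univ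
    from Set.eq_univ_of_forall fun z => (hp z).ne']
  exact isOpen_univ.measure_pos volume Set.univ_nonempty

/-- `‖z‖^(2-n)` is a fundamental solution of the Laplacian, up to the factor `-newtC n`. -/
lemma newt_lap (hn : 3 ≤ n) {g : Euc n → ℝ} (hg : ContDiff ℝ (⊤ : ℕ∞) g)
    (hc : HasCompactSupport g) : ∫ z, newt z * lap g z = - (newtC n * g 0) := by
  have hlc : Continuous (lap g) := by
    unfold lap
    exact continuous_finsetSum _ fun i _ => (smooth_pd (smooth_pd hg i) i).continuous
  have hls : HasCompactSupport (lap g) := by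
    refine HasCompactSupport.of_support_subset_isCompact hc ?_
    intro x hx
    by_contra hx'
    apply hx
    unfold lap
    refine Finset.sum_eq_zero fun i _ => ?_
    have s1 : tsupport (dd (EuclideanSpace.single i 1) (dd (EuclideanSpace.single i 1) g)) ⊆ tsupport g :=
      (tsupport_fderiv_apply_subset ℝ _).trans (tsupport_fderiv_apply_subset ℝ _)
    exact image_eq_zero_of_notMem_tsupport fun h => hx' (s1 h)
  refine tendsto_nhds_unique (newt_limit hn hlc hls) ?_
  have key : ∀ m, ∫ z, preg (mesh m ^ 2) ((2 - n) / 2) z * lap g z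
      = - ∫ y : Euc n, (n * ((n:ℝ) - 2) * preg 1 (-(n + 2) / 2) y) * g (mesh m • y) := by
    intro m
    have hm : 0 < mesh m ^ 2 := pow_pos (mesh_pos m) 2
    have hP := contDiff_preg (n := n) hm ((2 - n) / 2)
    have e1 : ∫ z, preg (mesh m ^ 2) ((2 - n) / 2) z * lap g z
        = ∫ z, lap (preg (mesh m ^ 2) ((2 - n) / 2)) z * g z := by
      unfold lap
      simp only [Finset.mul_sum, Finset.sum_mul]
      rw [integral_finsetSum (f := fun i z => preg (mesh m ^ 2) ((2 - n) / 2) z * pd i (pd i g) z),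
        integral_finsetSum (f := fun i z => pd i (pd i (preg (mesh m ^ 2) ((2 - n) / 2))) z * g z)]
      · refine Finset.sum_congr rfl fun i _ => ?_
        simp only [pd_eq_dd]
        rw [ibp hP (smooth_dd hg _) (supp_dd hc _), ibp (smooth_dd hP _) hg hc, neg_neg]
      · intro i _
        exact integrable_mul_cs (smooth_pd (smooth_pd hP i) i).continuous.locallyIntegrable
          hg.continuous hc
      · intro i _
        exact integrable_mul_cs hP.continuous.locallyIntegrable
          (smooth_pd (smooth_pd hg i) i).continuous (supp_dd (supp_dd hc _) _)
    rw [e1]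
    simp only [lap_preg hm]
    rw [← integral_neg]
    have hs := Measure.integral_comp_inv_smul (volume : Measure (Euc n))
      (fun y : Euc n => - ((n * ((n:ℝ) - 2) * preg 1 (-(n + 2) / 2) y) * g (mesh m • y))) (mesh m)
    have hmn : 0 < mesh m ^ n := pow_pos (mesh_pos m) n
    rw [finrank_euclideanSpace_fin, abs_of_pos hmn, smul_eq_mul] at hs
    rw [← mul_right_inj' hmn.ne', ← hs, ← integral_const_mul]
    refine integral_congr_ae (Eventually.of_forall fun z => ?_)
    have hm1 := mesh_pos m
    simp only
    rw [smul_inv_smul₀ hm1.ne']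
    have e3 : preg 1 (-((n:ℝ) + 2) / 2) ((mesh m)⁻¹ • z) =
        mesh m ^ n * mesh m ^ 2 * preg (mesh m ^ 2) (-((n:ℝ) + 2) / 2) z := by
      unfold preg
      have : ‖(mesh m)⁻¹ • z‖ ^ 2 + 1 = (mesh m ^ 2)⁻¹ * (‖z‖ ^ 2 + mesh m ^ 2) := by
        rw [norm_smul, Real.norm_of_nonneg (by positivity)]
        field_simp
      rw [this, Real.mul_rpow (by positivity) (by positivity)]
      congr 1
      rw [Real.inv_rpow (by positivity), ← Real.rpow_natCast (mesh m) 2, ← Real.rpow_mul hm1.le,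
        ← Real.rpow_neg hm1.le, ← Real.rpow_natCast (mesh m) n, ← Real.rpow_add hm1]
      congr 1; push_cast; ring
    rw [e3]; ring
  simp only [key]
  refine Tendsto.neg ?_
  have : newtC n * g 0 = ∫ y : Euc n, (n * ((n:ℝ) - 2) * preg 1 (-(n + 2) / 2) y) * g 0 := by
    rw [integral_mul_const]; rfl
  rw [this]
  obtain ⟨M, hM⟩ := hg.continuous.bounded_above_of_compact_support hc
  refine tendsto_integral_of_dominated_convergence
    (fun y : Euc n => ‖n * ((n:ℝ) - 2) * preg 1 (-(n + 2) / 2) y‖ * M) (fun m => ?_)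
    (integrable_kappa.norm.mul_const M) (fun m => Eventually.of_forall fun y => ?_)
    (Eventually.of_forall fun y => ?_)
  · exact ((continuous_const.mul (contDiff_preg one_pos _).continuous).mul
      (hg.continuous.comp (continuous_const_smul _))).aestronglyMeasurable
  · rw [norm_mul]
    exact mul_le_mul_of_nonneg_left (hM _) (norm_nonneg _)
  · refine Tendsto.const_mul _ ?_
    have t : Tendsto (fun m => mesh m • y) atTop (𝓝 0) := by
      simpa using mesh_tendsto.smul_const y
    exact (hg.continuous.tendsto 0).comp t
end

/-! ### Newtonian potentials of test functions -/

section
variable {n : ℕ}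

lemma dd_mul {u v : Euc n → ℝ} (hu : Differentiable ℝ u) (hv : Differentiable ℝ v) (z : Euc n) :
    dd z (fun x => u x * v x) = fun x => dd z u x * v x + u x * dd z v x := by
  ext x
  unfold dd
  rw [fderiv_fun_mul (hu x) (hv x)]
  simp only [add_apply, smul_apply, smul_eq_mul]
  ring

lemma dd_dd_mul {u v : Euc n → ℝ} (hu : ContDiff ℝ (⊤ : ℕ∞) u) (hv : ContDiff ℝ (⊤ : ℕ∞) v)
    (z w x : Euc n) :
    dd w (dd z (fun x => u x * v x)) x = dd w (dd z u) x * v x + dd z u x * dd w v x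
      + dd w u x * dd z v x + u x * dd w (dd z v) x := by
  rw [dd_mul (smooth_diff hu) (smooth_diff hv)]
  have := dd_add (smooth_diff ((smooth_dd hu z).mul hv)) (smooth_diff (hu.mul (smooth_dd hv z))) w
  have h2 := congrFun this x
  have e1 := congrFun (dd_mul (smooth_diff (smooth_dd hu z)) (smooth_diff hv) w) x
  have e2 := congrFun (dd_mul (smooth_diff hu) (smooth_diff (smooth_dd hv z)) w) x
  refine h2.trans ?_
  rw [Pi.add_apply]
  erw [e1, e2]
  ring

lemma lap_mul {u v : Euc n → ℝ} (hu : ContDiff ℝ (⊤ : ℕ∞) u) (hv : ContDiff ℝ (⊤ : ℕ∞) v)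
    (x : Euc n) : lap (fun x => u x * v x) x =
      lap u x * v x + 2 * ∑ i, pd i u x * pd i v x + u x * lap v x := by
  unfold lap
  simp only [pd_eq_dd, dd_dd_mul hu hv, Finset.sum_add_distrib, Finset.sum_mul, Finset.mul_sum]
  simp only [two_mul, Finset.sum_add_distrib]
  ring

lemma dd_comp_aff (u : Euc n → ℝ) (a v : Euc n) (c : ℝ) :
    dd v (fun z => u (a + c • z)) = fun z => c * dd v u (a + c • z) := by
  ext z
  unfold dd
  have := fderiv_comp_smul (𝕜 := ℝ) (f := fun y => u (a + y)) (x := z) c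
  rw [this, fderiv_comp_add_left]
  simp

lemma dd_const_mul (c : ℝ) (u : Euc n → ℝ) (v : Euc n) :
    dd v (fun x => c * u x) = fun x => c * dd v u x :=
  dd_smul (u := u) c v

lemma lap_comp_aff (u : Euc n → ℝ) (a z : Euc n) (c : ℝ) :
    lap (fun z => u (a + c • z)) z = c ^ 2 * lap u (a + c • z) := by
  unfold lap
  simp only [pd_eq_dd, dd_comp_aff, dd_const_mul, Finset.mul_sum]
  refine Finset.sum_congr rfl fun i _ => ?_
  ring

lemma dd_comp_sub (u : Euc n → ℝ) (a v : Euc n) :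
    dd v (fun z => u (a - z)) = fun z => - dd v u (a - z) := by
  simpa [sub_eq_add_neg] using dd_comp_aff u a v (-1)

lemma lap_comp_sub (u : Euc n → ℝ) (a z : Euc n) :
    lap (fun z => u (a - z)) z = lap u (a - z) := by
  simpa [sub_eq_add_neg] using lap_comp_aff u a z (-1)

lemma lap_add {u v : Euc n → ℝ} (hu : ContDiff ℝ (⊤ : ℕ∞) u) (hv : ContDiff ℝ (⊤ : ℕ∞) v)
    (x : Euc n) : lap (fun x => u x + v x) x = lap u x + lap v x := by
  unfold lap
  rw [← Finset.sum_add_distrib]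
  refine Finset.sum_congr rfl fun i _ => ?_
  have h1 : pd i (fun x => u x + v x) = pd i u + pd i v := dd_add (smooth_diff hu) (smooth_diff hv) _
  rw [h1]
  exact congrFun (dd_add (smooth_diff (smooth_pd hu i)) (smooth_diff (smooth_pd hv i)) _) x

lemma lap_smul {u : Euc n → ℝ} (c : ℝ) (x : Euc n) :
    lap (fun x => c * u x) x = c * lap u x := by
  unfold lap
  rw [Finset.mul_sum]
  refine Finset.sum_congr rfl fun i _ => ?_
  simp only [pd_eq_dd, dd_const_mul]

lemma lap_sub {u v : Euc n → ℝ} (hu : ContDiff ℝ (⊤ : ℕ∞) u) (hv : ContDiff ℝ (⊤ : ℕ∞) v)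
    (x : Euc n) : lap (fun x => u x - v x) x = lap u x - lap v x := by
  have h := lap_add hu (contDiff_const.mul hv : ContDiff ℝ (⊤ : ℕ∞) fun x => (-1) * v x) x
  rw [lap_smul] at h
  rw [show lap u x - lap v x = lap u x + -1 * lap v x by ring, ← h]
  congr 1; ext y; ring

lemma lap_cv {K f : Euc n → ℝ} (hK : LocallyIntegrable K) (hf : ContDiff ℝ (⊤ : ℕ∞) f)
    (hc : HasCompactSupport f) (x : Euc n) : lap (cv K f) x = cv K (lap f) x := by
  unfold lap cv
  simp only [Finset.mul_sum]
  rw [integral_finsetSum (f := fun i z => K z * pd i (pd i f) (x - z))]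
  · refine Finset.sum_congr rfl fun i _ => ?_
    simp only [pd_eq_dd]
    have h1 := dd_cv hK hf hc (EuclideanSpace.single i 1)
    have h2 := dd_cv hK (smooth_dd hf (EuclideanSpace.single i 1)) (supp_dd hc _)
      (EuclideanSpace.single i 1)
    rw [← h1] at h2
    exact congrFun h2 x
  · intro i _
    refine integrable_mul_cs hK ((smooth_pd (smooth_pd hf i) i).continuous.comp (continuous_sub_left x)) ?_
    exact (supp_dd (supp_dd hc (EuclideanSpace.single i 1)) (EuclideanSpace.single i 1)).comp_homeomorph
      (Homeomorph.subLeft x)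

lemma supp_sub {f : Euc n → ℝ} (hc : HasCompactSupport f) (a : Euc n) :
    HasCompactSupport fun z => f (a - z) := hc.comp_homeomorph (Homeomorph.subLeft a)

lemma smooth_sub {f : Euc n → ℝ} (hf : ContDiff ℝ (⊤ : ℕ∞) f) (a : Euc n) :
    ContDiff ℝ (⊤ : ℕ∞) fun z => f (a - z) := hf.comp (contDiff_const.sub contDiff_id)

lemma pot_eq (a : ℝ) (f : Euc n → ℝ≥0∞) (x : Euc n) :
    pot a f x = ∫⁻ z, rker a z * f (x - z) := by
  unfold pot
  rw [← lintegral_sub_left_eq_self _ x]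
  simp

lemma pot_mono (a : ℝ) {f g : Euc n → ℝ≥0∞} (h : ∀ x, f x ≤ g x) (x : Euc n) :
    pot a f x ≤ pot a g x :=
  lintegral_mono fun y => mul_le_mul_right (h y) _

lemma npot_bound (f : Euc n → ℝ) (x : Euc n) :
    ENNReal.ofReal |cv newt f x| ≤ pot 2 (fun y => ENNReal.ofReal |f y|) x := by
  rw [pot_eq]
  unfold cv
  rw [← Real.norm_eq_abs, ofReal_norm]
  refine (enorm_integral_le_lintegral_enorm _).trans (lintegral_mono fun z => ?_)
  rw [enorm_mul, ← ofReal_norm, ← ofReal_norm, Real.norm_eq_abs, Real.norm_eq_abs,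
    abs_of_nonneg (show 0 ≤ newt z from Real.rpow_nonneg (norm_nonneg _) _)]
  rfl

lemma npot_dd_bound (hn : 3 ≤ n) {f : Euc n → ℝ} (hf : ContDiff ℝ (⊤ : ℕ∞) f)
    (hc : HasCompactSupport f) (v x : Euc n) :
    ENNReal.ofReal |dd v (cv newt f) x| ≤
      ENNReal.ofReal ((n - 2) * ‖v‖) * pot 1 (fun y => ENNReal.ofReal |f y|) x := by
  have hn' : (3:ℝ) ≤ n := by exact_mod_cast hn
  rw [dd_cv (newt_loc hn) hf hc, pot_eq]
  have h := newt_dd_bound hn (smooth_sub hf x) (supp_sub hc x) v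
  simp only [dd_comp_sub, mul_neg, integral_neg, abs_neg] at h
  refine (ENNReal.ofReal_le_ofReal h).trans ?_
  have h0 : 0 ≤ (n - 2) * ‖v‖ := mul_nonneg (by linarith) (norm_nonneg v)
  rw [integral_const_mul, ENNReal.ofReal_mul h0]
  refine mul_le_mul_right ?_ _
  rw [← abs_of_nonneg (integral_nonneg fun z => by positivity :
    0 ≤ ∫ z : Euc n, ‖z‖ ^ ((1:ℝ) - n) * |f (x - z)|), ← Real.norm_eq_abs, ofReal_norm]
  refine (enorm_integral_le_lintegral_enorm _).trans (lintegral_mono fun z => ?_)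
  rw [enorm_mul, ← ofReal_norm, ← ofReal_norm, Real.norm_eq_abs, Real.norm_eq_abs, abs_abs,
    abs_of_nonneg (Real.rpow_nonneg (norm_nonneg z) _)]
  rfl

lemma lap_npot (hn : 3 ≤ n) {f : Euc n → ℝ} (hf : ContDiff ℝ (⊤ : ℕ∞) f)
    (hc : HasCompactSupport f) (x : Euc n) : lap (cv newt f) x = - (newtC n * f x) := by
  rw [lap_cv (newt_loc hn) hf hc]
  have h := newt_lap hn (smooth_sub hf x) (supp_sub hc x)
  simp only [lap_comp_sub, sub_zero] at h
  exact h
end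

/-! ### Mean value property and smooth limits -/

section
variable {n : ℕ}

lemma smooth_lap {u : Euc n → ℝ} (hu : ContDiff ℝ (⊤ : ℕ∞) u) :
    ContDiff ℝ (⊤ : ℕ∞) (lap u) := by
  unfold lap
  exact ContDiff.sum fun i _ => smooth_pd (smooth_pd hu i) i

lemma tsupport_dd (u : Euc n → ℝ) (v : Euc n) : tsupport (dd v u) ⊆ tsupport u :=
  tsupport_fderiv_apply_subset ℝ v

lemma dd_eq_zero_of_ball {u : Euc n → ℝ} {r c : ℝ} (h : ∀ z, ‖z‖ < r → u z = c) (v : Euc n) :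
    ∀ z, ‖z‖ < r → dd v u z = 0 := by
  intro z hz
  have : u =ᶠ[𝓝 z] fun _ => c := by
    filter_upwards [(isOpen_lt continuous_norm continuous_const).mem_nhds
      (show z ∈ {z : Euc n | ‖z‖ < r} from hz)] with y hy using h y hy
  unfold dd
  rw [this.fderiv_eq]; simp

lemma smooth_newt_mul {h : Euc n → ℝ} (hh : ContDiff ℝ (⊤ : ℕ∞) h) {r : ℝ} (hr : 0 < r)
    (h0 : ∀ z, ‖z‖ < r → h z = 0) : ContDiff ℝ (⊤ : ℕ∞) fun z => newt z * h z := by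
  rw [contDiff_iff_contDiffAt]
  intro z
  by_cases hz : z = 0
  · have : (fun z => newt z * h z) =ᶠ[𝓝 z] fun _ => 0 := by
      filter_upwards [(isOpen_lt continuous_norm continuous_const).mem_nhds
        (show z ∈ {z : Euc n | ‖z‖ < r} by simpa [hz] using hr)] with y hy
      rw [h0 y hy, mul_zero]
    exact contDiffAt_const.congr_of_eventuallyEq this
  · refine ContDiffAt.mul ?_ hh.contDiffAt
    unfold newt
    exact (contDiffAt_norm ℝ hz).rpow_const_of_ne (norm_ne_zero_iff.2 hz)

/-- A mean value property: some test function `η` supported in the unit ball reproduces the value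
at the centre of every function harmonic in the unit ball. It is obtained by applying the
fundamental solution to `φ g` for a cutoff `φ` and integrating by parts. -/
lemma mean_value (hn : 3 ≤ n) : ∃ η : Euc n → ℝ, ContDiff ℝ (⊤ : ℕ∞) η ∧ HasCompactSupport η ∧
    (∀ z, 1 ≤ ‖z‖ → η z = 0) ∧
    ∀ g : Euc n → ℝ, ContDiff ℝ (⊤ : ℕ∞) g → (∀ z, ‖z‖ < 1 → lap g z = 0) →
      g 0 = ∫ z, η z * g z := by
  let φ : ContDiffBump (0 : Euc n) := ⟨1 / 4, 1 / 2, by norm_num, by norm_num⟩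
  have hφ : ContDiff ℝ (⊤ : ℕ∞) (φ : Euc n → ℝ) := φ.contDiff
  have hφc : HasCompactSupport (φ : Euc n → ℝ) := φ.hasCompactSupport
  have hφ1 : ∀ z, ‖z‖ < 1 / 4 → φ z = 1 := fun z hz =>
    φ.one_of_mem_closedBall (by simpa [φ] using hz.le)
  have hts : tsupport (φ : Euc n → ℝ) = Metric.closedBall 0 (1 / 2) := φ.tsupport_eq
  have hφ0 : ∀ z, 1 ≤ ‖z‖ → z ∉ tsupport (φ : Euc n → ℝ) := by
    intro z hz h
    rw [hts, mem_closedBall_zero_iff] at h; linarith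
  set e : Fin n → Euc n := fun i => EuclideanSpace.single i 1
  have hd0 : ∀ i z, ‖z‖ < 1 / 4 → dd (e i) φ z = 0 := fun i => dd_eq_zero_of_ball hφ1 _
  have hdd0 : ∀ i z, ‖z‖ < 1 / 4 → dd (e i) (dd (e i) φ) z = 0 := fun i =>
    dd_eq_zero_of_ball (hd0 i) _
  have hA : ∀ i, ContDiff ℝ (⊤ : ℕ∞) fun z => newt z * dd (e i) φ z := fun i =>
    smooth_newt_mul (smooth_dd hφ _) (by norm_num) (hd0 i)
  have hB : ∀ i, ContDiff ℝ (⊤ : ℕ∞) fun z => newt z * dd (e i) (dd (e i) φ) z := fun i =>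
    smooth_newt_mul (smooth_dd (smooth_dd hφ _) _) (by norm_num) (hdd0 i)
  have sA : ∀ i, tsupport (fun z => newt z * dd (e i) φ z) ⊆ tsupport (φ : Euc n → ℝ) := fun i =>
    (tsupport_mul_subset_right).trans (tsupport_dd _ _)
  have sB : ∀ i, tsupport (fun z => newt z * dd (e i) (dd (e i) φ) z) ⊆ tsupport (φ : Euc n → ℝ) :=
    fun i => (tsupport_mul_subset_right).trans ((tsupport_dd _ _).trans (tsupport_dd _ _))
  set η : Euc n → ℝ := fun z => (-(newtC n)⁻¹) * ∑ i, (newt z * dd (e i) (dd (e i) φ) z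
    - 2 * dd (e i) (fun z => newt z * dd (e i) φ z) z) with hη
  have hη0 : ∀ z, z ∉ tsupport (φ : Euc n → ℝ) → η z = 0 := by
    intro z hz
    simp only [hη]
    rw [Finset.sum_eq_zero, mul_zero]
    intro i _
    have h1 := image_eq_zero_of_notMem_tsupport (fun h => hz (sB i h))
    have h2 := image_eq_zero_of_notMem_tsupport (fun h => hz ((tsupport_dd _ (e i)).trans (sA i) h))
    rw [h1, h2]; ring
  have hηs : ContDiff ℝ (⊤ : ℕ∞) η :=
    contDiff_const.mul (ContDiff.sum fun i _ => (hB i).sub (contDiff_const.mul (smooth_dd (hA i) _)))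
  have hηc : HasCompactSupport η :=
    HasCompactSupport.of_support_subset_isCompact hφc fun z hz => by
      by_contra h; exact hz (hη0 z h)
  refine ⟨η, hηs, hηc, fun z hz => hη0 z (hφ0 z hz), fun g hg hl => ?_⟩
  have h := newt_lap hn (hφ.mul hg) hφc.mul_right
  have hφ00 : φ (0 : Euc n) = 1 := hφ1 0 (by simp)
  have e1 : ∀ z, newt z * lap (fun x => φ x * g x) z = ∑ i,
      (newt z * dd (e i) (dd (e i) φ) z * g z + 2 * ((newt z * dd (e i) φ z) * dd (e i) g z)) := by
    intro z
    rw [lap_mul hφ hg]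
    have : φ z * lap g z = 0 := by
      by_cases hz : ‖z‖ < 1
      · rw [hl z hz, mul_zero]
      · rw [image_eq_zero_of_notMem_tsupport (hφ0 z (not_lt.1 hz)), zero_mul]
    rw [this, add_zero, Finset.sum_add_distrib, ← Finset.sum_mul, ← Finset.mul_sum]
    unfold lap
    simp only [pd_eq_dd, mul_add, Finset.mul_sum, Finset.sum_mul]
    congr 1
    · refine Finset.sum_congr rfl fun i _ => by ring
    · refine Finset.sum_congr rfl fun i _ => by ring
  have h' : ∫ z, newt z * lap (fun x => φ x * g x) z = -(newtC n * g 0) := by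
    rw [h, hφ00, one_mul]
  simp only [e1] at h'
  have iA : ∀ i, HasCompactSupport fun z => newt z * dd (e i) φ z := fun i =>
    (supp_dd hφc (e i)).mul_left
  have iB : ∀ i, HasCompactSupport fun z => newt z * dd (e i) (dd (e i) φ) z := fun i =>
    (supp_dd (supp_dd hφc (e i)) (e i)).mul_left
  have I1 : ∀ i, Integrable fun z => newt z * dd (e i) (dd (e i) φ) z * g z := fun i =>
    ((hB i).continuous.mul hg.continuous).integrable_of_hasCompactSupport (iB i).mul_right
  have I2 : ∀ i, Integrable fun z => 2 * ((newt z * dd (e i) φ z) * dd (e i) g z) := fun i =>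
    (((hA i).continuous.mul (smooth_dd hg _).continuous).integrable_of_hasCompactSupport
      (iA i).mul_right).const_mul 2
  have I3 : ∀ i, Integrable fun z => 2 * (dd (e i) (fun z => newt z * dd (e i) φ z) z * g z) :=
    fun i => (((smooth_dd (hA i) _).continuous.mul hg.continuous).integrable_of_hasCompactSupport
      (supp_dd (iA i) _).mul_right).const_mul 2
  rw [integral_finsetSum (f := fun i z => newt z * dd (e i) (dd (e i) φ) z * g z
    + 2 * ((newt z * dd (e i) φ z) * dd (e i) g z)) _ (fun i _ => (I1 i).add (I2 i))] at h'
  have e2 : ∫ z, η z * g z = -(newtC n)⁻¹ * ∑ i, ∫ z, (newt z * dd (e i) (dd (e i) φ) z * g z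
      - 2 * (dd (e i) (fun z => newt z * dd (e i) φ z) z * g z)) := by
    rw [← integral_finsetSum (f := fun i z => newt z * dd (e i) (dd (e i) φ) z * g z
      - 2 * (dd (e i) (fun z => newt z * dd (e i) φ z) z * g z)) _ (fun i _ => (I1 i).sub (I3 i)),
      ← integral_const_mul]
    refine integral_congr_ae (Eventually.of_forall fun z => ?_)
    simp only [hη, mul_assoc, Finset.sum_mul, sub_mul]
  rw [e2]
  have e3 : ∀ i, ∫ z, (newt z * dd (e i) (dd (e i) φ) z * g z
      - 2 * (dd (e i) (fun z => newt z * dd (e i) φ z) z * g z)) = 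
      ∫ z, (newt z * dd (e i) (dd (e i) φ) z * g z
        + 2 * ((newt z * dd (e i) φ z) * dd (e i) g z)) := by
    intro i
    rw [integral_sub (I1 i) (I3 i), integral_add (I1 i) (I2 i), integral_const_mul,
      integral_const_mul]
    have := integral_mul_fderiv_eq_neg_fderiv_mul_of_integrable (μ := volume) (v := e i)
      (f := fun z => newt z * dd (e i) φ z) (g := g)
      (((smooth_dd (hA i) (e i)).continuous.mul hg.continuous).integrable_of_hasCompactSupport
        (supp_dd (iA i) _).mul_right)
      (((hA i).continuous.mul (smooth_dd hg (e i)).continuous).integrable_of_hasCompactSupport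
        (iA i).mul_right)
      (((hA i).continuous.mul hg.continuous).integrable_of_hasCompactSupport (iA i).mul_right)
      (fun z _ => smooth_diff (hA i) z) (fun z _ => smooth_diff hg z)
    change ∫ z, (newt z * dd (e i) φ z) * dd (e i) g z =
      - ∫ z, dd (e i) (fun z => newt z * dd (e i) φ z) z * g z at this
    rw [this]; ring
  simp only [e3]
  rw [h']
  have := (newtC_pos hn).ne'
  field_simp

lemma tendsto_cv {K : ℕ → Euc n → ℝ} {K0 g : Euc n → ℝ} (hK : ∀ l, Continuous (K l))
    (hlim : ∀ x, Tendsto (fun l => K l x) atTop (𝓝 (K0 x)))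
    (hb : ∀ ρ : ℝ, ∃ B : ℝ, ∀ l x, ‖x‖ ≤ ρ → |K l x| ≤ B)
    (hg : Continuous g) (hc : HasCompactSupport g) (x : Euc n) :
    Tendsto (fun l => cv (K l) g x) atTop (𝓝 (cv K0 g x)) := by
  have hgx : Continuous fun z => g (x - z) := hg.comp (continuous_sub_left x)
  have hcx : HasCompactSupport fun z => g (x - z) := supp_sub hc x
  obtain ⟨ρ, hρ⟩ := hcx.isCompact.isBounded.exists_norm_le
  obtain ⟨B, hB⟩ := hb ρ
  refine tendsto_integral_of_dominated_convergence (fun z => B * |g (x - z)|) (fun l => ?_)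
    ((hgx.abs.integrable_of_hasCompactSupport ?_).const_mul B)
    (fun l => Eventually.of_forall fun z => ?_)
    (Eventually.of_forall fun z => (hlim z).mul_const _)
  · exact ((hK l).mul hgx).aestronglyMeasurable
  · exact hcx.comp_left (g := fun t : ℝ => |t|) abs_zero
  · by_cases hz : z ∈ tsupport fun z => g (x - z)
    · rw [Real.norm_eq_abs, abs_mul]
      exact mul_le_mul_of_nonneg_right (hB l z (hρ z hz)) (abs_nonneg _)
    · have := image_eq_zero_of_notMem_tsupport hz
      simp [this]

lemma locallyIntegrable_limit {K : ℕ → Euc n → ℝ} {K0 : Euc n → ℝ} (hK : ∀ l, Continuous (K l))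
    (hlim : ∀ x, Tendsto (fun l => K l x) atTop (𝓝 (K0 x)))
    (hb : ∀ ρ : ℝ, ∃ B : ℝ, ∀ l x, ‖x‖ ≤ ρ → |K l x| ≤ B) : LocallyIntegrable K0 := by
  have hm : AEStronglyMeasurable K0 volume :=
    aestronglyMeasurable_of_tendsto_ae atTop (fun l => (hK l).aestronglyMeasurable)
      (Eventually.of_forall hlim)
  rw [locallyIntegrable_iff]
  intro k hk
  obtain ⟨ρ, hρ⟩ := hk.isBounded.exists_norm_le
  obtain ⟨B, hB⟩ := hb ρ
  refine Measure.integrableOn_of_bounded (M := B) hk.measure_lt_top.ne hm ?_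
  filter_upwards [ae_restrict_mem hk.measurableSet] with x hx
  exact le_of_tendsto (hlim x).norm (Eventually.of_forall fun l => hB l x (hρ x hx))

lemma dd_congr {u v : Euc n → ℝ} {x : Euc n} (h : u =ᶠ[𝓝 x] v) (z : Euc n) :
    dd z u =ᶠ[𝓝 x] dd z v := by
  filter_upwards [h.eventuallyEq_nhds] with y hy
  unfold dd; rw [hy.fderiv_eq]

lemma dd_add_cv {h K f : Euc n → ℝ} (hh : ContDiff ℝ (⊤ : ℕ∞) h) (hK : LocallyIntegrable K)
    (hf : ContDiff ℝ (⊤ : ℕ∞) f) (hc : HasCompactSupport f) (v : Euc n) :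
    dd v (h + cv K f) = dd v h + cv K (dd v f) := by
  rw [dd_add (smooth_diff hh) (smooth_diff (smooth_cv hK hf hc)), dd_cv hK hf hc]

/-- Locally bounded pointwise limits of smooth functions whose Laplacians stabilise on balls are
smooth, and the derivatives entering the Laplacian converge. -/
lemma weyl_limit (hn : 3 ≤ n) {w : ℕ → Euc n → ℝ} {w0 : Euc n → ℝ}
    (hw : ∀ l, ContDiff ℝ (⊤ : ℕ∞) (w l))
    (hlim : ∀ x, Tendsto (fun l => w l x) atTop (𝓝 (w0 x)))
    (hb : ∀ ρ : ℝ, ∃ B : ℝ, ∀ l x, ‖x‖ ≤ ρ → |w l x| ≤ B)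
    (hst : ∀ ρ : ℝ, ∃ L, ∀ l, L ≤ l → ∀ x, ‖x‖ < ρ → lap (w l) x = lap (w L) x) :
    ContDiff ℝ (⊤ : ℕ∞) w0 ∧
    (∀ v x, Tendsto (fun l => dd v (w l) x) atTop (𝓝 (dd v w0 x))) ∧
    ∀ x, Tendsto (fun l => lap (w l) x) atTop (𝓝 (lap w0 x)) := by
  obtain ⟨η, hη, hηc, hη1, mv⟩ := mean_value hn
  have rep : ∀ x0 : Euc n, ∃ (h K0 : Euc n → ℝ) (K : ℕ → Euc n → ℝ) (L : ℕ),
      ContDiff ℝ (⊤ : ℕ∞) h ∧ (∀ l, Continuous (K l)) ∧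
      (∀ x, Tendsto (fun l => K l x) atTop (𝓝 (K0 x))) ∧
      (∀ ρ : ℝ, ∃ B : ℝ, ∀ l x, ‖x‖ ≤ ρ → |K l x| ≤ B) ∧
      (∀ l, L ≤ l → w l =ᶠ[𝓝 x0] h + cv (K l) η) ∧ w0 =ᶠ[𝓝 x0] h + cv K0 η := by
    intro x0
    obtain ⟨L, hL⟩ := hst (‖x0‖ + 2)
    have kb : ∀ ρ : ℝ, ∃ B : ℝ, ∀ l x, ‖x‖ ≤ ρ → |w l x - w L x| ≤ B := by
      intro ρ
      obtain ⟨B, hB⟩ := hb ρ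
      refine ⟨B + B, fun l x hx => ?_⟩
      exact (abs_sub _ _).trans (add_le_add (hB l x hx) (hB L x hx))
    have klim : ∀ x, Tendsto (fun l => w l x - w L x) atTop (𝓝 (w0 x - w L x)) := fun x =>
      (hlim x).sub_const _
    have kc : ∀ l, Continuous fun x => w l x - w L x := fun l =>
      (hw l).continuous.sub (hw L).continuous
    have nb : ∀ᶠ x in 𝓝 x0, ‖x‖ < ‖x0‖ + 1 :=
      (isOpen_lt continuous_norm continuous_const).mem_nhds
        (show x0 ∈ {z : Euc n | ‖z‖ < ‖x0‖ + 1} by simp)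
    have eq1 : ∀ l, L ≤ l → ∀ x : Euc n, ‖x‖ < ‖x0‖ + 1 →
        w l x - w L x = cv (fun x => w l x - w L x) η x := by
      intro l hl x hx
      have hs : ContDiff ℝ (⊤ : ℕ∞) fun x => w l x - w L x := (hw l).sub (hw L)
      have := mv (fun z => w l (x - z) - w L (x - z)) (smooth_sub hs x) (fun z hz => by
        have h1 := lap_comp_sub (fun x => w l x - w L x) x z
        rw [h1, lap_sub (hw l) (hw L), hL l hl, sub_self]
        have := norm_sub_le x z
        linarith)
      simp only [sub_zero] at this
      rw [this]
      unfold cv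
      rw [← integral_sub_left_eq_self _ volume x]
      refine integral_congr_ae (Eventually.of_forall fun z => ?_)
      simp only [sub_sub_cancel]
      ring
    refine ⟨w L, fun x => w0 x - w L x, fun l x => w l x - w L x, L, hw L, kc, klim, kb,
      fun l hl => ?_, ?_⟩
    · filter_upwards [nb] with x hx
      rw [Pi.add_apply, ← eq1 l hl x hx]; ring
    · filter_upwards [nb] with x hx
      have t := tendsto_cv kc klim kb hη.continuous hηc x
      have : w0 x - w L x = cv (fun x => w0 x - w L x) η x := by
        refine tendsto_nhds_unique ((klim x).congr' ?_) t
        filter_upwards [eventually_ge_atTop L] with l hl using eq1 l hl x hx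
      rw [Pi.add_apply, ← this]; ring
  refine ⟨contDiff_iff_contDiffAt.2 fun x0 => ?_, fun v x0 => ?_, fun x0 => ?_⟩
  · obtain ⟨h, K0, K, L, hh, kc, klim, kb, e1, e2⟩ := rep x0
    have hK0 := locallyIntegrable_limit kc klim kb
    exact (hh.add (smooth_cv hK0 hη hηc)).contDiffAt.congr_of_eventuallyEq e2
  · obtain ⟨h, K0, K, L, hh, kc, klim, kb, e1, e2⟩ := rep x0
    have hK0 := locallyIntegrable_limit kc klim kb
    have d0 : dd v w0 x0 = dd v h x0 + cv K0 (dd v η) x0 := by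
      rw [(dd_congr e2 v).eq_of_nhds, dd_add_cv hh hK0 hη hηc]; rfl
    rw [d0]
    refine ((tendsto_cv kc klim kb (smooth_dd hη v).continuous (supp_dd hηc v) x0).const_add _).congr' ?_
    filter_upwards [eventually_ge_atTop L] with l hl
    rw [(dd_congr (e1 l hl) v).eq_of_nhds, dd_add_cv hh (kc l).locallyIntegrable hη hηc]; rfl
  · obtain ⟨h, K0, K, L, hh, kc, klim, kb, e1, e2⟩ := rep x0
    have hK0 := locallyIntegrable_limit kc klim kb
    unfold lap
    refine tendsto_finsetSum _ fun i _ => ?_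
    simp only [pd_eq_dd]
    set v := EuclideanSpace.single i (1:ℝ)
    have d0 : dd v (dd v w0) x0 = dd v (dd v h) x0 + cv K0 (dd v (dd v η)) x0 := by
      rw [(dd_congr (dd_congr e2 v) v).eq_of_nhds, dd_add_cv hh hK0 hη hηc,
        dd_add_cv (smooth_dd hh v) hK0 (smooth_dd hη v) (supp_dd hηc v)]; rfl
    rw [d0]
    refine ((tendsto_cv kc klim kb (smooth_dd (smooth_dd hη v) v).continuous
      (supp_dd (supp_dd hηc v) v) x0).const_add _).congr' ?_
    filter_upwards [eventually_ge_atTop L] with l hl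
    rw [(dd_congr (dd_congr (e1 l hl) v) v).eq_of_nhds,
      dd_add_cv hh (kc l).locallyIntegrable hη hηc,
      dd_add_cv (smooth_dd hh v) (kc l).locallyIntegrable (smooth_dd hη v) (supp_dd hηc v)]; rfl
end

/-! ### Liouville's theorem and Newtonian potentials of decaying functions -/

section
variable {n : ℕ}

/-- The `p`-th power of the weighted norm `‖⟨x⟩^s f‖_{L^p}` of a scalar function. -/
def wn (p s : ℝ) (f : Euc n → ℝ) : ℝ≥0∞ := ∫⁻ x, (wt s x * ENNReal.ofReal |f x|) ^ p

lemma lintegral_aff {R : ℝ} (hR : 0 < R) (x : Euc n) {f : Euc n → ℝ≥0∞} (hf : Measurable f) :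
    ∫⁻ z, f (x + R • z) = ENNReal.ofReal (R⁻¹ ^ n) * ∫⁻ z, f z := by
  have h := lintegral_scale (n := n) (inv_pos.2 hR) (f := fun z => f (x + z))
    (hf.comp (measurable_const_add x))
  rw [inv_inv] at h
  rw [h, lintegral_add_left_eq_self]

lemma jap_rpow_le {y : Euc n} {J τ σ : ℝ} (h : jap y ≤ J) (h1 : τ ≤ σ) (h0 : 0 ≤ σ) :
    jap y ^ τ ≤ J ^ σ :=
  (Real.rpow_le_rpow_of_exponent_le (one_le_jap y) h1).trans
    (Real.rpow_le_rpow (jap_pos y).le h h0)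

/-- Liouville's theorem in weighted spaces of negative order. Hölder's inequality in the mean value
property on a ball of radius `R` bounds `u x` by a negative power of `R`. -/
theorem liouville (hn : 3 ≤ n) {p δ : ℝ} (hp : 1 < p) (hδ : δ < 0) {u : Euc n → ℝ}
    (hu : ContDiff ℝ (⊤ : ℕ∞) u) (hl : ∀ x, lap u x = 0)
    (hw : wn p (-δ - n / p) u ≠ ⊤) (x : Euc n) : u x = 0 := by
  have hn' : (3:ℝ) ≤ n := by exact_mod_cast hn
  obtain ⟨η, hη, hηc, hη1, mv⟩ := mean_value hn
  have hpq : p.HolderConjugate (p.conjExponent) := Real.HolderConjugate.conjExponent hp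
  set q := p.conjExponent
  have hp0 : 0 < p := by linarith
  have hq0 : 0 < q := hpq.symm.pos
  set s := -δ - n / p with hs
  set σ : ℝ := max (-s) 0 with hσ
  have hσ0 : 0 ≤ σ := le_max_right _ _
  have hnp : 0 < (n:ℝ) / p := by positivity
  have hσn : σ < n / p := max_lt (by rw [hs]; linarith) hnp
  set H : ℝ≥0∞ := (∫⁻ z, ENNReal.ofReal |η z| ^ q) ^ (1 / q) with hH
  have hHt : H ≠ ⊤ := by
    refine ENNReal.rpow_ne_top_of_nonneg (by positivity) ?_
    have : Integrable fun z => |η z| ^ q :=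
      (hη.continuous.abs.rpow_const fun _ => Or.inr hq0.le).integrable_of_hasCompactSupport
        (hηc.comp_left (g := fun t : ℝ => |t| ^ q) (by simp [hq0.ne']))
    refine ne_of_eq_of_ne ?_ this.lintegral_lt_top.ne
    congr 1; ext z
    rw [ENNReal.ofReal_rpow_of_nonneg (abs_nonneg _) hq0.le]
  set F : Euc n → ℝ≥0∞ := fun y => (wt s y * ENNReal.ofReal |u y|) with hF
  have hFm : Measurable F := (measurable_wt s).mul hu.continuous.abs.measurable.ennreal_ofReal
  have key : ∀ R : ℝ, 1 ≤ R → ENNReal.ofReal |u x| ≤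
      ENNReal.ofReal ((jap x + 1) ^ σ * R ^ (-(n / p - σ))) * (H * wn p s u ^ (1 / p)) := by
    intro R hR
    have hR0 : 0 < R := by linarith
    have hsm : ContDiff ℝ (⊤ : ℕ∞) fun z => u (x + R • z) :=
      hu.comp (contDiff_const.add (contDiff_id.const_smul R))
    have h := mv _ hsm (fun z _ => by rw [lap_comp_aff, hl, mul_zero])
    simp only [smul_zero, add_zero] at h
    have h1 : ENNReal.ofReal |u x| ≤ ∫⁻ z, ENNReal.ofReal ((jap x + R) ^ σ) *
        (ENNReal.ofReal |η z| * F (x + R • z)) := by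
      rw [h, ← Real.norm_eq_abs, ofReal_norm]
      refine (enorm_integral_le_lintegral_enorm _).trans (lintegral_mono fun z => ?_)
      rw [enorm_mul, ← ofReal_norm, ← ofReal_norm, Real.norm_eq_abs, Real.norm_eq_abs]
      by_cases hz : 1 ≤ ‖z‖
      · rw [hη1 z hz]; simp
      · rw [mul_left_comm]
        refine mul_le_mul_right ?_ _
        simp only [hF]
        rw [← mul_assoc]
        refine le_mul_of_one_le_left' ?_
        rw [wt, ← ENNReal.ofReal_mul (by have := jap_pos x; positivity), ENNReal.one_le_ofReal]
        have j1 : jap (x + R • z) ≤ jap x + R := by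
          have := jap_le_add (x + R • z) x
          rw [add_sub_cancel_left, norm_smul, Real.norm_of_nonneg hR0.le] at this
          nlinarith [not_le.1 hz]
        have j2 := jap_rpow_le j1 (le_max_left (-s) 0) hσ0
        rw [Real.rpow_neg (jap_pos _).le] at j2
        have j3 : 0 < jap (x + R • z) ^ s := Real.rpow_pos_of_pos (jap_pos _) _
        rwa [inv_le_iff_one_le_mul₀ j3] at j2
    refine h1.trans ?_
    have mF : Measurable fun z => F (x + R • z) :=
      hFm.comp ((measurable_const_smul R).const_add x)
    have mη : Measurable fun z => ENNReal.ofReal |η z| := hη.continuous.abs.measurable.ennreal_ofReal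
    have mm : Measurable fun z => ENNReal.ofReal |η z| * F (x + R • z) := mη.mul mF
    rw [lintegral_const_mul _ mm]
    have h2 := ENNReal.lintegral_mul_le_Lp_mul_Lq volume hpq.symm mη.aemeasurable mF.aemeasurable
    simp only [Pi.mul_apply] at h2
    rw [lintegral_aff hR0 x (f := fun y => F y ^ p) (hFm.pow_const p)] at h2
    refine (mul_le_mul_right h2 _).trans ?_
    rw [ENNReal.mul_rpow_of_nonneg _ _ (by positivity : 0 ≤ 1 / p),
      ENNReal.ofReal_rpow_of_nonneg (by positivity) (by positivity)]
    have e : (R⁻¹ ^ n) ^ (1 / p) = R ^ (-((n:ℝ) / p)) := by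
      rw [inv_pow, Real.inv_rpow (by positivity), ← Real.rpow_natCast, ← Real.rpow_mul hR0.le,
        ← Real.rpow_neg hR0.le]
      congr 1; ring
    rw [e]
    have e2 : ENNReal.ofReal ((jap x + R) ^ σ) * (H * (ENNReal.ofReal (R ^ (-((n:ℝ) / p))) *
        (∫⁻ z, F z ^ p) ^ (1 / p))) = ENNReal.ofReal ((jap x + R) ^ σ * R ^ (-((n:ℝ) / p))) *
        (H * wn p s u ^ (1 / p)) := by
      rw [ENNReal.ofReal_mul (by have := jap_pos x; positivity)]
      unfold wn
      ring
    refine e2.le.trans (mul_le_mul_left (ENNReal.ofReal_le_ofReal ?_) _)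
    have hj := jap_pos x
    have e3 : R ^ (-((n:ℝ) / p - σ)) = R ^ σ * R ^ (-((n:ℝ) / p)) := by
      rw [← Real.rpow_add hR0]; congr 1; ring
    rw [e3, ← mul_assoc]
    refine mul_le_mul_of_nonneg_right ?_ (by positivity)
    rw [← Real.mul_rpow (by positivity) hR0.le]
    exact Real.rpow_le_rpow (by positivity) (by nlinarith) hσ0
  have lim : Tendsto (fun R : ℝ => ENNReal.ofReal ((jap x + 1) ^ σ * R ^ (-(n / p - σ))) *
      (H * wn p s u ^ (1 / p))) atTop (𝓝 0) := by
    have t := (tendsto_rpow_neg_atTop (show 0 < (n:ℝ) / p - σ by linarith)).const_mul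
      ((jap x + 1) ^ σ)
    have t2 := ENNReal.Tendsto.mul_const (b := H * wn p s u ^ (1 / p)) (ENNReal.tendsto_ofReal t)
      (Or.inr (ENNReal.mul_ne_top hHt (ENNReal.rpow_ne_top_of_nonneg (by positivity) hw)))
    simpa using t2
  have := ge_of_tendsto lim ((eventually_ge_atTop 1).mono key)
  simpa using this

lemma jap_le (x : Euc n) : jap x ≤ 1 + ‖x‖ := by
  have := jap_le_add x 0
  rw [sub_zero] at this
  simpa [jap] using this

/-- The potential of a continuous function with `∫ ⟨y⟩^(2-n) |f| < ∞` is locally bounded. -/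
lemma pot_locally_bounded (hn : 3 ≤ n) {f : Euc n → ℝ} (hf : Continuous f)
    (hH : ∫⁻ y, wt (2 - n) y * ENNReal.ofReal |f y| ≠ ⊤) (ρ : ℝ) :
    ∃ B : ℝ, 0 ≤ B ∧ ∀ x, ‖x‖ ≤ ρ → pot 2 (fun y => ENNReal.ofReal |f y|) x ≤ ENNReal.ofReal B := by
  have hn' : (3:ℝ) ≤ n := by exact_mod_cast hn
  obtain ⟨M, hM⟩ := (isCompact_closedBall (0 : Euc n) (ρ + 1)).exists_bound_of_continuousOn
    hf.continuousOn
  set g : Euc n → ℝ≥0∞ := fun z => ENNReal.ofReal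
    ((Set.Iio (1:ℝ)).indicator (fun t => t ^ ((2:ℝ) - n)) ‖z‖) with hg
  have hgm : Measurable g := ((((measurable_id.pow_const _).indicator measurableSet_Iio).comp
    measurable_norm).ennreal_ofReal)
  have hgt : ∫⁻ z, g z ≠ ⊤ := (integrable_near (n := n) (by omega) two_pos).lintegral_lt_top.ne
  set J : ℝ := 2 + |ρ|
  have hJ : 0 < J := by positivity
  set T : ℝ≥0∞ := ENNReal.ofReal M * (∫⁻ z, g z) +
    ENNReal.ofReal (J ^ ((n:ℝ) - 2)) * ∫⁻ y, wt (2 - n) y * ENNReal.ofReal |f y| with hT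
  have hTt : T ≠ ⊤ := ENNReal.add_ne_top.2 ⟨ENNReal.mul_ne_top ENNReal.ofReal_ne_top hgt,
    ENNReal.mul_ne_top ENNReal.ofReal_ne_top hH⟩
  refine ⟨T.toReal, ENNReal.toReal_nonneg, fun x hx => ?_⟩
  rw [ENNReal.ofReal_toReal hTt, hT]
  have m1 : Measurable fun y => g (x - y) := hgm.comp (measurable_const_sub x)
  have m2 : Measurable fun y : Euc n => wt (2 - n) y * ENNReal.ofReal |f y| :=
    (measurable_wt _).mul hf.abs.measurable.ennreal_ofReal
  have m3 : Measurable fun y => ENNReal.ofReal M * g (x - y) := m1.const_mul _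
  rw [← lintegral_sub_left_eq_self g x, ← lintegral_const_mul _ m1, ← lintegral_const_mul _ m2,
    ← lintegral_add_left m3]
  refine lintegral_mono fun y => ?_
  by_cases h : ‖x - y‖ < 1
  · refine le_add_right ?_
    rw [mul_comm]
    refine mul_le_mul' (ENNReal.ofReal_le_ofReal ?_) ?_
    · refine hM y (mem_closedBall_zero_iff.2 ?_)
      have := norm_sub_norm_le y x
      rw [norm_sub_rev] at this; linarith
    · simp only [hg]
      rw [Set.indicator_of_mem (show ‖x - y‖ ∈ Set.Iio (1:ℝ) from h)]; rfl
  · refine le_add_left ?_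
    rw [← mul_assoc]
    refine mul_le_mul_left ?_ _
    unfold rker wt
    rw [← ENNReal.ofReal_mul (by positivity)]
    refine ENNReal.ofReal_le_ofReal ?_
    have h1 := jap_le_add y x
    have h2 := jap_le x
    rw [norm_sub_rev] at h1
    have h3 : jap y ≤ J * ‖x - y‖ := by
      have : ρ ≤ |ρ| := le_abs_self ρ
      simp only [J]
      nlinarith [not_lt.1 h, abs_nonneg ρ]
    have h4 : jap y / J ≤ ‖x - y‖ := by rw [div_le_iff₀ hJ]; linarith
    have h5 := Real.rpow_le_rpow_of_nonpos (div_pos (jap_pos y) hJ) h4 (show (2:ℝ) - n ≤ 0 by linarith)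
    rw [Real.div_rpow (jap_pos y).le hJ.le, div_eq_mul_inv, ← Real.rpow_neg hJ.le, neg_sub] at h5
    linarith

lemma holder_finite {p δ : ℝ} (hp : 1 < p) (hδ : δ < 0) {f : Euc n → ℝ}
    (hf : Continuous f) (hw : wn p (2 - δ - n / p) f ≠ ⊤) :
    ∫⁻ y, wt (2 - n) y * ENNReal.ofReal |f y| ≠ ⊤ := by
  have hpq : p.HolderConjugate (p.conjExponent) := Real.HolderConjugate.conjExponent hp
  set q := p.conjExponent
  have hp0 : 0 < p := by linarith
  have hq0 : 0 < q := hpq.symm.pos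
  set β := 2 - δ - n / p with hβ
  have h2 := ENNReal.lintegral_mul_le_Lp_mul_Lq volume hpq.symm
    (measurable_wt (n := n) (2 - n - β)).aemeasurable
    (((measurable_wt β).mul hf.abs.measurable.ennreal_ofReal).aemeasurable)
  have e : ∀ y, wt (2 - n - β) y * (wt β y * ENNReal.ofReal |f y|)
      = wt (2 - n) y * ENNReal.ofReal |f y| := by
    intro y
    rw [← mul_assoc, wt_mul]; congr 2; ring
  simp only [Pi.mul_apply, e] at h2
  refine ne_top_of_le_ne_top (ENNReal.mul_ne_top (ENNReal.rpow_ne_top_of_nonneg (by positivity) ?_)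
    (ENNReal.rpow_ne_top_of_nonneg (by positivity) hw)) h2
  have hr : (n:ℝ) < (n - 2 + β) * q := by
    have hi := hpq.inv_add_inv_eq_one
    have : (n - 2 + β) * q = n - δ * q := by
      have : (n:ℝ) - 2 + β = n * q⁻¹ - δ := by
        rw [hβ, show q⁻¹ = 1 - p⁻¹ by linarith]; ring
      rw [this, sub_mul, mul_assoc, inv_mul_cancel₀ hq0.ne', mul_one]
    rw [this]; nlinarith
  have I := integrable_rpow_neg_one_add_norm_sq (E := Euc n) (μ := volume) (r := (n - 2 + β) * q)
    (by simpa using hr)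
  refine ne_of_eq_of_ne ?_ I.lintegral_lt_top.ne
  congr 1; ext y
  rw [wt_rpow]
  unfold wt jap
  rw [Real.sqrt_eq_rpow, ← Real.rpow_mul (by positivity)]
  congr 2; ring

/-- Solving `Δw = -c f` by the Newtonian potential for smooth `f` without compact support: `w` is the
limit of the potentials of `χ_k f` for cutoffs `χ_k`. -/
lemma newton_solve (hn : 3 ≤ n) {f : Euc n → ℝ} (hf : ContDiff ℝ (⊤ : ℕ∞) f)
    (hH : ∫⁻ y, wt (2 - n) y * ENNReal.ofReal |f y| ≠ ⊤) :
    ∃ w : Euc n → ℝ, ContDiff ℝ (⊤ : ℕ∞) w ∧ (∀ x, lap w x = - (newtC n * f x)) ∧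
      (∀ x, ENNReal.ofReal |w x| ≤ pot 2 (fun y => ENNReal.ofReal |f y|) x) ∧
      ∀ v x, ENNReal.ofReal |dd v w x| ≤
        ENNReal.ofReal ((n - 2) * ‖v‖) * pot 1 (fun y => ENNReal.ofReal |f y|) x := by
  let χ : ℕ → ContDiffBump (0 : Euc n) := fun k => ⟨k + 1, k + 2, by positivity, by linarith⟩
  have hχ1 : ∀ (k : ℕ) (x : Euc n), ‖x‖ ≤ k + 1 → χ k x = 1 := fun k x hx =>
    (χ k).one_of_mem_closedBall (by simpa [χ] using hx)
  set fk : ℕ → Euc n → ℝ := fun k x => χ k x * f x with hfk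
  have hs : ∀ k, ContDiff ℝ (⊤ : ℕ∞) (fk k) := fun k => (χ k).contDiff.mul hf
  have hc : ∀ k, HasCompactSupport (fk k) := fun k => (χ k).hasCompactSupport.mul_right
  have hle : ∀ k x, |fk k x| ≤ |f x| := by
    intro k x
    simp only [hfk]
    rw [abs_mul, abs_of_nonneg (χ k).nonneg]
    exact mul_le_of_le_one_left (abs_nonneg _) (χ k).le_one
  have hle' : ∀ k x, ENNReal.ofReal |fk k x| ≤ ENNReal.ofReal |f x| := fun k x =>
    ENNReal.ofReal_le_ofReal (hle k x)
  have hev : ∀ x, ∀ᶠ k in atTop, fk k x = f x := by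
    intro x
    obtain ⟨K, hK⟩ := exists_nat_ge ‖x‖
    filter_upwards [eventually_ge_atTop K] with k hk
    simp only [hfk]
    rw [hχ1 k x, one_mul]
    have : (K:ℝ) ≤ k := by exact_mod_cast hk
    linarith
  have hlim : ∀ x, Tendsto (fun k => cv newt (fk k) x) atTop (𝓝 (cv newt f x)) := by
    intro x
    have nm : Measurable (newt : Euc n → ℝ) := measurable_norm.pow_const _
    have I : Integrable fun z => newt z * f (x - z) := by
      refine ⟨(nm.mul (hf.continuous.comp (continuous_sub_left x)).measurable).aestronglyMeasurable, ?_⟩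
      obtain ⟨B, _, hB⟩ := pot_locally_bounded hn hf.continuous hH ‖x‖
      refine lt_of_le_of_lt ?_ ((hB x le_rfl).trans_lt ENNReal.ofReal_lt_top)
      rw [pot_eq]
      refine lintegral_mono fun z => ?_
      rw [enorm_mul, ← ofReal_norm, ← ofReal_norm, Real.norm_eq_abs, Real.norm_eq_abs,
        abs_of_nonneg (show 0 ≤ newt z from Real.rpow_nonneg (norm_nonneg _) _)]
      rfl
    refine tendsto_integral_of_dominated_convergence (fun z => ‖newt z * f (x - z)‖) (fun k => ?_)
      I.norm (fun k => Eventually.of_forall fun z => ?_) (Eventually.of_forall fun z => ?_)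
    · exact (nm.mul ((hs k).continuous.comp (continuous_sub_left x)).measurable).aestronglyMeasurable
    · rw [norm_mul (newt z) (fk k (x - z)), norm_mul (newt z) (f (x - z))]
      refine mul_le_mul_of_nonneg_left ?_ (norm_nonneg (newt z))
      exact hle k (x - z)
    · refine tendsto_const_nhds.congr' ?_
      filter_upwards [hev (x - z)] with k hk
      rw [hk]
  have hsm : ∀ k, ContDiff ℝ (⊤ : ℕ∞) (cv newt (fk k)) := fun k => smooth_cv (newt_loc hn) (hs k) (hc k)
  obtain ⟨s0, d0, l0⟩ := weyl_limit hn hsm hlim (fun ρ => by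
      obtain ⟨B, hB0, hB⟩ := pot_locally_bounded hn hf.continuous hH ρ
      refine ⟨B, fun k x hx => ?_⟩
      have := ((npot_bound (fk k) x).trans (pot_mono 2 (hle' k) x)).trans (hB x hx)
      exact (ENNReal.ofReal_le_ofReal_iff hB0).1 this) (fun ρ => by
      obtain ⟨K, hK⟩ := exists_nat_ge ρ
      refine ⟨K, fun k hk x hx => ?_⟩
      have hk' : (K:ℝ) ≤ k := by exact_mod_cast hk
      rw [lap_npot hn (hs k) (hc k), lap_npot hn (hs K) (hc K)]
      simp only [hfk]
      rw [hχ1 k x (by linarith), hχ1 K x (by linarith)])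
  refine ⟨cv newt f, s0, fun x => ?_, fun x => npot_bound f x, fun v x => ?_⟩
  · refine tendsto_nhds_unique (l0 x) (tendsto_const_nhds.congr' ?_)
    filter_upwards [hev x] with k hk
    rw [lap_npot hn (hs k) (hc k), hk]
  · refine le_of_tendsto (ENNReal.tendsto_ofReal (d0 v x).abs) (Eventually.of_forall fun k => ?_)
    exact (npot_dd_bound hn (hs k) (hc k) v x).trans (mul_le_mul_right (pot_mono 1 (hle' k) x) _)
end

/-! ### Weighted norms and symbols -/

section
variable {n : ℕ}

lemma wn_eq (p s : ℝ) (f : Euc n → ℝ) :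
    wn p s f = ∫⁻ x, ENNReal.ofReal (jap x ^ s * |f x|) ^ p := by
  unfold wn wt
  congr 1; ext x
  rw [ENNReal.ofReal_mul (Real.rpow_nonneg (jap_pos x).le _)]

lemma wn_le {p s t c : ℝ} (hp : 1 < p) (hc : 0 ≤ c) {f g : Euc n → ℝ}
    (h : ∀ x, jap x ^ s * |f x| ≤ c * (jap x ^ t * |g x|)) :
    wn p s f ≤ ENNReal.ofReal c ^ p * wn p t g := by
  rw [wn_eq, wn_eq, ← lintegral_const_mul' _ _
    (ENNReal.rpow_ne_top_of_nonneg (by linarith) ENNReal.ofReal_ne_top)]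
  refine lintegral_mono fun x => ?_
  rw [← ENNReal.mul_rpow_of_nonneg _ _ (by linarith), ← ENNReal.ofReal_mul hc]
  exact ENNReal.rpow_le_rpow (ENNReal.ofReal_le_ofReal (h x)) (by linarith)

lemma measurable_wn_integrand (p s : ℝ) {f : Euc n → ℝ} (hf : Continuous f) :
    Measurable fun x => ENNReal.ofReal (jap x ^ s * |f x|) ^ p :=
  ((continuous_jap_rpow s).mul hf.abs).measurable.ennreal_ofReal.pow_const p

lemma wn_add {p s : ℝ} (hp : 1 < p) {f g : Euc n → ℝ} (hf : Continuous f) :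
    wn p s (fun x => f x + g x) ≤ 2 ^ (p - 1) * (wn p s f + wn p s g) := by
  rw [wn_eq, wn_eq, wn_eq, ← lintegral_add_left (measurable_wn_integrand p s hf),
    ← lintegral_const_mul' _ _ (ENNReal.rpow_ne_top_of_nonneg (by linarith) (by simp))]
  refine lintegral_mono fun x => ?_
  refine le_trans ?_ (ENNReal.rpow_add_le_mul_rpow_add_rpow _ _ hp.le)
  have hj := Real.rpow_nonneg (jap_pos x).le s
  rw [← ENNReal.ofReal_add (by positivity) (by positivity), ← mul_add]
  exact ENNReal.rpow_le_rpow (ENNReal.ofReal_le_ofReal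
    (mul_le_mul_of_nonneg_left (abs_add_le _ _) hj)) (by linarith)

lemma wn_sum {p s : ℝ} (hp : 1 < p) {f : Fin n → Euc n → ℝ} (hf : ∀ i, Continuous (f i)) :
    wn p s (fun x => ∑ i, f i x) ≤ (n : ℝ≥0∞) ^ (p - 1) * ∑ i, wn p s (f i) := by
  simp only [wn_eq]
  rw [← lintegral_finsetSum _ fun i _ => measurable_wn_integrand p s (hf i),
    ← lintegral_const_mul' _ _ (ENNReal.rpow_ne_top_of_nonneg (by linarith) (by simp))]
  refine lintegral_mono fun x => ?_
  have h := ENNReal.rpow_sum_le_const_mul_sum_rpow Finset.univ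
    (fun i => ENNReal.ofReal (jap x ^ s * |f i x|)) hp.le
  rw [Finset.card_univ, Fintype.card_fin] at h
  refine le_trans ?_ h
  have hj := Real.rpow_nonneg (jap_pos x).le s
  rw [← ENNReal.ofReal_sum_of_nonneg fun i _ => by positivity, ← Finset.mul_sum]
  exact ENNReal.rpow_le_rpow (ENNReal.ofReal_le_ofReal
    (mul_le_mul_of_nonneg_left (Finset.abs_sum_le_sum_abs _ _) hj)) (by linarith)

/-- `g` is a symbol of order `m`, to second order, with constant `C`. -/
structure SymbolBd (m C : ℝ) (g : Euc n → ℝ) : Prop where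
  smooth : ContDiff ℝ (⊤ : ℕ∞) g
  zero : ∀ x, |g x| ≤ C * jap x ^ m
  one : ∀ i x, |pd i g x| ≤ C * jap x ^ (m - 1)
  two : ∀ i j x, |pd i (pd j g) x| ≤ C * jap x ^ (m - 2)

lemma jap_rpow_eq (s : ℝ) (x : Euc n) : jap x ^ s = preg 1 (s / 2) x := by
  unfold jap preg
  rw [Real.sqrt_eq_rpow, ← Real.rpow_mul (by positivity), add_comm]
  congr 1; ring

lemma jap_rpow_add (s t : ℝ) (x : Euc n) : jap x ^ s * jap x ^ t = jap x ^ (s + t) :=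
  (Real.rpow_add (jap_pos x) _ _).symm

lemma abs_inner_single_le (x : Euc n) (i : Fin n) :
    |inner ℝ x (EuclideanSpace.single i (1:ℝ))| ≤ jap x := by
  have := abs_real_inner_le_norm x (EuclideanSpace.single i (1:ℝ))
  rw [PiLp.norm_single, norm_one, mul_one] at this
  exact this.trans (norm_le_jap x)

lemma sym_jap (m : ℝ) : ∃ C, 0 ≤ C ∧ SymbolBd (n := n) m C fun x => jap x ^ m := by
  have e : (fun x : Euc n => jap x ^ m) = preg 1 (m / 2) := by ext x; exact jap_rpow_eq m x
  have hC0 : 0 ≤ |m| := abs_nonneg m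
  have hC1 : 0 ≤ |m - 2| := abs_nonneg _
  refine ⟨1 + |m| + |m| * (1 + |m - 2|), by positivity, ?_, fun x => ?_, fun i x => ?_, fun i j x => ?_⟩
  · rw [e]; exact contDiff_preg one_pos _
  · have := Real.rpow_nonneg (jap_pos x).le m
    rw [abs_of_nonneg this]
    exact le_mul_of_one_le_left this (by nlinarith [mul_nonneg hC0 hC1])
  · rw [e, pd_eq_dd, dd_preg one_pos]
    simp only []
    rw [show m / 2 - 1 = (m - 2) / 2 by ring, ← jap_rpow_eq]
    have h0 := Real.rpow_nonneg (jap_pos x).le (m - 2)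
    have h2 : jap x * jap x ^ (m - 2) = jap x ^ (m - 1) := by
      have := jap_rpow_add 1 (m - 2) x
      rw [Real.rpow_one] at this
      rw [this]; congr 1; ring
    rw [abs_mul, abs_mul, show 2 * (m / 2) = m by ring, abs_of_nonneg h0]
    calc _ ≤ |m| * jap x * jap x ^ (m - 2) := by
          gcongr; exact abs_inner_single_le x i
      _ = |m| * jap x ^ (m - 1) := by rw [mul_assoc, h2]
      _ ≤ _ := mul_le_mul_of_nonneg_right (by nlinarith [mul_nonneg hC0 hC1])
          (Real.rpow_nonneg (jap_pos x).le _)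
  · rw [e, pd_eq_dd, pd_eq_dd, dd_dd_preg one_pos, show m / 2 - 1 = (m - 2) / 2 by ring,
      show m / 2 - 2 = (m - 4) / 2 by ring, ← jap_rpow_eq, ← jap_rpow_eq]
    have h0 := Real.rpow_nonneg (jap_pos x).le (m - 2)
    have h4 := Real.rpow_nonneg (jap_pos x).le (m - 4)
    have h2 : jap x * jap x * jap x ^ (m - 4) = jap x ^ (m - 2) := by
      have := jap_rpow_add 2 (m - 4) x
      rw [Real.rpow_two] at this
      rw [← sq, this]; congr 1; ring
    have hij : |inner ℝ (EuclideanSpace.single i (1:ℝ)) (EuclideanSpace.single j (1:ℝ))| ≤ 1 := by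
      have := abs_real_inner_le_norm (EuclideanSpace.single i (1:ℝ)) (EuclideanSpace.single j (1:ℝ))
      simpa [PiLp.norm_single] using this
    rw [abs_mul, show 2 * (m / 2) = m by ring, show 2 * ((m - 2) / 2) = m - 2 by ring]
    have a1 := abs_add_le (inner ℝ (EuclideanSpace.single i (1:ℝ)) (EuclideanSpace.single j (1:ℝ)) *
      jap x ^ (m - 2)) ((m - 2) * inner ℝ x (EuclideanSpace.single j (1:ℝ)) *
      inner ℝ x (EuclideanSpace.single i (1:ℝ)) * jap x ^ (m - 4))
    rw [abs_mul, abs_mul, abs_mul, abs_mul, abs_of_nonneg h0, abs_of_nonneg h4] at a1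
    have a2 : |inner ℝ (EuclideanSpace.single i (1:ℝ)) (EuclideanSpace.single j (1:ℝ))| *
      jap x ^ (m - 2) ≤ 1 * jap x ^ (m - 2) := by gcongr
    have a3 : |m - 2| * |inner ℝ x (EuclideanSpace.single j (1:ℝ))| *
      |inner ℝ x (EuclideanSpace.single i (1:ℝ))| * jap x ^ (m - 4) ≤
      |m - 2| * jap x * jap x * jap x ^ (m - 4) := by
      have := jap_pos x
      gcongr
      · exact abs_inner_single_le x j
      · exact abs_inner_single_le x i
    have a4 : |m - 2| * jap x * jap x * jap x ^ (m - 4) = |m - 2| * jap x ^ (m - 2) := by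
      rw [← h2]; ring
    calc _ ≤ |m| * ((1 + |m - 2|) * jap x ^ (m - 2)) :=
          mul_le_mul_of_nonneg_left (by linarith) hC0
      _ ≤ _ := by rw [← mul_assoc]; exact mul_le_mul_of_nonneg_right (by linarith) h0

lemma sym_mul {m C D : ℝ} (hC : 0 ≤ C) (hD : 0 ≤ D) {g h : Euc n → ℝ} (hg : SymbolBd m C g)
    (hh : SymbolBd 0 D h) : SymbolBd m (4 * (C * D)) fun x => g x * h x := by
  have hCD := mul_nonneg hC hD
  have key : ∀ (x : Euc n) (a b s t : ℝ), |a| ≤ C * jap x ^ s → |b| ≤ D * jap x ^ t →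
      |a * b| ≤ C * D * jap x ^ (s + t) := by
    intro x a b s t ha hb
    have := mul_le_mul ha hb (abs_nonneg b) (mul_nonneg hC (Real.rpow_nonneg (jap_pos x).le _))
    rw [abs_mul, ← jap_rpow_add]
    linarith
  refine ⟨hg.smooth.mul hh.smooth, fun x => ?_, fun i x => ?_, fun i j x => ?_⟩
  · have := key x _ _ _ _ (hg.zero x) (hh.zero x)
    rw [add_zero] at this
    nlinarith [mul_nonneg hCD (Real.rpow_nonneg (jap_pos x).le m)]
  · have h1 := key x _ _ _ _ (hg.one i x) (hh.zero x)
    have h2 := key x _ _ _ _ (hg.zero x) (hh.one i x)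
    rw [show m - 1 + 0 = m - 1 by ring] at h1
    rw [show m + (0 - 1) = m - 1 by ring] at h2
    rw [pd_eq_dd] at h1 h2 ⊢
    rw [dd_mul (smooth_diff hg.smooth) (smooth_diff hh.smooth)]
    refine (abs_add_le _ _).trans ?_
    nlinarith [mul_nonneg hCD (Real.rpow_nonneg (jap_pos x).le (m - 1))]
  · have h1 := key x _ _ _ _ (hg.two i j x) (hh.zero x)
    have h2 := key x _ _ _ _ (hg.one j x) (hh.one i x)
    have h3 := key x _ _ _ _ (hg.one i x) (hh.one j x)
    have h4 := key x _ _ _ _ (hg.zero x) (hh.two i j x)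
    rw [show m - 2 + 0 = m - 2 by ring] at h1
    rw [show m - 1 + (0 - 1) = m - 2 by ring] at h2 h3
    rw [show m + (0 - 2) = m - 2 by ring] at h4
    simp only [pd_eq_dd] at h1 h2 h3 h4 ⊢
    rw [dd_dd_mul hg.smooth hh.smooth]
    refine (abs_add_le _ _).trans ?_
    have := abs_add_le (dd (EuclideanSpace.single i 1) (dd (EuclideanSpace.single j 1) g) x * h x)
      (dd (EuclideanSpace.single j 1) g x * dd (EuclideanSpace.single i 1) h x)
    have h5 := abs_add_le (dd (EuclideanSpace.single i 1) (dd (EuclideanSpace.single j 1) g) x * h x +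
      dd (EuclideanSpace.single j 1) g x * dd (EuclideanSpace.single i 1) h x)
      (dd (EuclideanSpace.single i 1) g x * dd (EuclideanSpace.single j 1) h x)
    linarith

/-- Dilated cut-off functions are symbols of order `0`, uniformly in the scale, because their
derivatives live where `⟨x⟩` is at most comparable to the scale. -/
lemma sym_cut : ∃ (χ : ℕ → Euc n → ℝ) (D : ℝ), 0 ≤ D ∧ (∀ k, SymbolBd 0 D (χ k)) ∧
    (∀ k, HasCompactSupport (χ k)) ∧ ∀ (k : ℕ) x, ‖x‖ < k + 1 → χ k x = 1 := by
  let φ : ContDiffBump (0 : Euc n) := ⟨1, 2, one_pos, one_lt_two⟩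
  have hφ : ContDiff ℝ (⊤ : ℕ∞) (φ : Euc n → ℝ) := φ.contDiff
  have hts : tsupport (φ : Euc n → ℝ) = Metric.closedBall 0 2 := φ.tsupport_eq
  have hcs : HasCompactSupport (φ : Euc n → ℝ) := φ.hasCompactSupport
  set e : Fin n → Euc n := fun i => EuclideanSpace.single i 1
  have b1 : ∀ i, ∃ M, ∀ x, ‖dd (e i) φ x‖ ≤ M := fun i =>
    (supp_dd hcs _).exists_bound_of_continuous (smooth_dd hφ _).continuous
  have b2 : ∀ i j, ∃ M, ∀ x, ‖dd (e i) (dd (e j) φ) x‖ ≤ M := fun i j =>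
    (supp_dd (supp_dd hcs _) _).exists_bound_of_continuous (smooth_dd (smooth_dd hφ _) _).continuous
  choose M1 hM1 using b1
  choose M2 hM2 using b2
  have p1 : ∀ i, 0 ≤ M1 i := fun i => (norm_nonneg _).trans (hM1 i 0)
  have p2 : ∀ i j, 0 ≤ M2 i j := fun i j => (norm_nonneg _).trans (hM2 i j 0)
  set M := 1 + ∑ i, M1 i + ∑ i, ∑ j, M2 i j with hM
  have q1 : 0 ≤ ∑ i, M1 i := Finset.sum_nonneg fun i _ => p1 i
  have q2 : 0 ≤ ∑ i, ∑ j, M2 i j := Finset.sum_nonneg fun i _ => Finset.sum_nonneg fun j _ => p2 i j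
  have r1 : ∀ i, M1 i ≤ M := fun i => by
    have := Finset.single_le_sum (fun i _ => p1 i) (Finset.mem_univ i)
    linarith
  have r2 : ∀ i j, M2 i j ≤ M := fun i j => by
    have h1 := Finset.single_le_sum (fun j _ => p2 i j) (Finset.mem_univ j)
    have h2 := Finset.single_le_sum (f := fun i => ∑ j, M2 i j)
      (fun i _ => Finset.sum_nonneg fun j _ => p2 i j) (Finset.mem_univ i)
    linarith
  have hM0 : 0 ≤ M := by linarith
  have hM1' : 1 ≤ M := by linarith
  have far : ∀ (k : ℕ) (x : Euc n), ((k:ℝ) + 1)⁻¹ • x ∈ tsupport (φ : Euc n → ℝ) →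
      ((k:ℝ) + 1)⁻¹ ≤ 3 * (jap x)⁻¹ := by
    intro k x hx
    have hk : 0 < (k:ℝ) + 1 := by positivity
    rw [hts, mem_closedBall_zero_iff, norm_smul, Real.norm_of_nonneg (by positivity),
      inv_mul_le_iff₀ hk] at hx
    have h1 := jap_le x
    have h2 : jap x ≤ 3 * (k + 1) := by
      have : (0:ℝ) ≤ k := k.cast_nonneg
      linarith
    rw [inv_le_iff_one_le_mul₀ hk, mul_right_comm, ← div_eq_mul_inv, one_le_div (jap_pos x)]
    exact h2
  have ee : ∀ (c : ℝ), (fun x : Euc n => φ (c • x)) = fun x => φ (0 + c • x) := by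
    intro c; simp
  have d1 : ∀ (c : ℝ) v x, dd v (fun x : Euc n => φ (c • x)) x = c * dd v φ (c • x) := by
    intro c v x
    rw [ee, dd_comp_aff]; simp only [zero_add]
  have d2 : ∀ (c : ℝ) v w x, dd w (dd v (fun x : Euc n => φ (c • x))) x
      = c * (c * dd w (dd v φ) (c • x)) := by
    intro c v w x
    rw [ee, dd_comp_aff, dd_const_mul, dd_comp_aff]; simp only [zero_add]
  refine ⟨fun k x => φ (((k:ℝ) + 1)⁻¹ • x), 9 * M, by positivity, fun k => ⟨?_, fun x => ?_,
    fun i x => ?_, fun i j x => ?_⟩, fun k => ?_, fun k x hx => ?_⟩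
  · exact hφ.comp (contDiff_id.const_smul _)
  · rw [Real.rpow_zero, mul_one, abs_of_nonneg φ.nonneg]
    exact φ.le_one.trans (by linarith)
  · rw [pd_eq_dd, d1, show (0:ℝ) - 1 = -1 by ring, Real.rpow_neg_one]
    have hj := jap_pos x
    by_cases hx : ((k:ℝ) + 1)⁻¹ • x ∈ tsupport (φ : Euc n → ℝ)
    · rw [abs_mul, abs_of_nonneg (by positivity)]
      calc _ ≤ (3 * (jap x)⁻¹) * M := mul_le_mul (far k x hx) ((hM1 i _).trans (r1 i))
            (abs_nonneg _) (by positivity)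
        _ ≤ 9 * M * (jap x)⁻¹ := by
            have : 0 ≤ M * (jap x)⁻¹ := by positivity
            linarith
    · rw [image_eq_zero_of_notMem_tsupport (fun h => hx (tsupport_dd _ _ h)), mul_zero, abs_zero]
      positivity
  · rw [pd_eq_dd, pd_eq_dd, d2, show (0:ℝ) - 2 = -2 by ring, Real.rpow_neg (jap_pos x).le,
      Real.rpow_two]
    have hj := jap_pos x
    by_cases hx : ((k:ℝ) + 1)⁻¹ • x ∈ tsupport (φ : Euc n → ℝ)
    · rw [abs_mul, abs_mul, abs_of_nonneg (by positivity)]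
      calc _ ≤ (3 * (jap x)⁻¹) * ((3 * (jap x)⁻¹) * M) :=
            mul_le_mul (far k x hx) (mul_le_mul (far k x hx) ((hM2 i j _).trans (r2 i j))
              (abs_nonneg _) (by positivity)) (by positivity) (by positivity)
        _ = 9 * M * (jap x ^ 2)⁻¹ := by rw [← inv_pow]; ring
    · rw [image_eq_zero_of_notMem_tsupport
        (fun h => hx (tsupport_dd _ _ (tsupport_dd _ _ h))), mul_zero, mul_zero, abs_zero]
      positivity
  · exact hcs.comp_homeomorph (Homeomorph.smulOfNeZero ((k:ℝ) + 1)⁻¹ (by positivity))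
  · refine φ.one_of_mem_closedBall (mem_closedBall_zero_iff.2 ?_)
    have hk : 0 < (k:ℝ) + 1 := by positivity
    rw [norm_smul, Real.norm_of_nonneg (by positivity), inv_mul_le_iff₀ hk]
    simpa [φ] using hx.le
end

/-! ### The scalar Poisson equation -/

section
variable {n : ℕ}

lemma wn_zero (p : ℝ) (f : Euc n → ℝ) : wn p 0 f = ∫⁻ x, ENNReal.ofReal |f x| ^ p := by
  rw [wn_eq]; simp

lemma cz_lintegral (hn : 0 < n) {p : ℝ} (hp : 1 < p) : ∃ C : ℝ≥0∞, C ≠ ⊤ ∧ ∀ u : Euc n → ℝ,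
    ContDiff ℝ (⊤ : ℕ∞) u → HasCompactSupport u → ∀ a b,
      wn p 0 (pd a (pd b u)) ≤ C * wn p 0 (lap u) := by
  obtain ⟨C, hC, h⟩ := calderon_zygmund hn hp
  have conv : ∀ f : Euc n → ℝ, Continuous f → HasCompactSupport f →
      wn p 0 f = ENNReal.ofReal (∫ x, |f x| ^ p) := by
    intro f hf hc
    have : Integrable fun z => |f z| ^ p :=
      (hf.abs.rpow_const fun _ => Or.inr (by linarith)).integrable_of_hasCompactSupport
        (hc.comp_left (g := fun t : ℝ => |t| ^ p) (by simp [show p ≠ 0 by linarith]))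
    rw [ofReal_integral_eq_lintegral_ofReal this (Eventually.of_forall fun x => by positivity),
      wn_zero]
    congr 1; ext z
    rw [ENNReal.ofReal_rpow_of_nonneg (abs_nonneg _) (by linarith)]
  refine ⟨ENNReal.ofReal C, ENNReal.ofReal_ne_top, fun u hu hc a b => ?_⟩
  have hlc : HasCompactSupport (lap u) := by
    refine HasCompactSupport.intro hc.isCompact fun x hx => ?_
    unfold lap
    refine Finset.sum_eq_zero fun i _ => ?_
    rw [pd_eq_dd, pd_eq_dd]
    exact image_eq_zero_of_notMem_tsupport fun h => hx (tsupport_dd _ _ (tsupport_dd _ _ h))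
  rw [conv _ (smooth_pd (smooth_pd hu b) a).continuous, conv _ (smooth_lap hu).continuous hlc,
    ← ENNReal.ofReal_mul hC.le]
  · exact ENNReal.ofReal_le_ofReal (h u hu hc a b)
  · rw [pd_eq_dd, pd_eq_dd]
    exact supp_dd (supp_dd hc _) _

/-- The quantity `⟨x⟩^b |Δw| + ⟨x⟩^(b-1) |∂w| + ⟨x⟩^(b-2) |w|`, controlling the Laplacian of `w`
times a symbol of order `b`. -/
def lowOrd (b : ℝ) (w : Euc n → ℝ) (x : Euc n) : ℝ :=
  jap x ^ b * |lap w x| + jap x ^ (b - 1) * ∑ i, |pd i w x| + jap x ^ (b - 2) * |w x|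

lemma lowOrd_parts (b : ℝ) (w : Euc n → ℝ) (x : Euc n) :
    0 ≤ jap x ^ b * |lap w x| ∧ 0 ≤ jap x ^ (b - 1) * ∑ i, |pd i w x| ∧
      0 ≤ jap x ^ (b - 2) * |w x| := by
  have h1 := Real.rpow_nonneg (jap_pos x).le b
  have h2 := Real.rpow_nonneg (jap_pos x).le (b - 1)
  have h3 := Real.rpow_nonneg (jap_pos x).le (b - 2)
  exact ⟨by positivity, mul_nonneg h2 (Finset.sum_nonneg fun i _ => abs_nonneg _), by positivity⟩

lemma lowOrd_nonneg (b : ℝ) (w : Euc n → ℝ) (x : Euc n) : 0 ≤ lowOrd b w x := by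
  obtain ⟨h1, h2, h3⟩ := lowOrd_parts b w x
  unfold lowOrd; linarith

lemma wn_lowOrd {p : ℝ} (hp : 1 < p) (b : ℝ) {w : Euc n → ℝ} (hw : ContDiff ℝ (⊤ : ℕ∞) w) :
    wn p 0 (lowOrd b w) ≤ 2 ^ (p - 1) * (2 ^ (p - 1) * (wn p b (lap w) +
      (n : ℝ≥0∞) ^ (p - 1) * ∑ i, wn p (b - 1) (pd i w)) + wn p (b - 2) w) := by
  have cl : Continuous (lap w) := (smooth_lap hw).continuous
  have c1 : Continuous fun x => jap x ^ b * |lap w x| := (continuous_jap_rpow b).mul cl.abs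
  have c2 : Continuous fun x => jap x ^ (b - 1) * ∑ i, |pd i w x| :=
    (continuous_jap_rpow _).mul (continuous_finsetSum _ fun i _ => (smooth_pd hw i).continuous.abs)
  have e : ∀ (s : ℝ) (f : Euc n → ℝ), wn p 0 (fun x => jap x ^ s * |f x|) = wn p s f := by
    intro s f
    rw [wn_zero, wn_eq]
    congr 1; ext x
    rw [abs_of_nonneg (mul_nonneg (Real.rpow_nonneg (jap_pos x).le s) (abs_nonneg _))]
  have h1 := wn_add (s := 0) hp (c1.add c2) (g := fun x => jap x ^ (b - 2) * |w x|)
  have h2 := wn_add (s := 0) hp c1 (g := fun x => jap x ^ (b - 1) * ∑ i, |pd i w x|)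
  have h3 : wn p 0 (fun x => jap x ^ (b - 1) * ∑ i, |pd i w x|) ≤
      (n : ℝ≥0∞) ^ (p - 1) * ∑ i, wn p (b - 1) (pd i w) := by
    have := wn_sum (s := 0) hp (f := fun i x => jap x ^ (b - 1) * |pd i w x|)
      fun i => (continuous_jap_rpow _).mul (smooth_pd hw i).continuous.abs
    simp only [e] at this
    simpa only [Finset.mul_sum] using this
  rw [e] at h1 h2
  refine h1.trans ?_
  gcongr
  refine h2.trans ?_
  gcongr

lemma lap_symbol_mul {b C : ℝ} (hC : 0 ≤ C) {ψ w : Euc n → ℝ} (hψ : SymbolBd b C ψ)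
    (hw : ContDiff ℝ (⊤ : ℕ∞) w) (x : Euc n) :
    |lap (fun x => ψ x * w x) x| ≤ (n + 2) * C * lowOrd b w x := by
  obtain ⟨h1, h2, h3⟩ := lowOrd_parts b w x
  rw [lap_mul hψ.smooth hw]
  have a1 : |lap ψ x| ≤ n * (C * jap x ^ (b - 2)) := by
    unfold lap
    refine (Finset.abs_sum_le_sum_abs _ _).trans ?_
    refine (Finset.sum_le_sum fun i _ => hψ.two i i x).trans ?_
    simp
  have a2 : |∑ i, pd i ψ x * pd i w x| ≤ C * (jap x ^ (b - 1) * ∑ i, |pd i w x|) := by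
    refine (Finset.abs_sum_le_sum_abs _ _).trans ?_
    rw [← mul_assoc, Finset.mul_sum]
    refine Finset.sum_le_sum fun i _ => ?_
    rw [abs_mul]
    exact mul_le_mul_of_nonneg_right (hψ.one i x) (abs_nonneg _)
  have a3 := mul_le_mul_of_nonneg_right a1 (abs_nonneg (w x))
  have a4 := mul_le_mul_of_nonneg_right (hψ.zero x) (abs_nonneg (lap w x))
  have b1 := abs_add_le (lap ψ x * w x + 2 * ∑ i, pd i ψ x * pd i w x) (ψ x * lap w x)
  have b2 := abs_add_le (lap ψ x * w x) (2 * ∑ i, pd i ψ x * pd i w x)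
  rw [abs_mul] at b1
  rw [abs_mul, abs_mul, abs_two] at b2
  have hn0 : (0:ℝ) ≤ n := n.cast_nonneg
  calc _ ≤ n * (C * (jap x ^ (b - 2) * |w x|)) + 2 * (C * (jap x ^ (b - 1) * ∑ i, |pd i w x|))
        + C * (jap x ^ b * |lap w x|) := by linarith
    _ ≤ _ := by
      have k1 := mul_nonneg hC h1
      have k2 := mul_nonneg hC h2
      have k3 := mul_nonneg hC h3
      have k4 := mul_nonneg hn0 k1
      have k5 := mul_nonneg hn0 k2
      unfold lowOrd
      nlinarith

lemma symbol_mul_second {b C : ℝ} (hC : 0 ≤ C) {ψ w : Euc n → ℝ} (hψ : SymbolBd b C ψ)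
    (hw : ContDiff ℝ (⊤ : ℕ∞) w) (i j : Fin n) (x : Euc n) :
    |ψ x * pd i (pd j w) x| ≤ |pd i (pd j fun x => ψ x * w x) x| + 3 * C * lowOrd b w x := by
  obtain ⟨h1, h2, h3⟩ := lowOrd_parts b w x
  have d := dd_dd_mul hψ.smooth hw (EuclideanSpace.single j 1) (EuclideanSpace.single i 1) x
  simp only [← pd_eq_dd] at d
  have e : ψ x * pd i (pd j w) x = pd i (pd j fun x => ψ x * w x) x - (pd i (pd j ψ) x * w x
      + pd j ψ x * pd i w x + pd i ψ x * pd j w x) := by rw [d]; ring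
  rw [e]
  have hs : ∀ i, |pd i w x| ≤ ∑ i, |pd i w x| := fun i =>
    Finset.single_le_sum (f := fun i => |pd i w x|) (fun i _ => abs_nonneg _) (Finset.mem_univ i)
  have hj := Real.rpow_nonneg (jap_pos x).le (b - 1)
  have hm : ∀ i j, |pd i ψ x * pd j w x| ≤ C * (jap x ^ (b - 1) * ∑ i, |pd i w x|) := by
    intro i j
    rw [abs_mul, ← mul_assoc]
    exact mul_le_mul (hψ.one i x) (hs j) (abs_nonneg _) (mul_nonneg hC hj)
  have a1 := mul_le_mul_of_nonneg_right (hψ.two i j x) (abs_nonneg (w x))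
  rw [← abs_mul] at a1
  have b1 := abs_sub (pd i (pd j fun x => ψ x * w x) x) (pd i (pd j ψ) x * w x
      + pd j ψ x * pd i w x + pd i ψ x * pd j w x)
  have b2 := abs_add_le (pd i (pd j ψ) x * w x + pd j ψ x * pd i w x) (pd i ψ x * pd j w x)
  have b3 := abs_add_le (pd i (pd j ψ) x * w x) (pd j ψ x * pd i w x)
  have m1 := hm i j
  have m2 := hm j i
  have k1 := mul_nonneg hC h1
  have k2 := mul_nonneg hC h2
  have k3 := mul_nonneg hC h3
  unfold lowOrd
  nlinarith

/-- Weighted Calderón–Zygmund estimate: the unweighted one is applied to `⟨x⟩^b χ(x/R) w`, uniformly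
in `R`, and the limit `R → ∞` is taken by Fatou's lemma. -/
lemma second_deriv (hn : 0 < n) {p : ℝ} (hp : 1 < p) (b : ℝ) : ∃ C : ℝ≥0∞, C ≠ ⊤ ∧
    ∀ w : Euc n → ℝ, ContDiff ℝ (⊤ : ℕ∞) w → ∀ i j,
      wn p b (pd i (pd j w)) ≤ C * wn p 0 (lowOrd b w) := by
  obtain ⟨A, hA, cz⟩ := cz_lintegral hn hp
  obtain ⟨C, hC, hψ⟩ := sym_jap (n := n) b
  obtain ⟨χ, D, hD, hχ, hχc, hχ1⟩ := sym_cut (n := n)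
  set E := 4 * (C * D)
  have hE : 0 ≤ E := by positivity
  have hn0 : (0:ℝ) ≤ n := n.cast_nonneg
  have hp0 : 0 ≤ p := by linarith
  have t2 : (2:ℝ≥0∞) ^ (p - 1) ≠ ⊤ := ENNReal.rpow_ne_top_of_nonneg (by linarith) (by simp)
  refine ⟨2 ^ (p - 1) * (A * ENNReal.ofReal ((n + 2) * E) ^ p + ENNReal.ofReal (3 * C) ^ p),
    ENNReal.mul_ne_top t2 (ENNReal.add_ne_top.2 ⟨ENNReal.mul_ne_top hA
      (ENNReal.rpow_ne_top_of_nonneg hp0 ENNReal.ofReal_ne_top),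
      ENNReal.rpow_ne_top_of_nonneg hp0 ENNReal.ofReal_ne_top⟩), fun w hw i j => ?_⟩
  set ψ : Euc n → ℝ := fun x => jap x ^ b
  set U : ℕ → Euc n → ℝ := fun k x => (ψ x * χ k x) * w x with hU
  have sU : ∀ k, ContDiff ℝ (⊤ : ℕ∞) (U k) := fun k =>
    (hψ.smooth.mul (hχ k).smooth).mul hw
  have cU : ∀ k, HasCompactSupport (U k) := fun k => ((hχc k).mul_left).mul_right
  have bd : ∀ k, wn p 0 (pd i (pd j (U k))) ≤
      A * ENNReal.ofReal ((n + 2) * E) ^ p * wn p 0 (lowOrd b w) := by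
    intro k
    refine (cz _ (sU k) (cU k) i j).trans ?_
    rw [mul_assoc]
    gcongr
    refine wn_le hp (by positivity) fun x => ?_
    rw [Real.rpow_zero, one_mul, one_mul, abs_of_nonneg (lowOrd_nonneg b w x)]
    exact lap_symbol_mul hE (sym_mul hC hD hψ (hχ k)) hw x
  have sl : ContDiff ℝ (⊤ : ℕ∞) fun x => ψ x * w x := hψ.smooth.mul hw
  have lim : ∀ x, ∀ᶠ k in atTop, pd i (pd j (U k)) x = pd i (pd j fun x => ψ x * w x) x := by
    intro x
    obtain ⟨K, hK⟩ := exists_nat_ge ‖x‖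
    filter_upwards [eventually_ge_atTop K] with k hk
    have hk' : (K:ℝ) ≤ k := by exact_mod_cast hk
    have op : IsOpen {y : Euc n | ‖y‖ < k + 1} := isOpen_lt continuous_norm continuous_const
    have q0 : ∀ y : Euc n, ‖y‖ < k + 1 → U k =ᶠ[𝓝 y] fun x => ψ x * w x := by
      intro y hy
      filter_upwards [op.mem_nhds hy] with z hz
      simp only [hU]
      rw [hχ1 k z hz, mul_one]
    have q1 : pd j (U k) =ᶠ[𝓝 x] pd j fun x => ψ x * w x := by
      filter_upwards [op.mem_nhds (show ‖x‖ < k + 1 by linarith)] with z hz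
      unfold pd
      rw [(q0 z hz).fderiv_eq]
    unfold pd at q1 ⊢
    rw [q1.fderiv_eq]
  have fat : wn p 0 (pd i (pd j fun x => ψ x * w x)) ≤
      A * ENNReal.ofReal ((n + 2) * E) ^ p * wn p 0 (lowOrd b w) := by
    have hm : ∀ k, Measurable fun x => ENNReal.ofReal |pd i (pd j (U k)) x| ^ p := fun k =>
      (smooth_pd (smooth_pd (sU k) j) i).continuous.abs.measurable.ennreal_ofReal.pow_const p
    have f1 := lintegral_liminf_le (μ := volume) (u := atTop) hm
    have f2 : ∀ x, liminf (fun k => ENNReal.ofReal |pd i (pd j (U k)) x| ^ p) atTop =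
        ENNReal.ofReal |pd i (pd j fun x => ψ x * w x) x| ^ p := by
      intro x
      refine Tendsto.liminf_eq (tendsto_const_nhds.congr' ?_)
      filter_upwards [lim x] with k hk
      rw [hk]
    simp only [f2, ← wn_zero] at f1
    refine f1.trans ?_
    refine (liminf_le_liminf (Eventually.of_forall bd)).trans ?_
    simp
  have split := wn_add (s := 0) hp (smooth_pd (smooth_pd sl j) i).continuous.abs
    (g := fun x => 3 * C * lowOrd b w x)
  have low : wn p 0 (fun x => 3 * C * lowOrd b w x) ≤ ENNReal.ofReal (3 * C) ^ p *
      wn p 0 (lowOrd b w) := wn_le hp (by positivity) fun x => by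
    rw [abs_mul, abs_of_nonneg (show 0 ≤ 3 * C by positivity)]
    simp
  have e1 : wn p b (pd i (pd j w)) ≤
      wn p 0 (fun x => |pd i (pd j fun x => ψ x * w x) x| + 3 * C * lowOrd b w x) := by
    have := wn_le (p := p) (s := b) (t := 0) (c := 1) hp zero_le_one (f := pd i (pd j w))
      (g := fun x => |pd i (pd j fun x => ψ x * w x) x| + 3 * C * lowOrd b w x) fun x => by
        have h := symbol_mul_second hC hψ hw i j x
        rw [abs_mul, abs_of_nonneg (Real.rpow_nonneg (jap_pos x).le b)] at h
        rw [one_mul, Real.rpow_zero, one_mul]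
        exact h.trans (le_abs_self _)
    simpa using this
  have e2 : wn p 0 (fun x => |pd i (pd j fun x => ψ x * w x) x|) =
      wn p 0 (pd i (pd j fun x => ψ x * w x)) := by
    simp only [wn_zero, abs_abs]
  refine e1.trans (split.trans ?_)
  rw [e2, mul_assoc, add_mul]
  gcongr

/-- The scalar Poisson equation in weighted spaces, with estimates up to second order. -/
theorem poisson (hn : 3 ≤ n) {p δ : ℝ} (hp : 1 < p) (hδ1 : 2 - (n : ℝ) < δ) (hδ2 : δ < 0) :
    ∃ C : ℝ≥0∞, C ≠ ⊤ ∧ ∀ f : Euc n → ℝ, ContDiff ℝ (⊤ : ℕ∞) f → wn p (2 - δ - n / p) f ≠ ⊤ →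
      ∃ w : Euc n → ℝ, ContDiff ℝ (⊤ : ℕ∞) w ∧ (∀ x, lap w x = f x) ∧
        wn p (-δ - n / p) w ≤ C * wn p (2 - δ - n / p) f ∧
        (∀ i, wn p (1 - δ - n / p) (pd i w) ≤ C * wn p (2 - δ - n / p) f) ∧
        ∀ i j, wn p (2 - δ - n / p) (pd i (pd j w)) ≤ C * wn p (2 - δ - n / p) f := by
  have hn' : (3:ℝ) ≤ n := by exact_mod_cast hn
  set b := 2 - δ - n / p with hb
  obtain ⟨A, hA, pA⟩ := pot_weighted (n := n) (by omega) (p := p) (a := 2) (α := δ + n / p) (β := b)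
    hp two_pos (by linarith) (by rw [hb]; linarith) (by rw [hb]; ring)
  obtain ⟨B, hB, pB⟩ := pot_weighted (n := n) (by omega) (p := p) (a := 1) (α := δ + n / p - 1)
    (β := b) hp one_pos (by linarith) (by rw [hb]; linarith) (by rw [hb]; ring)
  obtain ⟨K, hK, sd⟩ := second_deriv (n := n) (by omega) hp b
  have hp0 : 0 ≤ p := by linarith
  have hc := newtC_pos hn
  set c : ℝ := (newtC n)⁻¹
  have hc0 : 0 < c := inv_pos.2 hc
  set T2 : ℝ≥0∞ := 2 ^ (p - 1)
  set Tn : ℝ≥0∞ := (n : ℝ≥0∞) ^ (p - 1)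
  have hT2 : T2 ≠ ⊤ := ENNReal.rpow_ne_top_of_nonneg (by linarith) (by simp)
  have hTn : Tn ≠ ⊤ := ENNReal.rpow_ne_top_of_nonneg (by linarith) (by simp)
  set c0 : ℝ≥0∞ := ENNReal.ofReal c ^ p * ENNReal.ofReal A
  set c1 : ℝ≥0∞ := ENNReal.ofReal (c * (n - 2)) ^ p * ENNReal.ofReal B
  have hc0t : c0 ≠ ⊤ := ENNReal.mul_ne_top
    (ENNReal.rpow_ne_top_of_nonneg hp0 ENNReal.ofReal_ne_top) ENNReal.ofReal_ne_top
  have hc1t : c1 ≠ ⊤ := ENNReal.mul_ne_top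
    (ENNReal.rpow_ne_top_of_nonneg hp0 ENNReal.ofReal_ne_top) ENNReal.ofReal_ne_top
  set c2 : ℝ≥0∞ := K * (T2 * (T2 * (1 + Tn * (n * c1)) + c0))
  have hc2t : c2 ≠ ⊤ := by
    refine ENNReal.mul_ne_top hK (ENNReal.mul_ne_top hT2 (ENNReal.add_ne_top.2 ⟨?_, hc0t⟩))
    refine ENNReal.mul_ne_top hT2 (ENNReal.add_ne_top.2 ⟨by simp, ?_⟩)
    exact ENNReal.mul_ne_top hTn (ENNReal.mul_ne_top (by simp) hc1t)
  refine ⟨c0 + c1 + c2, by simp [hc0t, hc1t, hc2t], fun f hf hfin => ?_⟩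
  obtain ⟨w, hw, hl, h0, h1⟩ := newton_solve hn hf (holder_finite hp hδ2 hf.continuous hfin)
  have hfm : Measurable fun y => ENNReal.ofReal |f y| := hf.continuous.abs.measurable.ennreal_ofReal
  have hW : ContDiff ℝ (⊤ : ℕ∞) fun x => (-c) * w x := contDiff_const.mul hw
  have hlap : ∀ x, lap (fun x => (-c) * w x) x = f x := by
    intro x
    rw [lap_smul, hl]
    simp only [c]
    field_simp
  have e0 : wn p (-δ - n / p) (fun x => (-c) * w x) ≤ c0 * wn p b f := by
    rw [mul_assoc]
    refine le_trans ?_ (mul_le_mul_right (pA _ hfm) _)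
    rw [← lintegral_const_mul' _ _ (ENNReal.rpow_ne_top_of_nonneg hp0 ENNReal.ofReal_ne_top)]
    refine lintegral_mono fun x => ?_
    rw [← ENNReal.mul_rpow_of_nonneg _ _ hp0]
    refine ENNReal.rpow_le_rpow ?_ hp0
    rw [mul_left_comm, show -(δ + n / p) = -δ - n / p by ring]
    refine mul_le_mul_right ?_ _
    rw [abs_mul, abs_neg, abs_of_pos hc0, ENNReal.ofReal_mul hc0.le]
    exact mul_le_mul_right (h0 x) _
  have e1 : ∀ i, wn p (1 - δ - n / p) (pd i fun x => (-c) * w x) ≤ c1 * wn p b f := by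
    intro i
    rw [mul_assoc]
    refine le_trans ?_ (mul_le_mul_right (pB _ hfm) _)
    rw [← lintegral_const_mul' _ _ (ENNReal.rpow_ne_top_of_nonneg hp0 ENNReal.ofReal_ne_top)]
    refine lintegral_mono fun x => ?_
    rw [← ENNReal.mul_rpow_of_nonneg _ _ hp0]
    refine ENNReal.rpow_le_rpow ?_ hp0
    rw [mul_left_comm, show -(δ + n / p - 1) = 1 - δ - n / p by ring]
    refine mul_le_mul_right ?_ _
    have := h1 (EuclideanSpace.single i 1) x
    rw [PiLp.norm_single, norm_one, mul_one] at this
    rw [pd_eq_dd, dd_const_mul, abs_mul, abs_neg, abs_of_pos hc0, ENNReal.ofReal_mul hc0.le,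
      ENNReal.ofReal_mul hc0.le, mul_assoc]
    exact mul_le_mul_right this _
  refine ⟨fun x => (-c) * w x, hW, hlap, e0.trans ?_, fun i => (e1 i).trans ?_, fun i j => ?_⟩
  · gcongr; exact le_add_right (le_add_right le_rfl)
  · gcongr; exact le_add_right (le_add_left le_rfl)
  · refine (sd _ hW i j).trans ?_
    refine le_trans (mul_le_mul_right (wn_lowOrd hp b hW) K) ?_
    have hle : lap (fun x => (-c) * w x) = f := funext hlap
    rw [hle, show b - 1 = 1 - δ - n / p by rw [hb]; ring, show b - 2 = -δ - n / p by rw [hb]; ring]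
    calc _ ≤ K * (T2 * (T2 * (wn p b f + Tn * (∑ i : Fin n, c1 * wn p b f)) + c0 * wn p b f)) := by
          gcongr with i
          exact e1 i
      _ = c2 * wn p b f := by
          rw [Finset.sum_const, Finset.card_univ, Fintype.card_fin, nsmul_eq_mul]
          simp only [c2]
          ring
      _ ≤ _ := by gcongr; exact le_add_left le_rfl
end

/-! ### From vector fields to components -/

section
variable {n : ℕ}

lemma pd_add {u v : Euc n → ℝ} (hu : ContDiff ℝ (⊤ : ℕ∞) u) (hv : ContDiff ℝ (⊤ : ℕ∞) v)
    (i : Fin n) : pd i (fun x => u x + v x) = fun x => pd i u x + pd i v x := by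
  simp only [pd_eq_dd]
  exact dd_add (smooth_diff hu) (smooth_diff hv) _

lemma pd_const_mul (c : ℝ) (u : Euc n → ℝ) (i : Fin n) :
    pd i (fun x => c * u x) = fun x => c * pd i u x := by
  simp only [pd_eq_dd, dd_const_mul]

lemma pd_sub {u v : Euc n → ℝ} (hu : ContDiff ℝ (⊤ : ℕ∞) u) (hv : ContDiff ℝ (⊤ : ℕ∞) v)
    (i : Fin n) : pd i (fun x => u x - v x) = fun x => pd i u x - pd i v x := by
  ext x
  unfold pd
  rw [fderiv_fun_sub (smooth_diff hu x) (smooth_diff hv x)]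
  rfl

lemma pd_sum {ι : Type*} (s : Finset ι) {u : ι → Euc n → ℝ} (hu : ∀ k, ContDiff ℝ (⊤ : ℕ∞) (u k))
    (i : Fin n) : pd i (fun x => ∑ k ∈ s, u k x) = fun x => ∑ k ∈ s, pd i (u k) x := by
  ext x
  unfold pd
  rw [fderiv_fun_sum fun k _ => smooth_diff (hu k) x]
  simp

lemma pd_comm {u : Euc n → ℝ} (hu : ContDiff ℝ (⊤ : ℕ∞) u) (i j : Fin n) :
    pd i (pd j u) = pd j (pd i u) := by
  simp only [pd_eq_dd]
  exact dd_comm hu _ _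

lemma smooth_sum {ι : Type*} (s : Finset ι) {u : ι → Euc n → ℝ}
    (hu : ∀ k, ContDiff ℝ (⊤ : ℕ∞) (u k)) : ContDiff ℝ (⊤ : ℕ∞) fun x => ∑ k ∈ s, u k x :=
  ContDiff.sum fun k _ => hu k

lemma lap_sum {ι : Type*} (s : Finset ι) {u : ι → Euc n → ℝ}
    (hu : ∀ k, ContDiff ℝ (⊤ : ℕ∞) (u k)) (x : Euc n) :
    lap (fun x => ∑ k ∈ s, u k x) x = ∑ k ∈ s, lap (u k) x := by
  unfold lap
  rw [Finset.sum_comm]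
  refine Finset.sum_congr rfl fun i _ => ?_
  rw [pd_sum s hu, pd_sum s fun k => smooth_pd (hu k) i]

lemma lap_pd {u : Euc n → ℝ} (hu : ContDiff ℝ (⊤ : ℕ∞) u) (i : Fin n) :
    lap (pd i u) = pd i (lap u) := by
  have : lap u = fun x => ∑ k, pd k (pd k u) x := rfl
  rw [this, pd_sum _ fun k => smooth_pd (smooth_pd hu k) k]
  ext x
  unfold lap
  refine Finset.sum_congr rfl fun k _ => ?_
  rw [pd_comm hu k i, pd_comm (smooth_pd hu k) k i]

lemma comp_smooth {W : Euc n → Euc n} (hW : ContDiff ℝ (⊤ : ℕ∞) W) (k : Fin n) :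
    ContDiff ℝ (⊤ : ℕ∞) fun x => W x k := contDiff_euclidean.1 hW k

/-- `(Δ_L W)_j = -(ΔW_j + (1 - 2/n) ∂_j div W)`. -/
lemma vecLap_apply {W : Euc n → Euc n} (hW : ContDiff ℝ (⊤ : ℕ∞) W) (x : Euc n) (j : Fin n) :
    vecLap W x j = -(lap (fun y => W y j) x + (1 - 2 / (n:ℝ)) * pd j (divg W) x) := by
  have hc := comp_smooth hW
  have hd : ContDiff ℝ (⊤ : ℕ∞) (divg W) := smooth_sum _ fun i => smooth_pd (hc i) i
  have e : ∀ i, pd i (fun y => confKill W y i j) x = pd i (pd i fun y => W y j) x +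
      pd j (pd i fun y => W y i) x - (2 / (n:ℝ)) * (if i = j then 1 else 0) * pd i (divg W) x := by
    intro i
    have : (fun y => confKill W y i j) = fun y => (pd i (fun y => W y j) y + pd j (fun y => W y i) y)
        - (2 / (n : ℝ)) * (if i = j then 1 else 0) * divg W y := by
      ext y
      simp only [confKill, Matrix.of_apply]
      ring
    rw [this, pd_sub ((smooth_pd (hc j) i).add (smooth_pd (hc i) j)) (contDiff_const.mul hd),
      pd_add (smooth_pd (hc j) i) (smooth_pd (hc i) j), pd_const_mul, pd_comm (hc i) i j]
  have e2 : pd j (divg W) x = ∑ i, pd j (pd i fun y => W y i) x := by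
    have : divg W = fun x => ∑ i, pd i (fun y => W y i) x := rfl
    rw [this, pd_sum _ fun i => smooth_pd (hc i) i]
  have e3 : ∑ i, (2 / (n:ℝ)) * (if i = j then 1 else 0) * pd i (divg W) x
      = (2 / (n:ℝ)) * pd j (divg W) x := by
    simp
  change -∑ i, pd i (fun y => confKill W y i j) x = _
  simp only [e]
  rw [Finset.sum_sub_distrib, Finset.sum_add_distrib, ← e2, e3]
  unfold lap
  ring

lemma norm_le_sum_abs (v : Euc n) : ‖v‖ ≤ ∑ k, |v k| := by
  have h := (EuclideanSpace.basisFun (Fin n) ℝ).sum_repr v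
  conv_lhs => rw [← h]
  refine (norm_sum_le _ _).trans (Finset.sum_le_sum fun k _ => ?_)
  simp [norm_smul]

lemma opNorm_le_sum {G : Type*} [NormedAddCommGroup G] [NormedSpace ℝ G] (L : Euc n →L[ℝ] G) :
    ‖L‖ ≤ ∑ i, ‖L (EuclideanSpace.single i 1)‖ := by
  refine L.opNorm_le_bound (Finset.sum_nonneg fun i _ => norm_nonneg _) fun v => ?_
  have h := (EuclideanSpace.basisFun (Fin n) ℝ).sum_repr v
  conv_lhs => rw [← h, map_sum]
  refine (norm_sum_le _ _).trans ?_
  rw [Finset.sum_mul]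
  refine Finset.sum_le_sum fun k _ => ?_
  have := PiLp.norm_apply_le v k
  simp only [EuclideanSpace.basisFun_apply, EuclideanSpace.basisFun_repr, map_smul, norm_smul]
  rw [mul_comm]
  gcongr

lemma fderiv_comp_apply {W : Euc n → Euc n} {x : Euc n} (hW : DifferentiableAt ℝ W x) (k i : Fin n) :
    (fderiv ℝ W x (EuclideanSpace.single i 1)) k = pd i (fun y => W y k) x := by
  have h := (EuclideanSpace.proj (𝕜 := ℝ) k).hasFDerivAt.comp x hW.hasFDerivAt
  have e : fderiv ℝ (fun y => W y k) x = _ := h.fderiv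
  unfold pd
  rw [e]; rfl

lemma fderiv_fderiv_apply {W : Euc n → Euc n} (hW : ContDiff ℝ (⊤ : ℕ∞) W) (x : Euc n)
    (i j k : Fin n) : (fderiv ℝ (fderiv ℝ W) x (EuclideanSpace.single i 1)
      (EuclideanSpace.single j 1)) k = pd i (pd j fun y => W y k) x := by
  have hd : DifferentiableAt ℝ (fderiv ℝ W) x :=
    (hW.fderiv_right (m := (⊤ : ℕ∞)) (by simp)).differentiable (by simp) x
  have h := (ContinuousLinearMap.apply ℝ (Euc n) (EuclideanSpace.single j (1:ℝ))).hasFDerivAt.comp x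
    hd.hasFDerivAt
  have e : (pd j fun y => W y k) = fun y => (fderiv ℝ W y (EuclideanSpace.single j 1)) k := by
    ext y
    rw [fderiv_comp_apply (smooth_diff hW y)]
  have h' : HasFDerivAt (fun y => fderiv ℝ W y (EuclideanSpace.single j 1)) _ x := h
  rw [e, ← fderiv_comp_apply h'.differentiableAt, h'.fderiv]
  rfl

lemma norm_iterated_one_le {W : Euc n → Euc n} (hW : ContDiff ℝ (⊤ : ℕ∞) W) (x : Euc n) :
    ‖iteratedFDeriv ℝ 1 W x‖ ≤ ∑ i, ∑ k, |pd i (fun y => W y k) x| := by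
  rw [norm_iteratedFDeriv_one]
  refine (opNorm_le_sum _).trans (Finset.sum_le_sum fun i _ => ?_)
  refine (norm_le_sum_abs _).trans (Finset.sum_le_sum fun k _ => ?_)
  rw [fderiv_comp_apply (smooth_diff hW x)]

lemma norm_iterated_two_le {W : Euc n → Euc n} (hW : ContDiff ℝ (⊤ : ℕ∞) W) (x : Euc n) :
    ‖iteratedFDeriv ℝ 2 W x‖ ≤ ∑ i, ∑ j, ∑ k, |pd i (pd j fun y => W y k) x| := by
  rw [← norm_iteratedFDeriv_fderiv, norm_iteratedFDeriv_one]
  refine (opNorm_le_sum _).trans (Finset.sum_le_sum fun i _ => ?_)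
  refine (opNorm_le_sum _).trans (Finset.sum_le_sum fun j _ => ?_)
  refine (norm_le_sum_abs _).trans (Finset.sum_le_sum fun k _ => ?_)
  rw [fderiv_fderiv_apply hW]

/-- The `p`-th power of the weighted norm of a nonnegative function, as it occurs in the weighted
Lebesgue and Sobolev norms. -/
lemma wn_eq_of_nonneg {p : ℝ} (hp : 1 < p) (s : ℝ) {N : Euc n → ℝ} (hN : ∀ x, 0 ≤ N x) :
    ∫⁻ x, ENNReal.ofReal ((jap x ^ s * N x) ^ p) = wn p s N := by
  rw [wn_eq]
  congr 1; ext x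
  rw [abs_of_nonneg (hN x), ENNReal.ofReal_rpow_of_nonneg
    (mul_nonneg (Real.rpow_nonneg (jap_pos x).le _) (hN x)) (by linarith)]

lemma wn_mono {p s : ℝ} (hp : 1 < p) {f g : Euc n → ℝ} (h : ∀ x, |f x| ≤ |g x|) :
    wn p s f ≤ wn p s g := by
  have := wn_le (p := p) (s := s) (t := s) (f := f) (g := g) hp zero_le_one fun x => by
    rw [one_mul]; exact mul_le_mul_of_nonneg_left (h x) (Real.rpow_nonneg (jap_pos x).le _)
  simpa using this

lemma wn_sum_le {p s : ℝ} (hp : 1 < p) {f : Fin n → Euc n → ℝ} (hf : ∀ i, Continuous (f i))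
    {M : ℝ≥0∞} (hM : ∀ i, wn p s (f i) ≤ M) :
    wn p s (fun x => ∑ i, f i x) ≤ (n : ℝ≥0∞) ^ (p - 1) * n * M := by
  refine (wn_sum hp hf).trans ?_
  rw [mul_assoc]
  gcongr
  refine (Finset.sum_le_sum fun i _ => hM i).trans ?_
  simp

lemma wn_abs (p s : ℝ) (f : Euc n → ℝ) : wn p s (fun x => |f x|) = wn p s f := by
  simp only [wn_eq, abs_abs]

lemma sobW_two {p δ : ℝ} (hp : 1 < p) (W : Euc n → Euc n) :
    SobW 2 p δ W = wn p (-δ - n / p) (fun x => ‖W x‖) ^ (1 / p)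
      + wn p (1 - δ - n / p) (fun x => ‖iteratedFDeriv ℝ 1 W x‖) ^ (1 / p)
      + wn p (2 - δ - n / p) (fun x => ‖iteratedFDeriv ℝ 2 W x‖) ^ (1 / p) := by
  unfold SobW
  rw [Finset.sum_range_succ, Finset.sum_range_succ, Finset.sum_range_one]
  rw [wn_eq_of_nonneg hp _ fun x => norm_nonneg _, wn_eq_of_nonneg hp _ fun x => norm_nonneg _,
    wn_eq_of_nonneg hp _ fun x => norm_nonneg _]
  simp only [norm_iteratedFDeriv_zero]
  push_cast
  congr 3
  · congr 1; ring
  · congr 1; ring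
  · ring

lemma lpW_eq {p δ : ℝ} (hp : 1 < p) (F : Euc n → Euc n) :
    LpW p (δ - 2) F = wn p (2 - δ - n / p) (fun x => ‖F x‖) ^ (1 / p) := by
  unfold LpW
  rw [wn_eq_of_nonneg hp _ fun x => norm_nonneg _]
  congr 2; ring

lemma sobW_le {p δ : ℝ} (hp : 1 < p) {W : Euc n → Euc n} (hW : ContDiff ℝ (⊤ : ℕ∞) W) {M Q : ℝ≥0∞}
    (hQ : Q = (n : ℝ≥0∞) ^ (p - 1) * n)
    (h0 : ∀ k, wn p (-δ - n / p) (fun x => W x k) ≤ M)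
    (h1 : ∀ i k, wn p (1 - δ - n / p) (pd i fun x => W x k) ≤ M)
    (h2 : ∀ i j k, wn p (2 - δ - n / p) (pd i (pd j fun x => W x k)) ≤ M) :
    SobW 2 p δ W ≤ (Q ^ (1 / p) + (Q * Q) ^ (1 / p) + (Q * (Q * Q)) ^ (1 / p)) * M ^ (1 / p) := by
  have hc := comp_smooth hW
  have hp' : 0 ≤ 1 / p := by positivity
  have c1 : ∀ i k, Continuous fun x => |pd i (fun x => W x k) x| := fun i k =>
    (smooth_pd (hc k) i).continuous.abs
  have c2 : ∀ i j k, Continuous fun x => |pd i (pd j fun x => W x k) x| := fun i j k =>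
    (smooth_pd (smooth_pd (hc k) j) i).continuous.abs
  rw [sobW_two hp, add_mul, add_mul, ← ENNReal.mul_rpow_of_nonneg _ _ hp',
    ← ENNReal.mul_rpow_of_nonneg _ _ hp', ← ENNReal.mul_rpow_of_nonneg _ _ hp', mul_assoc Q Q M,
    mul_assoc Q (Q * Q) M, mul_assoc Q Q M]
  gcongr
  · refine (wn_mono hp (g := fun x => ∑ k, |W x k|) fun x => ?_).trans ?_
    · rw [abs_norm]; exact (norm_le_sum_abs _).trans (le_abs_self _)
    · rw [hQ]
      exact wn_sum_le hp (fun k => (hc k).continuous.abs) fun k => (wn_abs _ _ _).trans_le (h0 k)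
  · refine (wn_mono hp (g := fun x => ∑ i, ∑ k, |pd i (fun y => W y k) x|) fun x => ?_).trans ?_
    · rw [abs_norm]; exact (norm_iterated_one_le hW _).trans (le_abs_self _)
    · rw [hQ]
      exact wn_sum_le hp (fun i => continuous_finsetSum _ fun k _ => c1 i k) fun i =>
        wn_sum_le hp (c1 i) fun k => (wn_abs _ _ _).trans_le (h1 i k)
  · refine (wn_mono hp (g := fun x => ∑ i, ∑ j, ∑ k, |pd i (pd j fun y => W y k) x|)
      fun x => ?_).trans ?_
    · rw [abs_norm]; exact (norm_iterated_two_le hW _).trans (le_abs_self _)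
    · rw [hQ]
      exact wn_sum_le hp (fun i => continuous_finsetSum _ fun j _ => continuous_finsetSum _
        fun k _ => c2 i j k) fun i => wn_sum_le hp (fun j => continuous_finsetSum _
        fun k _ => c2 i j k) fun j => wn_sum_le hp (c2 i j) fun k =>
          (wn_abs _ _ _).trans_le (h2 i j k)

lemma wn_lincomb {p s : ℝ} (hp : 1 < p) {f g : Euc n → ℝ} (hf : Continuous f) (a : ℝ) {M N : ℝ≥0∞}
    (h1 : wn p s f ≤ M) (h2 : wn p s g ≤ N) :
    wn p s (fun x => (-1) * f x + a * g x) ≤ 2 ^ (p - 1) * (M + ENNReal.ofReal |a| ^ p * N) := by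
  refine (wn_add hp (continuous_const.mul hf)).trans ?_
  gcongr
  · refine le_trans (wn_mono hp fun x => ?_) h1
    simp
  · refine le_trans (wn_le (t := s) (c := |a|) hp (abs_nonneg a) (g := g) fun x => ?_)
      (mul_le_mul_right h2 _)
    rw [abs_mul, mul_left_comm]

lemma wn_sub_ne_top {p s : ℝ} (hp : 1 < p) {f g : Euc n → ℝ} (hf : Continuous f)
    (h1 : wn p s f ≠ ⊤) (h2 : wn p s g ≠ ⊤) : wn p s (fun x => f x - g x) ≠ ⊤ := by
  have h := wn_add (s := s) hp hf (g := fun x => -g x)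
  have e : wn p s (fun x => -g x) = wn p s g := by simp only [wn_eq, abs_neg]
  rw [e] at h
  simp only [← sub_eq_add_neg] at h
  exact ne_top_of_le_ne_top (ENNReal.mul_ne_top (ENNReal.rpow_ne_top_of_nonneg (by linarith)
    (by simp)) (ENNReal.add_ne_top.2 ⟨h1, h2⟩)) h

/-- Injectivity: taking the divergence shows that `div u` is harmonic, hence zero by Liouville, so
that each component is harmonic. -/
lemma injective_aux (hn : 3 ≤ n) {p δ μ : ℝ} (hp : 1 < p) (hδ : δ < 0) (hμ : 0 < μ)
    {u : Fin n → Euc n → ℝ} (hu : ∀ j, ContDiff ℝ (⊤ : ℕ∞) (u j))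
    (h0 : ∀ j, wn p (-δ - n / p) (u j) ≠ ⊤)
    (h1 : wn p (1 - δ - n / p) (fun x => ∑ i, pd i (u i) x) ≠ ⊤)
    (heq : ∀ j x, lap (u j) x + μ * pd j (fun x => ∑ i, pd i (u i) x) x = 0) (j : Fin n) (x : Euc n) :
    u j x = 0 := by
  set d : Euc n → ℝ := fun x => ∑ i, pd i (u i) x with hd
  have sd : ContDiff ℝ (⊤ : ℕ∞) d := smooth_sum _ fun i => smooth_pd (hu i) i
  have hl : ∀ j, lap (u j) = fun x => (-μ) * pd j d x := by
    intro j; ext x; linarith [heq j x]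
  have ld : ∀ x, lap d x = 0 := by
    intro x
    have e1 : lap d x = ∑ i, pd i (lap (u i)) x := by
      rw [hd, lap_sum _ fun i => smooth_pd (hu i) i]
      simp only [lap_pd (hu _)]
    have e2 : ∑ i, pd i (lap (u i)) x = (-μ) * lap d x := by
      simp only [hl, pd_const_mul]
      rw [← Finset.mul_sum]; rfl
    have : (1 + μ) * lap d x = 0 := by linarith
    exact (mul_eq_zero.1 this).resolve_left (by linarith)
  have d0 : d = fun _ => 0 := by
    ext x
    refine liouville hn hp (show δ - 1 < 0 by linarith) sd ld ?_ x
    rwa [show -(δ - 1) - (n:ℝ) / p = 1 - δ - n / p by ring]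
  refine liouville hn hp hδ (hu j) (fun x => ?_) (h0 j) x
  rw [hl, d0]
  simp [pd]
end

/-! ### Existence and uniqueness -/

section
variable {n : ℕ}

/-- Existence with estimates. With `ΔΦ = F`, `ρ = div Φ` and `ΔX = ∇ρ`, Liouville's theorem gives
`div X = ρ`, and `W = -Φ + κ X` solves the equation once `κ (1 + μ) = μ`, `μ = 1 - 2/n`. -/
lemma exists_solution (hn : 3 ≤ n) {p δ : ℝ} (hp : 1 < p) (hδ1 : 2 - (n : ℝ) < δ) (hδ2 : δ < 0) :
    ∃ K : ℝ≥0∞, K ≠ ⊤ ∧ ∀ F : Euc n → Euc n, ContDiff ℝ (⊤ : ℕ∞) F →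
      wn p (2 - δ - n / p) (fun x => ‖F x‖) ≠ ⊤ →
      ∃ W : Euc n → Euc n, ContDiff ℝ (⊤ : ℕ∞) W ∧ (∀ x, vecLap W x = F x) ∧
        (∀ k, wn p (-δ - n / p) (fun x => W x k) ≤ K * wn p (2 - δ - n / p) fun x => ‖F x‖) ∧
        (∀ i k, wn p (1 - δ - n / p) (pd i fun x => W x k) ≤
          K * wn p (2 - δ - n / p) fun x => ‖F x‖) ∧
        ∀ i j k, wn p (2 - δ - n / p) (pd i (pd j fun x => W x k)) ≤
          K * wn p (2 - δ - n / p) fun x => ‖F x‖ := by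
  have hn' : (3:ℝ) ≤ n := by exact_mod_cast hn
  obtain ⟨C, hC, ps⟩ := poisson hn hp hδ1 hδ2
  set μ : ℝ := 1 - 2 / (n:ℝ) with hμ
  have hμ0 : 0 < μ := by
    rw [hμ, sub_pos, div_lt_one (by linarith)]; linarith
  set κ : ℝ := μ / (1 + μ) with hκ
  have hκμ : κ * (1 + μ) = μ := div_mul_cancel₀ _ (by linarith)
  set Q : ℝ≥0∞ := (n : ℝ≥0∞) ^ (p - 1) * n with hQ
  have hQt : Q ≠ ⊤ := ENNReal.mul_ne_top (ENNReal.rpow_ne_top_of_nonneg (by linarith) (by simp))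
    (by simp)
  refine ⟨2 ^ (p - 1) * (C + ENNReal.ofReal |κ| ^ p * (C * (Q * C))), ?_, fun F hF hfin => ?_⟩
  · exact ENNReal.mul_ne_top (ENNReal.rpow_ne_top_of_nonneg (by linarith) (by simp))
      (ENNReal.add_ne_top.2 ⟨hC, ENNReal.mul_ne_top (ENNReal.rpow_ne_top_of_nonneg (by linarith)
        ENNReal.ofReal_ne_top) (ENNReal.mul_ne_top hC (ENNReal.mul_ne_top hQt hC))⟩)
  set N := wn p (2 - δ - n / p) (fun x => ‖F x‖) with hN
  have hFc := comp_smooth hF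
  have hFN : ∀ j, wn p (2 - δ - n / p) (fun x => F x j) ≤ N := fun j =>
    wn_mono hp fun x => by rw [abs_norm]; exact PiLp.norm_apply_le (F x) j
  choose Φ hΦ lΦ Φ0 Φ1 Φ2 using fun j => ps (fun x => F x j) (hFc j)
    (ne_top_of_le_ne_top hfin (hFN j))
  have Φ0' : ∀ j, wn p (-δ - n / p) (Φ j) ≤ C * N := fun j =>
    (Φ0 j).trans (mul_le_mul_right (hFN j) _)
  have Φ1' : ∀ j i, wn p (1 - δ - n / p) (pd i (Φ j)) ≤ C * N := fun j i =>
    (Φ1 j i).trans (mul_le_mul_right (hFN j) _)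
  have Φ2' : ∀ j i k, wn p (2 - δ - n / p) (pd i (pd k (Φ j))) ≤ C * N := fun j i k =>
    (Φ2 j i k).trans (mul_le_mul_right (hFN j) _)
  set ρ : Euc n → ℝ := fun x => ∑ i, pd i (Φ i) x with hρ
  have sρ : ContDiff ℝ (⊤ : ℕ∞) ρ := smooth_sum _ fun i => smooth_pd (hΦ i) i
  have hCN : C * N ≠ ⊤ := ENNReal.mul_ne_top hC hfin
  have ρN : wn p (1 - δ - n / p) ρ ≤ Q * (C * N) :=
    wn_sum_le hp (fun i => (smooth_pd (hΦ i) i).continuous) fun i => Φ1' i i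
  have dρ : ∀ j, wn p (2 - δ - n / p) (pd j ρ) ≤ Q * (C * N) := by
    intro j
    rw [hρ, pd_sum _ fun i => smooth_pd (hΦ i) i]
    exact wn_sum_le hp (fun i => (smooth_pd (smooth_pd (hΦ i) i) j).continuous) fun i => Φ2' i j i
  have hQCN : Q * (C * N) ≠ ⊤ := ENNReal.mul_ne_top hQt hCN
  choose X hX lX X0 X1 X2 using fun j => ps (pd j ρ) (smooth_pd sρ j)
    (ne_top_of_le_ne_top hQCN (dρ j))
  have X0' : ∀ j, wn p (-δ - n / p) (X j) ≤ C * (Q * (C * N)) := fun j =>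
    (X0 j).trans (mul_le_mul_right (dρ j) _)
  have X1' : ∀ j i, wn p (1 - δ - n / p) (pd i (X j)) ≤ C * (Q * (C * N)) := fun j i =>
    (X1 j i).trans (mul_le_mul_right (dρ j) _)
  have X2' : ∀ j i k, wn p (2 - δ - n / p) (pd i (pd k (X j))) ≤ C * (Q * (C * N)) := fun j i k =>
    (X2 j i k).trans (mul_le_mul_right (dρ j) _)
  have sdX : ContDiff ℝ (⊤ : ℕ∞) fun x => ∑ i, pd i (X i) x := smooth_sum _ fun i => smooth_pd (hX i) i
  have divX : ∀ x, ∑ i, pd i (X i) x = ρ x := by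
    intro x
    refine sub_eq_zero.1 (liouville hn hp (show δ - 1 < 0 by linarith) (sdX.sub sρ)
      (fun y => ?_) ?_ x)
    · rw [lap_sub sdX sρ, lap_sum _ fun i => smooth_pd (hX i) i]
      have : ∀ i, lap (X i) = pd i ρ := fun i => funext (lX i)
      simp only [lap_pd (hX _), this]
      exact sub_self _
    · rw [show -(δ - 1) - (n:ℝ) / p = 1 - δ - n / p by ring]
      refine wn_sub_ne_top hp sdX.continuous ?_ (ne_top_of_le_ne_top hQCN ρN)
      exact ne_top_of_le_ne_top (ENNReal.mul_ne_top hQt (ENNReal.mul_ne_top hC hQCN))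
        (wn_sum_le hp (fun i => (smooth_pd (hX i) i).continuous) fun i => X1' i i)
  set W : Euc n → Euc n := fun x => WithLp.toLp 2 fun j => (-1) * Φ j x + κ * X j x with hW
  have hWj : ∀ j, (fun x => W x j) = fun x => (-1) * Φ j x + κ * X j x := fun j => rfl
  have s1 : ∀ j, ContDiff ℝ (⊤ : ℕ∞) fun x => (-1) * Φ j x := fun j => contDiff_const.mul (hΦ j)
  have s2 : ∀ j, ContDiff ℝ (⊤ : ℕ∞) fun x => κ * X j x := fun j => contDiff_const.mul (hX j)
  have sW : ContDiff ℝ (⊤ : ℕ∞) W := contDiff_euclidean.2 fun j => (s1 j).add (s2 j)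
  have pW : ∀ i j, (pd i fun x => W x j) = fun x => (-1) * pd i (Φ j) x + κ * pd i (X j) x := by
    intro i j
    rw [hWj, pd_add (s1 j) (s2 j), pd_const_mul, pd_const_mul]
  have ppW : ∀ i k j, pd i (pd k fun x => W x j) =
      fun x => (-1) * pd i (pd k (Φ j)) x + κ * pd i (pd k (X j)) x := by
    intro i k j
    rw [pW, pd_add (contDiff_const.mul (smooth_pd (hΦ j) k)) (contDiff_const.mul (smooth_pd (hX j) k)),
      pd_const_mul, pd_const_mul]
  have hKN : (2:ℝ≥0∞) ^ (p - 1) * (C + ENNReal.ofReal |κ| ^ p * (C * (Q * C))) * N =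
      2 ^ (p - 1) * (C * N + ENNReal.ofReal |κ| ^ p * (C * (Q * (C * N)))) := by ring
  refine ⟨W, sW, fun x => ?_, fun k => ?_, fun i k => ?_, fun i j k => ?_⟩
  · ext j
    have hdiv : divg W = fun x => (κ - 1) * ρ x := by
      ext x
      unfold divg
      simp only [pW]
      rw [Finset.sum_add_distrib, ← Finset.mul_sum, ← Finset.mul_sum, divX]
      simp only [hρ]
      ring
    rw [vecLap_apply sW, hdiv, pd_const_mul, hWj, lap_add (s1 j) (s2 j), lap_smul, lap_smul, lΦ, lX,
      ← hμ]
    linear_combination (-pd j ρ x) * hκμ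
  · rw [hKN, hWj]
    exact wn_lincomb hp (hΦ k).continuous κ (Φ0' k) (X0' k)
  · rw [hKN, pW]
    exact wn_lincomb hp (smooth_pd (hΦ k) i).continuous κ (Φ1' k i) (X1' k i)
  · rw [hKN, ppW]
    exact wn_lincomb hp (smooth_pd (smooth_pd (hΦ k) j) i).continuous κ (Φ2' k i j) (X2' k i j)

lemma sobW_finite_parts {p δ : ℝ} (hp : 1 < p) {V : Euc n → Euc n} (hV : ContDiff ℝ (⊤ : ℕ∞) V)
    (h : SobW 2 p δ V < ⊤) : (∀ j, wn p (-δ - n / p) (fun x => V x j) ≠ ⊤) ∧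
      ∀ i j, wn p (1 - δ - n / p) (pd i fun x => V x j) ≠ ⊤ := by
  rw [sobW_two hp] at h
  have hp' : 0 < 1 / p := by positivity
  have h0 := (ENNReal.add_lt_top.1 (ENNReal.add_lt_top.1 h).1).1
  have h1 := (ENNReal.add_lt_top.1 (ENNReal.add_lt_top.1 h).1).2
  rw [ENNReal.rpow_lt_top_iff_of_pos hp'] at h0 h1
  refine ⟨fun j => ne_top_of_le_ne_top h0.ne (wn_mono hp fun x => ?_),
    fun i j => ne_top_of_le_ne_top h1.ne (wn_mono hp fun x => ?_)⟩
  · rw [abs_norm]; exact PiLp.norm_apply_le (V x) j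
  · rw [abs_norm, norm_iteratedFDeriv_one, ← fderiv_comp_apply (smooth_diff hV x)]
    refine (PiLp.norm_apply_le (fderiv ℝ V x (EuclideanSpace.single i 1)) j).trans ?_
    have := (fderiv ℝ V x).le_opNorm (EuclideanSpace.single i 1)
    rwa [PiLp.norm_single, norm_one, mul_one] at this

lemma unique_solution (hn : 3 ≤ n) {p δ : ℝ} (hp : 1 < p) (hδ : δ < 0) {V W : Euc n → Euc n}
    (hV : ContDiff ℝ (⊤ : ℕ∞) V) (hW : ContDiff ℝ (⊤ : ℕ∞) W) (nV : SobW 2 p δ V < ⊤)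
    (nW : SobW 2 p δ W < ⊤) (h : ∀ x, vecLap V x = vecLap W x) : V = W := by
  have hn' : (3:ℝ) ≤ n := by exact_mod_cast hn
  have hμ0 : 0 < 1 - 2 / (n:ℝ) := by
    rw [sub_pos, div_lt_one (by linarith)]; linarith
  obtain ⟨V0, V1⟩ := sobW_finite_parts hp hV nV
  obtain ⟨W0, W1⟩ := sobW_finite_parts hp hW nW
  have cV := comp_smooth hV
  have cW := comp_smooth hW
  have hd : (fun x => ∑ i, pd i (fun x => V x i - W x i) x) = fun x => divg V x - divg W x := by
    ext x
    unfold divg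
    rw [← Finset.sum_sub_distrib]
    exact Finset.sum_congr rfl fun i _ => congrFun (pd_sub (cV i) (cW i) i) x
  have sdV : ContDiff ℝ (⊤ : ℕ∞) (divg V) := smooth_sum _ fun i => smooth_pd (cV i) i
  have sdW : ContDiff ℝ (⊤ : ℕ∞) (divg W) := smooth_sum _ fun i => smooth_pd (cW i) i
  have fin : ∀ {u : Fin n → Euc n → ℝ}, (∀ i, ContDiff ℝ (⊤ : ℕ∞) (u i)) →
      (∀ i, wn p (1 - δ - n / p) (u i) ≠ ⊤) → wn p (1 - δ - n / p) (fun x => ∑ i, u i x) ≠ ⊤ := by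
    intro u hu hf
    exact ne_top_of_le_ne_top (ENNReal.mul_ne_top (ENNReal.rpow_ne_top_of_nonneg (by linarith)
      (by simp)) (ENNReal.sum_ne_top.2 fun i _ => hf i)) (wn_sum hp fun i => (hu i).continuous)
  have key := injective_aux hn hp hδ hμ0 (u := fun j x => V x j - W x j)
    (fun j => (cV j).sub (cW j)) (fun j => wn_sub_ne_top hp (cV j).continuous (V0 j) (W0 j))
    (by
      rw [hd]
      exact wn_sub_ne_top hp sdV.continuous (fin (fun i => smooth_pd (cV i) i) fun i => V1 i i)
        (fin (fun i => smooth_pd (cW i) i) fun i => W1 i i))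
    (by
      intro j x
      rw [hd, lap_sub (cV j) (cW j), pd_sub sdV sdW]
      have := congrArg (fun v : Euc n => v j) (h x)
      simp only [vecLap_apply hV, vecLap_apply hW] at this
      linarith)
  ext x j
  exact sub_eq_zero.1 (key j x)
end

/-- **Isomorphism property of the flat vector Laplacian on weighted spaces.** -/
theorem vectorLaplacian_isomorphism (n : ℕ) (hn : 3 ≤ n) (p δ : ℝ) (hp : 1 < p)
    (hδ1 : 2 - (n : ℝ) < δ) (hδ2 : δ < 0) :
    ∃ C > (0 : ℝ),
      ∀ F : Euc n → Euc n, ContDiff ℝ (⊤ : ℕ∞) F → LpW p (δ - 2) F < ⊤ →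
        ∃ W : Euc n → Euc n,
          ContDiff ℝ (⊤ : ℕ∞) W ∧ SobW 2 p δ W < ⊤ ∧
          (∀ x, vecLap W x = F x) ∧
          SobW 2 p δ W ≤ ENNReal.ofReal C * LpW p (δ - 2) F ∧
          (∀ V : Euc n → Euc n, ContDiff ℝ (⊤ : ℕ∞) V → SobW 2 p δ V < ⊤ →
            (∀ x, vecLap V x = F x) → V = W) := by
  obtain ⟨K, hK, ex⟩ := exists_solution hn hp hδ1 hδ2
  have hp' : 0 < 1 / p := by positivity
  obtain ⟨Q, hQ⟩ : ∃ Q : ℝ≥0∞, Q = (n : ℝ≥0∞) ^ (p - 1) * n := ⟨_, rfl⟩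
  have hQt : Q ≠ ⊤ := by
    rw [hQ]
    exact ENNReal.mul_ne_top (ENNReal.rpow_ne_top_of_nonneg (by linarith) (by simp)) (by simp)
  set A : ℝ≥0∞ := (Q ^ (1 / p) + (Q * Q) ^ (1 / p) + (Q * (Q * Q)) ^ (1 / p)) * K ^ (1 / p) with hA
  have hAt : A ≠ ⊤ := by
    have h2 : Q * Q ≠ ⊤ := ENNReal.mul_ne_top hQt hQt
    have h3 : Q * (Q * Q) ≠ ⊤ := ENNReal.mul_ne_top hQt h2
    refine ENNReal.mul_ne_top (ENNReal.add_ne_top.2 ⟨ENNReal.add_ne_top.2 ⟨?_, ?_⟩, ?_⟩) ?_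
    all_goals exact ENNReal.rpow_ne_top_of_nonneg hp'.le (by assumption)
  refine ⟨A.toReal + 1, by positivity, fun F hF hfin => ?_⟩
  have hA1 : A ≤ ENNReal.ofReal (A.toReal + 1) := by
    rw [ENNReal.le_ofReal_iff_toReal_le hAt (by positivity)]
    linarith
  have hN : wn p (2 - δ - n / p) (fun x => ‖F x‖) ≠ ⊤ := by
    rw [lpW_eq hp, ENNReal.rpow_lt_top_iff_of_pos hp'] at hfin
    exact hfin.ne
  obtain ⟨W, sW, eW, b0, b1, b2⟩ := ex F hF hN
  have est : SobW 2 p δ W ≤ ENNReal.ofReal (A.toReal + 1) * LpW p (δ - 2) F := by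
    refine (sobW_le hp sW hQ b0 b1 b2).trans ?_
    rw [ENNReal.mul_rpow_of_nonneg K (wn p (2 - δ - n / p) fun x => ‖F x‖) hp'.le, ← mul_assoc, ← hA, lpW_eq hp]
    gcongr
  have fW : SobW 2 p δ W < ⊤ := est.trans_lt (ENNReal.mul_lt_top ENNReal.ofReal_lt_top hfin)
  exact ⟨W, sW, fW, eW, est, fun V sV nV eV =>
    unique_solution hn hp hδ2 sV sW nV fW fun x => by rw [eV, eW]⟩
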